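/- arXiv:2012.11675 — 3 statements merged into one kernel-verified Lean document; each statement's English description precedes it below -/
import Mathlib

section
/- Fix ε > 0. There exist constants c, C > 0 such that for every ζ ∈ (0,π/2] (i.e. −1 < Δ ≤ 0) and every q ∈ [0,∞): (i) for every x ∈ ℝ, 0 < ρ(x) ≤ ρ(x|q) ≤ ρ(x) + ρ(q); (ii) ρ(·|q) is differentiable and for every x ∈ [−q−ε, q+ε], |ρ'(x|q)| ≤ (C/ζ)·e^{πε/ζ}·ρ(x|q); (iii) for every m ∈ [0,1/2) and every q ≥ 0 with ∫_{−q}^{q} ρ(λ|q)dλ = m, one has (c/ζ)·(1/2 − m) ≤ ρ(q) ≤ (C/ζ)·(1/2 − m). -/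
/-!
The kernels `K`, `ξ` and `ρ` are exit densities: harmonic measures of one edge of a strip, seen from
a point inside it. Their Fourier transforms are quotients of hyperbolic sines, and the strong Markov
property of Brownian motion in the strip gives `ρ̂ (1 + K̂) = ξ̂` and `R̂ (1 + K̂) = K̂`, where the
resolvent kernel `R = P ⋆ ρ` has an exit density `P` as its other factor. For `ζ ≤ π/2` this `R` is
positive with mass at most `1/2`. Inverting `1 + K` turns the Bethe equation on `[-q, q]` into the
renewal equation `ρ(·|q) = ρ + (1_T ρ(·|q)) ⋆ R` on the complement `T` of the interval. Since `ρ` is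
positive and `R` contracts, `ρ ≤ ρ(·|q) ≤ ρ + ρ(q)`; convolution with a nonnegative function
preserves the bound `π/ζ` on the logarithmic derivative of `ρ`; and integrating the equation
compares `1/2 - m` with the mass `∫_T ρ`, which is of order `ζ ρ(q)`.
-/

open MeasureTheory Filter
open scoped Real BigOperators

noncomputable section

namespace BetheSix

/-! ### Kernels in the regime `-1 < Δ < 1` (`Δ = -cos ζ`, `ζ ∈ (0,π)`) -/

def Kml (ζ x : ℝ) : ℝ := Real.sin (2 * ζ) / (2 * π * (Real.sinh x ^ 2 + Real.sin ζ ^ 2))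

def xiMl (ζ x : ℝ) : ℝ := Real.sin ζ / (2 * π * (Real.sinh x ^ 2 + Real.sin (ζ / 2) ^ 2))

/-- the momentum `p(x) = 2π ∫₀ˣ ξ`. -/
def pMl (ζ x : ℝ) : ℝ := 2 * π * ∫ t in (0 : ℝ)..x, xiMl ζ t

/-- the phase `ϑ(x) = 2π ∫₀ˣ K`. -/
def thMl (ζ x : ℝ) : ℝ := 2 * π * ∫ t in (0 : ℝ)..x, Kml ζ t

/-- the explicit density `ρ(x) = ρ(x|∞) = 1/(2ζ cosh(πx/ζ))`. -/
def rhoInf (ζ x : ℝ) : ℝ := 1 / (2 * ζ * Real.cosh (π * x / ζ))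

/-- `g` is the solution `ρ(·|q)` of the continuum Bethe equation in the regime
`-1 < Δ < 1`: `g ∈ L¹(ℝ) ∩ L^∞(ℝ)` and `g(λ) + ∫_{-q}^q K(λ-μ) g(μ) dμ = ξ(λ)`. -/
def IsBEml (ζ q : ℝ) (g : ℝ → ℝ) : Prop :=
  Integrable g ∧ MemLp g ⊤ ∧
    ∀ l : ℝ, g l + ∫ m in (-q)..q, Kml ζ (l - m) * g m = xiMl ζ l

/-! ### Kernels in the regime `Δ < -1` (`Δ = -cosh ζ`, `ζ > 0`) -/

def Kms (ζ x : ℝ) : ℝ := Real.sinh (2 * ζ) / (2 * π * (Real.sin x ^ 2 + Real.sinh ζ ^ 2))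

def xiMs (ζ x : ℝ) : ℝ := Real.sinh ζ / (2 * π * (Real.sin x ^ 2 + Real.sinh (ζ / 2) ^ 2))

def pMs (ζ x : ℝ) : ℝ := 2 * π * ∫ t in (0 : ℝ)..x, xiMs ζ t

def thMs (ζ x : ℝ) : ℝ := 2 * π * ∫ t in (0 : ℝ)..x, Kms ζ t

/-- the explicit `π`-periodic density `ρ(x) = (1/(2ζ)) Σ_{n∈ℤ} 1/cosh(π(πn-x)/ζ)`. -/
def rhoMs (ζ x : ℝ) : ℝ := (1 / (2 * ζ)) * ∑' n : ℤ, 1 / Real.cosh (π * (π * n - x) / ζ)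

/-- `g` is the continuous solution `ρ(·|q)` of the continuum Bethe equation in the
regime `Δ < -1`. -/
def IsBEms (ζ q : ℝ) (g : ℝ → ℝ) : Prop :=
  Continuous g ∧
    ∀ l : ℝ, g l + ∫ m in (-q)..q, Kms ζ (l - m) * g m = xiMs ζ l

/-- In the regime `-1 < Δ < 1` the parameter `𝔮` ranges over `[0,∞]`.  The pair
`(S, g)` encodes the interval `[-𝔮, 𝔮]` together with the density `ρ(·|𝔮)`:
either `𝔮 = q` is finite, `S = [-q,q]` and `g = ρ(·|q)` solves the continuum Bethe
equation, or `𝔮 = ∞`, `S = ℝ` and `g = ρ(·|∞)` is the explicit density. -/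
def QDomainMl (ζ : ℝ) (S : Set ℝ) (g : ℝ → ℝ) : Prop :=
  (∃ q : ℝ, 0 ≤ q ∧ S = Set.Icc (-q) q ∧ IsBEml ζ q g) ∨
  (S = Set.univ ∧ g = rhoInf ζ)

/-! ### The logarithmic Bethe equations -/

/-- `lam` solves the logarithmic Bethe equations
`(N/2π) p(λᵢ) - (1/2π) Σⱼ ϑ(λᵢ - λⱼ) = Iᵢ` with `Iᵢ = i - (n+1)/2` (`i` is 1-based). -/
def BetheEq (p th : ℝ → ℝ) (N n : ℕ) (lam : Fin n → ℝ) : Prop :=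
  ∀ i : Fin n,
    ((N : ℝ) / (2 * π)) * p (lam i) - (1 / (2 * π)) * ∑ j, th (lam i - lam j)
      = ((i.1 : ℝ) + 1) - ((n : ℝ) + 1) / 2

/-- `λ_{n+1-i} = -λ_i` for all `i` (1-based indices). -/
def SymmetricVec {n : ℕ} (lam : Fin n → ℝ) : Prop :=
  ∀ i : Fin n, lam ⟨n - 1 - i.1, by have := i.2; omega⟩ = -lam i

/-- `λ₁ < λ₂ < ⋯ < λ_n`. -/
def StrictOrderedVec {n : ℕ} (lam : Fin n → ℝ) : Prop :=
  ∀ i j : Fin n, i < j → lam i < lam j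

/-- the cumulative function `G(y) = ∫₀^y g`. Since the densities `ρ(·|q)` are
positive, `G` is strictly increasing, and the quantile `Λ(x|q)` (with the
conventions `Λ(x|q) = ±∞` outside the range) satisfies, for every `y ∈ ℝ`:
`Λ(x|q) ≤ y ↔ (x-(n+1)/2)/N ≤ G(y)` and `y ≤ Λ(x|q) ↔ G(y) ≤ (x-(n+1)/2)/N`. -/
def GG (g : ℝ → ℝ) (y : ℝ) : ℝ := ∫ t in (0 : ℝ)..y, g t

/-- `lam` is `(k,q)`-interlaced with respect to the density `g = ρ(·|q)`:
`Λ(i - k/2 | q) ≤ λ_i ≤ Λ(i + k/2 | q)` for all `i` (1-based), expressed through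
the cumulative function `G` to accommodate the conventions `Λ = ±∞`. -/
def Interlaced (N n k : ℕ) (g : ℝ → ℝ) (lam : Fin n → ℝ) : Prop :=
  ∀ i : Fin n,
    (((i.1 : ℝ) + 1) - (k : ℝ) / 2 - ((n : ℝ) + 1) / 2) / N ≤ GG g (lam i) ∧
    GG g (lam i) ≤ (((i.1 : ℝ) + 1) + (k : ℝ) / 2 - ((n : ℝ) + 1) / 2) / N

end BetheSix

namespace BetheSix

open scoped Topology FourierTransform Convolution

/-! ### The Poisson kernel of the strip -/

/-- The Poisson kernel of the strip `0 < Im z < π`: `(2π)⁻¹ * stripPoisson a y` is the density at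
`y` of the harmonic measure of the lower edge seen from height `a`. -/
def stripPoisson (a y : ℝ) : ℝ := Real.sin a / (Real.cosh y - Real.cos a)

/-- The derivative of `stripPoisson` in the height `a`. -/
def stripPoissonDeriv (a y : ℝ) : ℝ :=
  (Real.cos a * Real.cosh y - 1) / (Real.cosh y - Real.cos a) ^ 2

/-- The second derivative of `stripPoisson` in the height `a`. -/
def stripPoissonDeriv₂ (a y : ℝ) : ℝ :=
  Real.sin a * (2 - Real.cosh y ^ 2 - Real.cos a * Real.cosh y) / (Real.cosh y - Real.cos a) ^ 3

/-- The derivative of `stripPoisson` in the horizontal variable `y`. -/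
def stripPoissonDerivHoriz (a y : ℝ) : ℝ :=
  -(Real.sin a * Real.sinh y) / (Real.cosh y - Real.cos a) ^ 2

section Derivatives

variable {a : ℝ}

lemma cos_lt_one_of_mem_Ioo (ha : a ∈ Set.Ioo 0 (2 * π)) : Real.cos a < 1 := by
  refine (Real.cos_le_one a).lt_of_ne fun h => ha.1.ne' ?_
  exact (Real.cos_eq_one_iff_of_lt_of_lt (by linarith [ha.1, Real.pi_pos]) ha.2).1 h

lemma cosh_sub_cos_pos (ha : Real.cos a < 1) (y : ℝ) : 0 < Real.cosh y - Real.cos a := by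
  linarith [Real.one_le_cosh y]

lemma stripPoisson_neg (a y : ℝ) : stripPoisson a (-y) = stripPoisson a y := by
  simp only [stripPoisson, Real.cosh_neg]

lemma hasDerivAt_stripPoisson (ha : Real.cos a < 1) (y : ℝ) :
    HasDerivAt (stripPoisson · y) (stripPoissonDeriv a y) a := by
  have hD := (cosh_sub_cos_pos ha y).ne'
  refine ((Real.hasDerivAt_sin a).div ((Real.hasDerivAt_cos a).const_sub _) hD).congr_deriv ?_
  rw [stripPoissonDeriv]
  congr 1
  linear_combination -Real.sin_sq_add_cos_sq a

lemma hasDerivAt_stripPoissonDeriv (ha : Real.cos a < 1) (y : ℝ) :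
    HasDerivAt (stripPoissonDeriv · y) (stripPoissonDeriv₂ a y) a := by
  have hD := (cosh_sub_cos_pos ha y).ne'
  refine ((((Real.hasDerivAt_cos a).mul_const _).sub_const _).div
    (((Real.hasDerivAt_cos a).const_sub _).pow 2) (pow_ne_zero 2 hD)).congr_deriv ?_
  rw [stripPoissonDeriv₂, Pi.pow_apply]
  field_simp
  ring

lemma hasDerivAt_stripPoisson_horiz (ha : Real.cos a < 1) (y : ℝ) :
    HasDerivAt (stripPoisson a) (stripPoissonDerivHoriz a y) y := by
  have hD := (cosh_sub_cos_pos ha y).ne'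
  refine ((hasDerivAt_const y (Real.sin a)).div
    ((Real.hasDerivAt_cosh y).sub_const _) hD).congr_deriv ?_
  rw [stripPoissonDerivHoriz, zero_mul, zero_sub]

/-- Harmonicity: the second derivatives in the two variables are opposite. -/
lemma hasDerivAt_stripPoissonDerivHoriz (ha : Real.cos a < 1) (y : ℝ) :
    HasDerivAt (stripPoissonDerivHoriz a) (-stripPoissonDeriv₂ a y) y := by
  have hD := (cosh_sub_cos_pos ha y).ne'
  refine ((((Real.hasDerivAt_sinh y).const_mul _).neg).div
    (((Real.hasDerivAt_cosh y).sub_const _).pow 2) (pow_ne_zero 2 hD)).congr_deriv ?_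
  rw [stripPoissonDeriv₂, Pi.pow_apply, Pi.neg_apply]
  field_simp
  linear_combination 2 * Real.sin a * (Real.cos a - Real.cosh y) * Real.cosh_sq y

end Derivatives

section Bounds

variable {a : ℝ}

lemma one_add_sq_add_pow_four_le_cosh (y : ℝ) : 1 + y ^ 2 / 2 + y ^ 4 / 24 ≤ Real.cosh y := by
  have h := sum_le_hasSum (Finset.range 3)
    (fun n _ => div_nonneg ((even_two_mul n).pow_nonneg y) (Nat.cast_nonneg _))
    (Real.hasSum_cosh y)
  norm_num [Finset.sum_range_succ, Nat.factorial] at h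
  exact h

lemma integrable_inv_cosh : Integrable fun y : ℝ => (Real.cosh y)⁻¹ := by
  refine (integrable_inv_one_add_sq.const_mul 2).mono'
    (Measurable.aestronglyMeasurable (by fun_prop)) (ae_of_all _ fun y => ?_)
  have hcosh := one_add_sq_add_pow_four_le_cosh y
  rw [Real.norm_of_nonneg (inv_nonneg.2 (Real.cosh_pos y).le), ← div_eq_mul_inv, inv_eq_one_div,
    div_le_div_iff₀ (Real.cosh_pos y) (by positivity)]
  nlinarith [sq_nonneg y, sq_nonneg (y ^ 2)]

lemma integrable_of_abs_le_inv_cosh {f : ℝ → ℝ} {B : ℝ} (hf : Continuous f)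
    (hB : ∀ y, |f y| ≤ B * (Real.cosh y)⁻¹) : Integrable f :=
  (integrable_inv_cosh.const_mul B).mono' hf.aestronglyMeasurable (ae_of_all _ hB)

lemma exists_eventually_abs_div_cosh_sub_cos_le {n : ℝ → ℝ → ℝ} {N : ℝ} {p : ℕ}
    (ha : Real.cos a < 1) (hn : ∀ b y, |n b y| ≤ N * Real.cosh y ^ p) :
    ∃ B, ∀ᶠ b in 𝓝 a, ∀ y,
      |n b y / (Real.cosh y - Real.cos b) ^ (p + 1)| ≤ B * (Real.cosh y)⁻¹ := by
  set δ := (1 - Real.cos a) / 2 with hδ_def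
  have hδ : 0 < δ := by linarith
  have hδ_le : δ ≤ 1 := by linarith [Real.neg_one_le_cos a]
  refine ⟨N / δ ^ (p + 1), ?_⟩
  filter_upwards [Real.continuous_cos.continuousAt.eventually_lt_const
    (show Real.cos a < 1 - δ by linarith)] with b hb y
  have hcosh := Real.one_le_cosh y
  have hN : 0 ≤ N * Real.cosh y ^ p := (abs_nonneg _).trans (hn b y)
  have hD : δ * Real.cosh y ≤ Real.cosh y - Real.cos b := by nlinarith
  have hD_pos : 0 < δ * Real.cosh y := by positivity
  rw [abs_div, abs_of_pos (pow_pos (hD_pos.trans_le hD) _)]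
  calc |n b y| / (Real.cosh y - Real.cos b) ^ (p + 1)
      ≤ N * Real.cosh y ^ p / (δ * Real.cosh y) ^ (p + 1) :=
        div_le_div₀ hN (hn b y) (by positivity) (by gcongr)
    _ = N / δ ^ (p + 1) * (Real.cosh y)⁻¹ := by
      rw [mul_pow, pow_succ (Real.cosh y)]
      field_simp

lemma exists_eventually_abs_stripPoisson_le (ha : Real.cos a < 1) :
    ∃ B, ∀ᶠ b in 𝓝 a, ∀ y, |stripPoisson b y| ≤ B * (Real.cosh y)⁻¹ := by
  simpa only [zero_add, pow_one, stripPoisson] using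
    exists_eventually_abs_div_cosh_sub_cos_le (p := 0) (N := 1) (n := fun b _ => Real.sin b) ha
      fun b _ => by simpa using Real.abs_sin_le_one b

lemma exists_eventually_abs_stripPoissonDeriv_le (ha : Real.cos a < 1) :
    ∃ B, ∀ᶠ b in 𝓝 a, ∀ y, |stripPoissonDeriv b y| ≤ B * (Real.cosh y)⁻¹ := by
  refine exists_eventually_abs_div_cosh_sub_cos_le (p := 1) (N := 2) ha fun b y => ?_
  have hcosh := Real.one_le_cosh y
  rw [abs_le]
  constructor <;> nlinarith [Real.neg_one_le_cos b, Real.cos_le_one b]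

lemma exists_eventually_abs_stripPoissonDeriv₂_le (ha : Real.cos a < 1) :
    ∃ B, ∀ᶠ b in 𝓝 a, ∀ y, |stripPoissonDeriv₂ b y| ≤ B * (Real.cosh y)⁻¹ := by
  refine exists_eventually_abs_div_cosh_sub_cos_le (p := 2) (N := 4) ha fun b y => ?_
  have hcosh := Real.one_le_cosh y
  rw [abs_mul]
  refine (mul_le_of_le_one_left (abs_nonneg _) (Real.abs_sin_le_one b)).trans ?_
  rw [abs_le]
  constructor <;> nlinarith [Real.neg_one_le_cos b, Real.cos_le_one b]

lemma exists_abs_stripPoissonDerivHoriz_le (ha : Real.cos a < 1) :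
    ∃ B, ∀ y, |stripPoissonDerivHoriz a y| ≤ B * (Real.cosh y)⁻¹ := by
  obtain ⟨B, hB⟩ := exists_eventually_abs_div_cosh_sub_cos_le (p := 1) (N := 1)
    (n := fun b y => -(Real.sin b * Real.sinh y)) ha fun b y => by
      rw [abs_neg, abs_mul, one_mul, pow_one, Real.abs_sinh, ← Real.cosh_abs y]
      exact (mul_le_of_le_one_left (Real.sinh_nonneg_iff.2 (abs_nonneg y))
        (Real.abs_sin_le_one b)).trans (Real.sinh_lt_cosh _).le
  exact ⟨B, hB.self_of_nhds⟩

lemma continuous_stripPoisson (ha : Real.cos a < 1) : Continuous (stripPoisson a) :=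
  continuous_iff_continuousAt.2 fun y => (hasDerivAt_stripPoisson_horiz ha y).continuousAt

lemma continuous_stripPoissonDeriv (ha : Real.cos a < 1) : Continuous (stripPoissonDeriv a) :=
  Continuous.div (by fun_prop) (by fun_prop) fun y => (pow_pos (cosh_sub_cos_pos ha y) 2).ne'

lemma continuous_stripPoissonDeriv₂ (ha : Real.cos a < 1) : Continuous (stripPoissonDeriv₂ a) :=
  Continuous.div (by fun_prop) (by fun_prop) fun y => (pow_pos (cosh_sub_cos_pos ha y) 3).ne'

lemma continuous_stripPoissonDerivHoriz (ha : Real.cos a < 1) :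
    Continuous (stripPoissonDerivHoriz a) :=
  continuous_iff_continuousAt.2 fun y => (hasDerivAt_stripPoissonDerivHoriz ha y).continuousAt

lemma integrable_stripPoisson (ha : Real.cos a < 1) : Integrable (stripPoisson a) :=
  let ⟨_, hB⟩ := exists_eventually_abs_stripPoisson_le ha
  integrable_of_abs_le_inv_cosh (continuous_stripPoisson ha) hB.self_of_nhds

lemma integrable_stripPoissonDeriv (ha : Real.cos a < 1) : Integrable (stripPoissonDeriv a) :=
  let ⟨_, hB⟩ := exists_eventually_abs_stripPoissonDeriv_le ha
  integrable_of_abs_le_inv_cosh (continuous_stripPoissonDeriv ha) hB.self_of_nhds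

lemma integrable_stripPoissonDeriv₂ (ha : Real.cos a < 1) : Integrable (stripPoissonDeriv₂ a) :=
  let ⟨_, hB⟩ := exists_eventually_abs_stripPoissonDeriv₂_le ha
  integrable_of_abs_le_inv_cosh (continuous_stripPoissonDeriv₂ ha) hB.self_of_nhds

lemma integrable_stripPoissonDerivHoriz (ha : Real.cos a < 1) :
    Integrable (stripPoissonDerivHoriz a) :=
  let ⟨_, hB⟩ := exists_abs_stripPoissonDerivHoriz_le ha
  integrable_of_abs_le_inv_cosh (continuous_stripPoissonDerivHoriz ha) hB

end Bounds

lemma eq_cosh_add_sinh_of_hasDerivAt {f f' : ℝ → ℝ} {s : Set ℝ} {w : ℝ} (hs : IsOpen s)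
    (hs' : IsPreconnected s) (hf : ∀ x ∈ s, HasDerivAt f (f' x) x)
    (hf' : ∀ x ∈ s, HasDerivAt f' (w ^ 2 * f x) x) {c x : ℝ} (hc : c ∈ s) (hx : x ∈ s) :
    w * f x = w * f c * Real.cosh (w * (x - c)) + f' c * Real.sinh (w * (x - c)) := by
  set W : ℝ → ℝ := fun y => w * f y * Real.cosh (w * (x - y)) + f' y * Real.sinh (w * (x - y))
  have hW : ∀ y ∈ s, HasDerivAt W 0 y := fun y hy => by
    have harg : HasDerivAt (fun y => w * (x - y)) (w * -1) y :=
      ((hasDerivAt_id' y).const_sub x).const_mul w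
    refine ((((hf y hy).const_mul w).mul harg.cosh).add
      ((hf' y hy).mul harg.sinh)).congr_deriv ?_
    ring
  have hconst : W x = W c := hs.is_const_of_deriv_eq_zero hs'
    (fun y hy => (hW y hy).differentiableAt.differentiableWithinAt)
    (fun y hy => (hW y hy).deriv) hx hc
  simpa [W] using hconst

section CosTransform

variable {a : ℝ}

/-- The cosine transform on the line, with angular frequency `w`. -/
def cosTransform (k : ℝ → ℝ) (w : ℝ) : ℝ := ∫ y, k y * Real.cos (w * y)

lemma integrable_mul_cos {k : ℝ → ℝ} (hk : Integrable k) (w : ℝ) :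
    Integrable fun y => k y * Real.cos (w * y) :=
  hk.mul_bdd (c := 1) (by fun_prop) (ae_of_all _ fun _ => Real.abs_cos_le_one _)

lemma integrable_mul_sin {k : ℝ → ℝ} (hk : Integrable k) (w : ℝ) :
    Integrable fun y => k y * Real.sin (w * y) :=
  hk.mul_bdd (c := 1) (by fun_prop) (ae_of_all _ fun _ => Real.abs_sin_le_one _)

lemma cosTransform_of_hasDerivAt {k k' k'' : ℝ → ℝ} (hk : Integrable k) (hk' : Integrable k')
    (hk'' : Integrable k'') (h : ∀ y, HasDerivAt k (k' y) y) (h' : ∀ y, HasDerivAt k' (k'' y) y)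
    (w : ℝ) : cosTransform k'' w = -w ^ 2 * cosTransform k w := by
  have hderiv : ∀ y, HasDerivAt
      (fun y => k' y * Real.cos (w * y) + w * (k y * Real.sin (w * y)))
      (k'' y * Real.cos (w * y) + w ^ 2 * (k y * Real.cos (w * y))) y := fun y => by
    have harg : HasDerivAt (fun y => w * y) (w * 1) y := (hasDerivAt_id' y).const_mul w
    refine (((h' y).mul harg.cos).add (((h y).mul harg.sin).const_mul w)).congr_deriv ?_
    ring
  have hzero := integral_eq_zero_of_hasDerivAt_of_integrable hderiv
    ((integrable_mul_cos hk'' w).add ((integrable_mul_cos hk w).const_mul _))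
    ((integrable_mul_cos hk' w).add ((integrable_mul_sin hk w).const_mul w))
  rw [integral_add (integrable_mul_cos hk'' w) ((integrable_mul_cos hk w).const_mul _),
    integral_const_mul] at hzero
  rw [cosTransform, cosTransform]
  linarith

lemma hasDerivAt_cosTransform {k k' : ℝ → ℝ → ℝ} {bound : ℝ → ℝ}
    (hk_meas : ∀ᶠ b in 𝓝 a, AEStronglyMeasurable (k b)) (hk : Integrable (k a))
    (hk' : AEStronglyMeasurable (k' a)) (hbound : Integrable bound)
    (hk'_le : ∀ᶠ b in 𝓝 a, ∀ y, |k' b y| ≤ bound y)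
    (hderiv : ∀ᶠ b in 𝓝 a, ∀ y, HasDerivAt (k · y) (k' b y) b) (w : ℝ) :
    HasDerivAt (fun b => cosTransform (k b) w) (cosTransform (k' a) w) a := by
  have hcos : Continuous fun y => Real.cos (w * y) := by fun_prop
  refine (hasDerivAt_integral_of_dominated_loc_of_deriv_le (hk'_le.and hderiv)
    (hk_meas.mono fun b hb => hb.mul hcos.aestronglyMeasurable) (integrable_mul_cos hk w)
    (hk'.mul hcos.aestronglyMeasurable) (ae_of_all _ fun y b hb => ?_) hbound
    (ae_of_all _ fun y b hb => (hb.2 y).mul_const _)).2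
  rw [Real.norm_eq_abs, abs_mul]
  exact (mul_le_of_le_one_right (abs_nonneg _) (Real.abs_cos_le_one _)).trans (hb.1 y)

lemma eventually_cos_lt_one (ha : Real.cos a < 1) : ∀ᶠ b in 𝓝 a, Real.cos b < 1 :=
  Real.continuous_cos.continuousAt.eventually_lt_const ha

lemma hasDerivAt_cosTransform_stripPoisson (ha : Real.cos a < 1) (w : ℝ) :
    HasDerivAt (fun b => cosTransform (stripPoisson b) w)
      (cosTransform (stripPoissonDeriv a) w) a := by
  obtain ⟨B, hB⟩ := exists_eventually_abs_stripPoissonDeriv_le ha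
  exact hasDerivAt_cosTransform
    ((eventually_cos_lt_one ha).mono fun b hb => (continuous_stripPoisson hb).aestronglyMeasurable)
    (integrable_stripPoisson ha) (continuous_stripPoissonDeriv ha).aestronglyMeasurable
    (integrable_inv_cosh.const_mul B) hB
    ((eventually_cos_lt_one ha).mono fun b hb => hasDerivAt_stripPoisson hb) w

lemma hasDerivAt_cosTransform_stripPoissonDeriv (ha : Real.cos a < 1) (w : ℝ) :
    HasDerivAt (fun b => cosTransform (stripPoissonDeriv b) w)
      (cosTransform (stripPoissonDeriv₂ a) w) a := by
  obtain ⟨B, hB⟩ := exists_eventually_abs_stripPoissonDeriv₂_le ha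
  exact hasDerivAt_cosTransform
    ((eventually_cos_lt_one ha).mono fun b hb =>
      (continuous_stripPoissonDeriv hb).aestronglyMeasurable)
    (integrable_stripPoissonDeriv ha) (continuous_stripPoissonDeriv₂ ha).aestronglyMeasurable
    (integrable_inv_cosh.const_mul B) hB
    ((eventually_cos_lt_one ha).mono fun b hb => hasDerivAt_stripPoissonDeriv hb) w

lemma cosTransform_stripPoissonDeriv₂ (ha : Real.cos a < 1) (w : ℝ) :
    cosTransform (stripPoissonDeriv₂ a) w = w ^ 2 * cosTransform (stripPoisson a) w := by
  have h := cosTransform_of_hasDerivAt (integrable_stripPoisson ha)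
    (integrable_stripPoissonDerivHoriz ha) (integrable_stripPoissonDeriv₂ ha).neg
    (hasDerivAt_stripPoisson_horiz ha) (hasDerivAt_stripPoissonDerivHoriz ha) w
  simp only [cosTransform, Pi.neg_apply, neg_mul, integral_neg] at h ⊢
  linarith

end CosTransform

section PoissonTransform

variable {a w : ℝ}

lemma hasDerivAt_two_mul_arctan_stripPoisson (ha : Real.sin (a / 2) ≠ 0) (y : ℝ) :
    HasDerivAt (fun y => 2 * Real.arctan
        (Real.cos (a / 2) / Real.sin (a / 2) * (1 - 2 / (Real.exp y + 1))))
      (stripPoisson a y) y := by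
  have harctan := ((((((Real.hasDerivAt_exp y).add_const 1).fun_inv
    (by positivity)).const_mul 2).const_sub 1).const_mul
      (Real.cos (a / 2) / Real.sin (a / 2))).arctan.const_mul 2
  simp only [← div_eq_mul_inv] at harctan
  refine harctan.congr_deriv ?_
  have hsin : Real.sin a = 2 * Real.sin (a / 2) * Real.cos (a / 2) := by
    rw [← Real.sin_two_mul, mul_div_cancel₀ a two_ne_zero]
  have hD : Real.cosh y - Real.cos a = (Real.sin (a / 2) ^ 2 * (Real.exp y + 1) ^ 2 +
      Real.cos (a / 2) ^ 2 * (Real.exp y - 1) ^ 2) / (2 * Real.exp y) := by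
    rw [show Real.cos a = Real.cos (a / 2) ^ 2 - Real.sin (a / 2) ^ 2 by
      rw [← Real.cos_two_mul', mul_div_cancel₀ a two_ne_zero], Real.cosh_eq, Real.exp_neg]
    field_simp
    linear_combination -(Real.exp y ^ 2 + 1) * Real.sin_sq_add_cos_sq (a / 2)
  have hsq : 1 + (Real.cos (a / 2) / Real.sin (a / 2) * (1 - 2 / (Real.exp y + 1))) ^ 2 =
      (Real.sin (a / 2) ^ 2 * (Real.exp y + 1) ^ 2 + Real.cos (a / 2) ^ 2 * (Real.exp y - 1) ^ 2) /
        (Real.sin (a / 2) * (Real.exp y + 1)) ^ 2 := by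
    field_simp
    ring
  rw [hsq, stripPoisson, hD, hsin]
  field_simp

lemma integral_stripPoisson (ha : a ∈ Set.Ioo 0 (2 * π)) :
    ∫ y, stripPoisson a y = 2 * (π - a) := by
  have hsin : 0 < Real.sin (a / 2) :=
    Real.sin_pos_of_pos_of_lt_pi (by linarith [ha.1]) (by linarith [ha.2])
  set f : ℝ → ℝ := fun t => 2 * Real.arctan (Real.cos (a / 2) / Real.sin (a / 2) * (1 - t))
  have hf : Continuous f := by fun_prop
  have hcot : Real.arctan (Real.cos (a / 2) / Real.sin (a / 2)) = π / 2 - a / 2 := by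
    rw [← Real.arctan_tan (x := π / 2 - a / 2) (by linarith [ha.2]) (by linarith [ha.1]),
      Real.tan_eq_sin_div_cos, Real.sin_pi_div_two_sub, Real.cos_pi_div_two_sub]
  have hbot : Tendsto (fun y => 2 / (Real.exp y + 1)) atBot (𝓝 2) := by
    simpa [Pi.div_def] using
      tendsto_const_nhds.div (Real.tendsto_exp_atBot.add_const 1) (by norm_num)
  have htop : Tendsto (fun y => 2 / (Real.exp y + 1)) atTop (𝓝 0) :=
    tendsto_const_nhds.div_atTop (tendsto_atTop_add_const_right _ _ Real.tendsto_exp_atTop)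
  rw [integral_of_hasDerivAt_of_tendsto (hasDerivAt_two_mul_arctan_stripPoisson hsin.ne')
    (integrable_stripPoisson (cos_lt_one_of_mem_Ioo ha))
    ((hf.tendsto 2).comp hbot) ((hf.tendsto 0).comp htop)]
  simp only [f, sub_zero, mul_one, show (1 : ℝ) - 2 = -1 by norm_num, mul_neg, Real.arctan_neg,
    hcot]
  ring

lemma abs_cosTransform_stripPoisson_sub_le (ha : a ∈ Set.Ioo 0 π) (w : ℝ) :
    |cosTransform (stripPoisson a) w - 2 * (π - a)| ≤ 12 * w ^ 2 * π * Real.sin a := by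
  have ha' : a ∈ Set.Ioo 0 (2 * π) := ⟨ha.1, by linarith [ha.2, Real.pi_pos]⟩
  have hcos := cos_lt_one_of_mem_Ioo ha'
  have hsin := Real.sin_pos_of_mem_Ioo ha
  have hint := integrable_stripPoisson hcos
  have hbound : ∫ y : ℝ, 12 * w ^ 2 * Real.sin a * (1 + y ^ 2)⁻¹ = 12 * w ^ 2 * π * Real.sin a := by
    rw [integral_const_mul, integral_univ_inv_one_add_sq]
    ring
  rw [← integral_stripPoisson ha', cosTransform, ← integral_sub (integrable_mul_cos hint w) hint,
    ← hbound, ← Real.norm_eq_abs]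
  refine norm_integral_le_of_norm_le (integrable_inv_one_add_sq.const_mul _)
    (ae_of_all _ fun y => ?_)
  have hD := cosh_sub_cos_pos hcos y
  have hcos_wy : 1 - Real.cos (w * y) ≤ (w * y) ^ 2 / 2 := by
    linarith [Real.one_sub_sq_div_two_le_cos (x := w * y)]
  have hcosh : y ^ 2 * (1 + y ^ 2) ≤ 24 * (Real.cosh y - Real.cos a) := by
    nlinarith [one_add_sq_add_pow_four_le_cosh y, sq_nonneg y]
  rw [← mul_sub_one, norm_mul, stripPoisson, Real.norm_of_nonneg (div_nonneg hsin.le hD.le),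
    norm_sub_rev, Real.norm_of_nonneg (sub_nonneg.2 (Real.cos_le_one _)), div_mul_eq_mul_div,
    ← div_eq_mul_inv, div_le_div_iff₀ hD (by positivity)]
  calc Real.sin a * (1 - Real.cos (w * y)) * (1 + y ^ 2)
      ≤ Real.sin a * ((w * y) ^ 2 / 2) * (1 + y ^ 2) := by gcongr
    _ = w ^ 2 * Real.sin a / 2 * (y ^ 2 * (1 + y ^ 2)) := by ring
    _ ≤ w ^ 2 * Real.sin a / 2 * (24 * (Real.cosh y - Real.cos a)) := by gcongr
    _ = 12 * w ^ 2 * Real.sin a * (Real.cosh y - Real.cos a) := by ring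

lemma tendsto_cosTransform_stripPoisson (w : ℝ) :
    Tendsto (fun a => cosTransform (stripPoisson a) w) (𝓝[>] 0) (𝓝 (2 * π)) := by
  have hsub : Tendsto (fun a => cosTransform (stripPoisson a) w - 2 * (π - a)) (𝓝[>] 0) (𝓝 0) := by
    refine squeeze_zero_norm' (a := fun a => 12 * w ^ 2 * π * Real.sin a) ?_ ?_
    · filter_upwards [Ioo_mem_nhdsGT Real.pi_pos] with a ha
      exact abs_cosTransform_stripPoisson_sub_le ha w
    · exact tendsto_nhdsWithin_of_tendsto_nhds
        (Continuous.tendsto' (by fun_prop) _ _ (by simp))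
  have hmass : Tendsto (fun a : ℝ => 2 * (π - a)) (𝓝[>] 0) (𝓝 (2 * π)) :=
    tendsto_nhdsWithin_of_tendsto_nhds (Continuous.tendsto' (by fun_prop) _ _ (by simp))
  simpa using hsub.add hmass

/-- In the height, the transform solves `F'' = w² F` with `F(0+) = 2π` and `F(π) = 0`. -/
lemma cosTransform_stripPoisson (hw : w ≠ 0) (ha : a ∈ Set.Ioo 0 (2 * π)) :
    cosTransform (stripPoisson a) w = 2 * π * (Real.sinh ((π - a) * w) / Real.sinh (π * w)) := by
  set F : ℝ → ℝ := fun b => cosTransform (stripPoisson b) w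
  set d := cosTransform (stripPoissonDeriv π) w
  have hπ : π ∈ Set.Ioo 0 (2 * π) := ⟨Real.pi_pos, by linarith [Real.pi_pos]⟩
  have hFπ : F π = 0 := by simp [F, cosTransform, stripPoisson]
  have hF : ∀ b ∈ Set.Ioo 0 (2 * π), w * F b = d * Real.sinh (w * (b - π)) := fun b hb => by
    have h := eq_cosh_add_sinh_of_hasDerivAt isOpen_Ioo isPreconnected_Ioo
      (fun b hb => hasDerivAt_cosTransform_stripPoisson (cos_lt_one_of_mem_Ioo hb) w)
      (fun b hb =>
        (hasDerivAt_cosTransform_stripPoissonDeriv (cos_lt_one_of_mem_Ioo hb) w).congr_deriv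
          (cosTransform_stripPoissonDeriv₂ (cos_lt_one_of_mem_Ioo hb) w)) hπ hb
    change w * F b = w * F π * _ + _ at h
    simpa [hFπ] using h
  have hlim : Tendsto (fun b => w * F b) (𝓝[>] 0) (𝓝 (d * Real.sinh (w * (0 - π)))) := by
    have hcont : Continuous fun b => d * Real.sinh (w * (b - π)) := by fun_prop
    refine (tendsto_nhdsWithin_of_tendsto_nhds (hcont.tendsto 0)).congr' ?_
    filter_upwards [Ioo_mem_nhdsGT Real.two_pi_pos] with b hb using (hF b hb).symm
  have hd : w * (2 * π) = d * Real.sinh (w * (0 - π)) :=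
    tendsto_nhds_unique ((tendsto_cosTransform_stripPoisson w).const_mul w) hlim
  have hsinh : Real.sinh (π * w) ≠ 0 := by simp [Real.pi_ne_zero, hw]
  rw [zero_sub, mul_neg, Real.sinh_neg, mul_comm w π] at hd
  have hFa := hF a ha
  rw [← neg_sub, mul_neg, Real.sinh_neg, mul_comm w (π - a)] at hFa
  rw [← mul_div_assoc, eq_div_iff hsinh]
  refine mul_left_cancel₀ hw ?_
  linear_combination Real.sinh (π * w) * hFa - Real.sinh ((π - a) * w) * hd

end PoissonTransform

/-! ### Fourier transforms of real functions -/

section RealFourier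

/-- The Fourier transform of a real function, with the normalization `∫ f(x) exp(-2πiwx) dx`. -/
def realFourier (f : ℝ → ℝ) : ℝ → ℂ := 𝓕 fun x => (f x : ℂ)

variable {f g : ℝ → ℝ}

lemma realFourier_eq_integral (f : ℝ → ℝ) (w : ℝ) :
    realFourier f w = ∫ x, Complex.exp (↑(-2 * π * x * w) * Complex.I) * f x :=
  Real.fourier_real_eq_integral_exp_smul _ w

lemma integrable_exp_mul_ofReal (hf : Integrable f) (w : ℝ) :
    Integrable fun x : ℝ => Complex.exp (↑(-2 * π * x * w) * Complex.I) * f x :=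
  hf.ofReal.bdd_mul (c := 1) (by fun_prop)
    (ae_of_all _ fun x => (Complex.norm_exp_ofReal_mul_I _).le)

lemma realFourier_add (hf : Integrable f) (hg : Integrable g) (w : ℝ) :
    realFourier (f + g) w = realFourier f w + realFourier g w := by
  simp only [realFourier_eq_integral, Pi.add_apply, Complex.ofReal_add, mul_add]
  exact integral_add (integrable_exp_mul_ofReal hf w) (integrable_exp_mul_ofReal hg w)

lemma realFourier_sub (hf : Integrable f) (hg : Integrable g) (w : ℝ) :
    realFourier (f - g) w = realFourier f w - realFourier g w := by
  rw [eq_sub_iff_add_eq, ← realFourier_add (hf.sub hg) hg, sub_add_cancel]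

lemma realFourier_convolution (hf : Integrable f) (hg : Integrable g) (w : ℝ) :
    realFourier (f ⋆ g) w = realFourier f w * realFourier g w := by
  refine Eq.trans ?_ (Real.fourier_mul_convolution_eq hf.ofReal hg.ofReal w)
  refine congrArg (fun F : ℝ → ℂ => 𝓕 F w) (funext fun x => ?_)
  simp only [convolution_lsmul, convolution_mul, ← integral_complex_ofReal, smul_eq_mul,
    Complex.ofReal_mul]
  rfl

lemma realFourier_of_even (hf : Integrable f) (hf_even : ∀ x, f (-x) = f x) (w : ℝ) :
    realFourier f w = cosTransform f (2 * π * w) := by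
  have hsin : ∫ x, f x * Real.sin (2 * π * w * x) = 0 := by
    have h := integral_neg_eq_self (fun x => f x * Real.sin (2 * π * w * x)) volume
    simp only [hf_even, mul_neg, Real.sin_neg, integral_neg] at h
    linarith
  have hexp : ∀ x : ℝ, Complex.exp (↑(-2 * π * x * w) * Complex.I) * f x =
      ((f x * Real.cos (2 * π * w * x) : ℝ) : ℂ) -
        ((f x * Real.sin (2 * π * w * x) : ℝ) : ℂ) * Complex.I := fun x => by
    rw [Complex.exp_mul_I, ← Complex.ofReal_cos, ← Complex.ofReal_sin,
      show -2 * π * x * w = -(2 * π * w * x) by ring, Real.cos_neg, Real.sin_neg]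
    push_cast
    ring
  rw [realFourier_eq_integral, integral_congr_ae (ae_of_all _ hexp),
    integral_sub (integrable_mul_cos hf _).ofReal ((integrable_mul_sin hf _).ofReal.mul_const _),
    integral_mul_const, integral_complex_ofReal, integral_complex_ofReal, hsin, Complex.ofReal_zero,
    zero_mul, sub_zero, cosTransform]

lemma eq_of_realFourier_ae_eq (hf : Integrable f) (hg : Integrable g) (hf_cont : Continuous f)
    (hg_cont : Continuous g) (h : realFourier f =ᵐ[volume] realFourier g) : f = g := by
  have hzero : realFourier (f - g) =ᵐ[volume] 0 := by
    filter_upwards [h] with w hw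
    rw [realFourier_sub hf hg, hw, sub_self, Pi.zero_apply]
  have hinv : 𝓕⁻ (realFourier (f - g)) = fun x => (((f - g) x : ℝ) : ℂ) :=
    (Complex.continuous_ofReal.comp (hf_cont.sub hg_cont)).fourierInv_fourier_eq (hf.sub hg).ofReal
      ((integrable_congr hzero).2 (integrable_zero _ _ _))
  ext x
  have hx : 𝓕⁻ (realFourier (f - g)) x = 0 := by
    rw [Real.fourierInv_eq]
    refine integral_eq_zero_of_ae ?_
    filter_upwards [hzero] with w hw
    simp only [hw, Pi.zero_apply, smul_zero]
  rw [hinv, Complex.ofReal_eq_zero, Pi.sub_apply, sub_eq_zero] at hx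
  exact hx

end RealFourier

/-! ### Convolution with positive kernels -/

section PositiveKernel

/-- A continuous, integrable, nonnegative and bounded convolution kernel. -/
structure IsPositiveKernel (k : ℝ → ℝ) : Prop where
  continuous : Continuous k
  integrable : Integrable k
  nonneg : ∀ x, 0 ≤ k x
  bddAbove : BddAbove (Set.range k)

/-- A differentiable function, typically positive, whose logarithmic derivative is bounded by `C`;
stated without division so as to make sense where the function vanishes. -/
structure HasLogDerivBound (C : ℝ) (f : ℝ → ℝ) : Prop where
  differentiable : Differentiable ℝ f
  abs_deriv_le : ∀ x, |deriv f x| ≤ C * f x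

variable {f k l : ℝ → ℝ} {A C : ℝ}

lemma HasLogDerivBound.add (hf : HasLogDerivBound C f) (hk : HasLogDerivBound C k) :
    HasLogDerivBound C (f + k) where
  differentiable := hf.differentiable.add hk.differentiable
  abs_deriv_le x := by
    rw [deriv_add (hf.differentiable x) (hk.differentiable x), Pi.add_apply, mul_add]
    exact (abs_add_le _ _).trans (add_le_add (hf.abs_deriv_le x) (hk.abs_deriv_le x))

namespace IsPositiveKernel

lemma bddAbove_norm (hk : IsPositiveKernel k) : BddAbove (Set.range fun x => ‖k x‖) := by
  simpa only [Real.norm_of_nonneg (hk.nonneg _)] using hk.bddAbove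

lemma integrable_mul_comp_sub (hk : IsPositiveKernel k) (hf : Integrable f) (x : ℝ) :
    Integrable fun t => f t * k (x - t) := by
  obtain ⟨B, hB⟩ := hk.bddAbove_norm
  exact hf.mul_bdd (hk.continuous.comp (by fun_prop)).aestronglyMeasurable
    (ae_of_all _ fun t => hB ⟨x - t, rfl⟩)

lemma continuous_convolution (hk : IsPositiveKernel k) (hf : Integrable f) : Continuous (f ⋆ k) :=
  hk.bddAbove_norm.continuous_convolution_right_of_integrable _ hf hk.continuous

lemma integrable_convolution (hk : IsPositiveKernel k) (hf : Integrable f) : Integrable (f ⋆ k) :=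
  hf.integrable_convolution _ hk.integrable

lemma convolution_nonneg (hk : IsPositiveKernel k) (hf : ∀ x, 0 ≤ f x) (x : ℝ) : 0 ≤ (f ⋆ k) x :=
  integral_nonneg fun t => mul_nonneg (hf t) (hk.nonneg _)

lemma convolution_le (hk : IsPositiveKernel k) (hf : Integrable f) (hA : ∀ x, f x ≤ A) (x : ℝ) :
    (f ⋆ k) x ≤ A * ∫ t, k t := by
  calc (f ⋆ k) x ≤ ∫ t, A * k (x - t) :=
        integral_mono (hk.integrable_mul_comp_sub hf x)
          ((hk.integrable.comp_sub_left x).const_mul A)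
          fun t => mul_le_mul_of_nonneg_right (hA t) (hk.nonneg _)
    _ = A * ∫ t, k t := by rw [integral_const_mul, integral_sub_left_eq_self k volume x]

lemma le_convolution (hk : IsPositiveKernel k) (hf : Integrable f) (hA : ∀ x, A ≤ f x) (x : ℝ) :
    A * ∫ t, k t ≤ (f ⋆ k) x := by
  calc A * ∫ t, k t = ∫ t, A * k (x - t) := by
        rw [integral_const_mul, integral_sub_left_eq_self k volume x]
    _ ≤ (f ⋆ k) x :=
        integral_mono ((hk.integrable.comp_sub_left x).const_mul A)
          (hk.integrable_mul_comp_sub hf x)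
          fun t => mul_le_mul_of_nonneg_right (hA t) (hk.nonneg _)

lemma exists_abs_convolution_le (hk : IsPositiveKernel k) (hf : Integrable f) :
    ∃ B, ∀ x, |(f ⋆ k) x| ≤ B := by
  obtain ⟨B, hB⟩ := hk.bddAbove_norm
  refine ⟨∫ t, ‖f t‖ * B, fun x => ?_⟩
  rw [← Real.norm_eq_abs, convolution_lsmul]
  refine norm_integral_le_of_norm_le (hf.norm.mul_const B) (ae_of_all _ fun t => ?_)
  rw [norm_smul]
  exact mul_le_mul_of_nonneg_left (hB ⟨x - t, rfl⟩) (norm_nonneg _)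

lemma convolution (hk : IsPositiveKernel k) (hl : IsPositiveKernel l) :
    IsPositiveKernel (k ⋆ l) where
  continuous := hl.continuous_convolution hk.integrable
  integrable := hl.integrable_convolution hk.integrable
  nonneg := hl.convolution_nonneg hk.nonneg
  bddAbove := by
    obtain ⟨B, hB⟩ := hl.exists_abs_convolution_le hk.integrable
    exact ⟨B, Set.forall_mem_range.2 fun x => (le_abs_self _).trans (hB x)⟩

lemma hasDerivAt_convolution (hk : IsPositiveKernel k) (hf : Integrable f)
    (hk' : HasLogDerivBound C k) (x : ℝ) :
    HasDerivAt (f ⋆ k) (∫ t, f t * deriv k (x - t)) x := by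
  obtain ⟨B, hB⟩ := hk.bddAbove_norm
  refine (hasDerivAt_integral_of_dominated_loc_of_deriv_le
    (F' := fun y t => f t * deriv k (y - t)) (bound := fun t => ‖f t‖ * (|C| * B)) univ_mem
    (.of_forall fun y => (hk.integrable_mul_comp_sub hf y).aestronglyMeasurable)
    (hk.integrable_mul_comp_sub hf x)
    (hf.aestronglyMeasurable.mul
      ((measurable_deriv k).comp (measurable_id.const_sub x)).aestronglyMeasurable)
    (ae_of_all _ fun t y _ => ?_) (hf.norm.mul_const _)
    (ae_of_all _ fun t y _ => ?_)).2
  · rw [norm_mul]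
    refine mul_le_mul_of_nonneg_left ((hk'.abs_deriv_le _).trans ?_) (norm_nonneg _)
    exact mul_le_mul (le_abs_self C) ((le_abs_self _).trans (hB ⟨y - t, rfl⟩)) (hk.nonneg _)
      (abs_nonneg C)
  · simpa only [mul_one] using
      (((hk'.differentiable _).hasDerivAt.comp_sub_const y t).const_mul (f t))

lemma hasLogDerivBound_convolution (hk : IsPositiveKernel k) (hf : Integrable f)
    (hf_nonneg : ∀ x, 0 ≤ f x) (hk' : HasLogDerivBound C k) : HasLogDerivBound C (f ⋆ k) where
  differentiable x := (hk.hasDerivAt_convolution hf hk' x).differentiableAt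
  abs_deriv_le x := by
    rw [(hk.hasDerivAt_convolution hf hk' x).deriv, convolution_lsmul, ← integral_const_mul,
      ← Real.norm_eq_abs]
    refine norm_integral_le_of_norm_le ((hk.integrable_mul_comp_sub hf x).const_mul C)
      (ae_of_all _ fun t => ?_)
    rw [norm_mul, Real.norm_of_nonneg (hf_nonneg t), smul_eq_mul, mul_left_comm]
    exact mul_le_mul_of_nonneg_left (hk'.abs_deriv_le _) (hf_nonneg t)

end IsPositiveKernel

end PositiveKernel

/-! ### Renewal equations -/

section Renewal

/-- An integrable solution `g` of the renewal equation `g = f + (1_T g) ⋆ R`. -/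
structure IsRenewalSolution (f R : ℝ → ℝ) (T : Set ℝ) (g : ℝ → ℝ) : Prop where
  integrable : Integrable g
  eq : g = f + (T.indicator g ⋆ R)

lemma le_of_forall_le_add_mul {α : Type*} {u : α → ℝ} {b θ : ℝ} (hθ : θ < 1)
    (hu : BddAbove (Set.range u))
    (h : ∀ A, 0 ≤ A → (∀ x, u x ≤ b + A) → ∀ x, u x ≤ b + θ * A) (x : α) : u x ≤ b := by
  by_contra! hx
  have : Nonempty α := ⟨x⟩
  have hpos : 0 < iSup u - b := sub_pos.2 (hx.trans_le (le_ciSup hu x))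
  have hle : iSup u ≤ b + θ * (iSup u - b) :=
    ciSup_le (h _ hpos.le fun y => by linarith [le_ciSup hu y])
  nlinarith

namespace IsRenewalSolution

variable {f R g : ℝ → ℝ} {T : Set ℝ} {C M : ℝ}

lemma apply_eq (h : IsRenewalSolution f R T g) (x : ℝ) :
    g x = f x + (T.indicator g ⋆ R) x :=
  congrFun h.eq x

lemma indicator_nonneg (h : IsRenewalSolution f R T g) (hR : IsPositiveKernel R)
    (hR_mass : ∫ t, R t < 1) (hT : MeasurableSet T) (hf : ∀ x, 0 ≤ f x) (x : ℝ) :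
    0 ≤ T.indicator g x := by
  have hint := h.integrable.indicator hT
  obtain ⟨B, hB⟩ := hR.exists_abs_convolution_le hint
  have hB_nonneg : 0 ≤ B := (abs_nonneg _).trans (hB 0)
  have hge : ∀ {N}, N ≤ 0 → (∀ x, N ≤ (T.indicator g ⋆ R) x) → ∀ x, N ≤ T.indicator g x := by
    intro N hN hle x
    refine Set.le_indicator_apply (fun _ => ?_) fun _ => hN
    rw [h.apply_eq]
    linarith [hf x, hle x]
  refine neg_nonpos.1 (le_of_forall_le_add_mul (u := fun x => -T.indicator g x) hR_mass
    ⟨B, Set.forall_mem_range.2 fun x => neg_le.2 (hge (by linarith)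
      (fun x => neg_le_of_abs_le (hB x)) x)⟩ (fun A hA hle x => ?_) x)
  simp only [zero_add] at hle ⊢
  rw [neg_le, mul_comm, ← neg_mul]
  exact hge (mul_nonpos_of_nonpos_of_nonneg (neg_nonpos.2 hA) (integral_nonneg hR.nonneg))
    (hR.le_convolution hint fun x => neg_le.2 (hle x)) x

lemma le_apply (h : IsRenewalSolution f R T g) (hR : IsPositiveKernel R) (hR_mass : ∫ t, R t < 1)
    (hT : MeasurableSet T) (hf : ∀ x, 0 ≤ f x) (x : ℝ) : f x ≤ g x := by
  rw [h.apply_eq]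
  exact le_add_of_nonneg_right
    (hR.convolution_nonneg (h.indicator_nonneg hR hR_mass hT hf) x)

lemma apply_le (h : IsRenewalSolution f R T g) (hR : IsPositiveKernel R) (hR_mass : ∫ t, R t < 1)
    (hT : MeasurableSet T) (hM : 0 ≤ M) (hf : ∀ x ∈ T, f x ≤ M) (x : ℝ) :
    g x ≤ f x + (∫ t, R t) / (1 - ∫ t, R t) * M := by
  have hint := h.integrable.indicator hT
  have hθ : 0 ≤ ∫ t, R t := integral_nonneg hR.nonneg
  set θ := ∫ t, R t
  have hθ' : 0 < 1 - θ := sub_pos.2 hR_mass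
  obtain ⟨B, hB⟩ := hR.exists_abs_convolution_le hint
  have hB_nonneg : 0 ≤ B := (abs_nonneg _).trans (hB 0)
  have hle : ∀ {N}, 0 ≤ N → (∀ x, (T.indicator g ⋆ R) x ≤ N) → ∀ x, T.indicator g x ≤ M + N := by
    intro N hN hle x
    refine Set.indicator_apply_le' (fun hx => ?_) fun _ => add_nonneg hM hN
    rw [h.apply_eq]
    exact add_le_add (hf x hx) (hle x)
  have hind : ∀ x, T.indicator g x ≤ M / (1 - θ) := by
    refine le_of_forall_le_add_mul hR_mass ⟨M + B, Set.forall_mem_range.2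
      (hle hB_nonneg fun x => (le_abs_self _).trans (hB x))⟩ fun A hA hA_le x => ?_
    refine (hle (by positivity) (hR.convolution_le hint hA_le) x).trans_eq ?_
    change M + (M / (1 - θ) + A) * θ = _
    field_simp
    ring
  calc g x = f x + (T.indicator g ⋆ R) x := h.apply_eq x
    _ ≤ f x + M / (1 - θ) * θ := by grw [hR.convolution_le hint hind x]
    _ = f x + θ / (1 - θ) * M := by ring

lemma hasLogDerivBound (h : IsRenewalSolution f R T g) (hR : IsPositiveKernel R)
    (hR_mass : ∫ t, R t < 1) (hT : MeasurableSet T) (hf : ∀ x, 0 ≤ f x)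
    (hf' : HasLogDerivBound C f) (hR' : HasLogDerivBound C R) : HasLogDerivBound C g := by
  have hadd := hf'.add (hR.hasLogDerivBound_convolution (h.integrable.indicator hT)
    (h.indicator_nonneg hR hR_mass hT hf) hR')
  rwa [← h.eq] at hadd

lemma integral_sub_setIntegral_compl (h : IsRenewalSolution f R T g) (hR : IsPositiveKernel R)
    (hT : MeasurableSet T) (hf : Integrable f) :
    (∫ x, f x) - ∫ x in Tᶜ, g x = (1 - ∫ t, R t) * ∫ x in T, g x := by
  have hint := h.integrable.indicator hT
  have hmass : ∫ x, g x = (∫ x, f x) + (∫ x in T, g x) * ∫ t, R t := by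
    calc ∫ x, g x = ∫ x, (f x + (T.indicator g ⋆ R) x) := integral_congr_ae (ae_of_all _ h.apply_eq)
      _ = (∫ x, f x) + ∫ x, (T.indicator g ⋆ R) x :=
        integral_add hf (hR.integrable_convolution hint)
      _ = (∫ x, f x) + (∫ x in T, g x) * ∫ t, R t := by
        rw [integral_convolution _ hint hR.integrable, integral_indicator hT]
        rfl
  linarith [integral_add_compl hT h.integrable]

lemma mul_setIntegral_le_integral_sub (h : IsRenewalSolution f R T g) (hR : IsPositiveKernel R)
    (hR_mass : ∫ t, R t < 1) (hT : MeasurableSet T) (hf : Integrable f) (hf_nonneg : ∀ x, 0 ≤ f x) :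
    (1 - ∫ t, R t) * ∫ x in T, f x ≤ (∫ x, f x) - ∫ x in Tᶜ, g x := by
  rw [h.integral_sub_setIntegral_compl hR hT hf]
  exact mul_le_mul_of_nonneg_left (setIntegral_mono hf.integrableOn h.integrable.integrableOn
    (h.le_apply hR hR_mass hT hf_nonneg)) (sub_nonneg.2 hR_mass.le)

lemma integral_sub_setIntegral_compl_le (h : IsRenewalSolution f R T g) (hR : IsPositiveKernel R)
    (hR_mass : ∫ t, R t < 1) (hT : MeasurableSet T) (hf : Integrable f) (hf_nonneg : ∀ x, 0 ≤ f x) :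
    (∫ x, f x) - ∫ x in Tᶜ, g x ≤ ∫ x in T, f x := by
  have hint := h.integrable.indicator hT
  have hconv := hR.integrable_convolution hint
  have hsplit : ∫ x in T, g x = (∫ x in T, f x) + ∫ x in T, (T.indicator g ⋆ R) x := by
    rw [← integral_add hf.integrableOn hconv.integrableOn]
    exact integral_congr_ae (ae_of_all _ h.apply_eq)
  have hle : ∫ x in T, (T.indicator g ⋆ R) x ≤ (∫ x in T, g x) * ∫ t, R t := by
    refine (setIntegral_le_integral hconv (ae_of_all _ (hR.convolution_nonneg
      (h.indicator_nonneg hR hR_mass hT hf_nonneg)))).trans_eq ?_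
    rw [integral_convolution _ hint hR.integrable, integral_indicator hT]
    rfl
  rw [h.integral_sub_setIntegral_compl hR hT hf]
  linarith

end IsRenewalSolution

end Renewal

/-! ### Exit densities of the strip -/

section StripKernel

/-- The density at `x` of the harmonic measure of the lower edge of the strip `0 < Im z < s`, seen
from height `t`. It is a genuine sub-probability density for `0 < t ≤ s`. -/
def stripKernel (s t x : ℝ) : ℝ := (2 * s)⁻¹ * stripPoisson (π * t / s) (π / s * x)

/-- The Fourier transform of `stripKernel s t` at frequencies `w ≠ 0`. -/
def stripSymbol (s t w : ℝ) : ℝ := Real.sinh (2 * π * (s - t) * w) / Real.sinh (2 * π * s * w)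

variable {s t w : ℝ}

lemma stripKernel_angle_mem (ht : 0 < t) (hts : t < 2 * s) : π * t / s ∈ Set.Ioo 0 (2 * π) := by
  have hs : 0 < s := by linarith
  refine ⟨by positivity, ?_⟩
  rw [div_lt_iff₀ hs]
  nlinarith [Real.pi_pos]

lemma stripKernel_neg (s t x : ℝ) : stripKernel s t (-x) = stripKernel s t x := by
  rw [stripKernel, mul_neg, stripPoisson_neg, stripKernel]

lemma continuous_stripKernel (ht : 0 < t) (hts : t < 2 * s) : Continuous (stripKernel s t) :=
  ((continuous_stripPoisson (cos_lt_one_of_mem_Ioo (stripKernel_angle_mem ht hts))).comp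
    (continuous_const_mul _)).const_mul _

lemma integrable_stripKernel (ht : 0 < t) (hts : t < 2 * s) : Integrable (stripKernel s t) :=
  have hs : 0 < s := by linarith
  ((integrable_stripPoisson (cos_lt_one_of_mem_Ioo (stripKernel_angle_mem ht hts))).comp_mul_left'
    (by positivity)).const_mul _

lemma integral_stripKernel (ht : 0 < t) (hts : t < 2 * s) : ∫ x, stripKernel s t x = 1 - t / s := by
  have hs : 0 < s := by linarith
  simp only [stripKernel]
  rw [integral_const_mul, Measure.integral_comp_mul_left (stripPoisson (π * t / s)),
    integral_stripPoisson (stripKernel_angle_mem ht hts), abs_of_nonneg (by positivity),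
    smul_eq_mul]
  field_simp

lemma isPositiveKernel_stripKernel (ht : 0 < t) (hts : t ≤ s) :
    IsPositiveKernel (stripKernel s t) := by
  have hs : 0 < s := ht.trans_le hts
  have hangle := stripKernel_angle_mem ht (show t < 2 * s by linarith)
  have hcos := cos_lt_one_of_mem_Ioo hangle
  have hsin : 0 ≤ Real.sin (π * t / s) :=
    Real.sin_nonneg_of_nonneg_of_le_pi hangle.1.le
      ((div_le_iff₀ hs).2 (mul_le_mul_of_nonneg_left hts Real.pi_pos.le))
  refine ⟨continuous_stripKernel ht (by linarith), integrable_stripKernel ht (by linarith),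
    fun x => mul_nonneg (by positivity) (div_nonneg hsin (cosh_sub_cos_pos hcos _).le),
    (2 * s)⁻¹ * (Real.sin (π * t / s) / (1 - Real.cos (π * t / s))),
    Set.forall_mem_range.2 fun x => mul_le_mul_of_nonneg_left ?_ (by positivity)⟩
  exact div_le_div_of_nonneg_left hsin (sub_pos.2 hcos)
    (sub_le_sub_right (Real.one_le_cosh _) _)

lemma realFourier_stripKernel (ht : 0 < t) (hts : t < 2 * s) (hw : w ≠ 0) :
    realFourier (stripKernel s t) w = stripSymbol s t w := by
  have hs : 0 < s := by linarith
  rw [realFourier_of_even (integrable_stripKernel ht hts) (stripKernel_neg s t),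
    Complex.ofReal_inj]
  have hscale : ∀ x, stripKernel s t x * Real.cos (2 * π * w * x) = (2 * s)⁻¹ *
      (stripPoisson (π * t / s) (π / s * x) * Real.cos (2 * s * w * (π / s * x))) := fun x => by
    rw [stripKernel, show 2 * s * w * (π / s * x) = 2 * π * w * x by field_simp, mul_assoc]
  calc cosTransform (stripKernel s t) (2 * π * w)
      = (2 * s)⁻¹ * (|(π / s)⁻¹| * cosTransform (stripPoisson (π * t / s)) (2 * s * w)) := by
        simp only [cosTransform, hscale]
        rw [integral_const_mul, Measure.integral_comp_mul_left
          (fun y => stripPoisson (π * t / s) y * Real.cos (2 * s * w * y)), smul_eq_mul]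
    _ = stripSymbol s t w := by
      rw [cosTransform_stripPoisson (by positivity) (stripKernel_angle_mem ht hts),
        abs_of_pos (by positivity), stripSymbol,
        show (π - π * t / s) * (2 * s * w) = 2 * π * (s - t) * w by field_simp,
        show π * (2 * s * w) = 2 * π * s * w by ring]
      field_simp

lemma sinh_two_pi_mul_ne_zero (hs : s ≠ 0) (hw : w ≠ 0) : Real.sinh (2 * π * s * w) ≠ 0 := by
  simp [Real.pi_ne_zero, hs, hw]

/-- Strong Markov property: to reach height `0` from height `t`, first reach height `r`. -/
lemma stripSymbol_mul_stripSymbol {r : ℝ} (hrs : r ≠ s) (hw : w ≠ 0) :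
    stripSymbol s r w * stripSymbol (s - r) (t - r) w = stripSymbol s t w := by
  have hne := sinh_two_pi_mul_ne_zero (sub_ne_zero.2 hrs.symm) hw
  rw [stripSymbol, stripSymbol, stripSymbol, sub_sub_sub_cancel_right, mul_comm,
    div_mul_div_cancel₀ hne]

/-- Strong Markov property: from height `t`, a path reaches height `0` either before or after
leaving the thinner strip of width `r` through its upper edge. -/
lemma stripSymbol_add_mul_stripSymbol {r : ℝ} (hr : r ≠ 0) (hs : s ≠ 0) (hw : w ≠ 0) :
    stripSymbol r t w + stripSymbol r (r - t) w * stripSymbol s r w = stripSymbol s t w := by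
  have hr' := sinh_two_pi_mul_ne_zero hr hw
  have hs' := sinh_two_pi_mul_ne_zero hs hw
  simp only [stripSymbol, sub_sub_cancel, mul_sub, sub_mul, Real.sinh_sub]
  field_simp [hr', hs']
  ring

end StripKernel

/-! ### The continuum Bethe equation as a renewal equation -/

section Bethe

variable {ζ q : ℝ}

lemma Kml_eq_stripKernel (ζ : ℝ) : Kml ζ = stripKernel (π / 2) ζ := by
  ext x
  have hD : Real.cosh (2 * x) - Real.cos (2 * ζ) =
      2 * (Real.sinh x ^ 2 + Real.sin ζ ^ 2) := by
    rw [Real.cosh_two_mul, Real.cos_two_mul, Real.cosh_sq, Real.cos_sq']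
    ring
  rw [Kml, stripKernel, stripPoisson, show π * ζ / (π / 2) = 2 * ζ by field_simp,
    show π / (π / 2) * x = 2 * x by field_simp, hD, mul_div_cancel₀ π two_ne_zero]
  field_simp

lemma xiMl_eq_stripKernel (ζ : ℝ) : xiMl ζ = stripKernel (π / 2) (ζ / 2) := by
  ext x
  rw [← Kml_eq_stripKernel, xiMl, Kml, mul_div_cancel₀ ζ two_ne_zero]

lemma rhoInf_eq_stripKernel (hζ : ζ ≠ 0) : rhoInf ζ = stripKernel ζ (ζ / 2) := by
  ext x
  rw [rhoInf, stripKernel, stripPoisson, show π * (ζ / 2) / ζ = π / 2 by field_simp,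
    Real.sin_pi_div_two, Real.cos_pi_div_two, sub_zero, div_mul_eq_mul_div, one_div, one_div,
    mul_inv]

/-- The resolvent `K(1 + K)⁻¹` of convolution with the kernel `K = Kml ζ`, factored into exit
densities of two strips. -/
def resolventKernel (ζ : ℝ) : ℝ → ℝ := stripKernel ((π - ζ) / 2) (ζ / 2) ⋆ rhoInf ζ

lemma isPositiveKernel_rhoInf (hζ : 0 < ζ) : IsPositiveKernel (rhoInf ζ) := by
  rw [rhoInf_eq_stripKernel hζ.ne']
  exact isPositiveKernel_stripKernel (by linarith) (by linarith)

lemma integral_rhoInf (hζ : 0 < ζ) : ∫ x, rhoInf ζ x = 1 / 2 := by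
  rw [rhoInf_eq_stripKernel hζ.ne', integral_stripKernel (by linarith) (by linarith)]
  field_simp
  norm_num

lemma isPositiveKernel_resolventKernel (hζ : 0 < ζ) (hζ' : ζ ≤ π / 2) :
    IsPositiveKernel (resolventKernel ζ) :=
  (isPositiveKernel_stripKernel (by linarith) (by linarith)).convolution
    (isPositiveKernel_rhoInf hζ)

lemma integral_resolventKernel_le (hζ : 0 < ζ) (hζ' : ζ ≤ π / 2) :
    ∫ x, resolventKernel ζ x ≤ 1 / 2 := by
  have hratio : 0 < ζ / 2 / ((π - ζ) / 2) := div_pos (by linarith) (by linarith)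
  rw [resolventKernel, integral_convolution _
    (integrable_stripKernel (by linarith) (by linarith)) (isPositiveKernel_rhoInf hζ).integrable,
    ContinuousLinearMap.lsmul_apply, smul_eq_mul, integral_rhoInf hζ,
    integral_stripKernel (by linarith) (by linarith)]
  linarith

lemma integral_resolventKernel_lt_one (hζ : 0 < ζ) (hζ' : ζ ≤ π / 2) :
    ∫ x, resolventKernel ζ x < 1 :=
  (integral_resolventKernel_le hζ hζ').trans_lt one_half_lt_one

section Transforms

variable {w : ℝ}

lemma realFourier_Kml (hζ : 0 < ζ) (hζ' : ζ < π) (hw : w ≠ 0) :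
    realFourier (Kml ζ) w = stripSymbol (π / 2) ζ w := by
  rw [Kml_eq_stripKernel, realFourier_stripKernel hζ (by linarith) hw]

lemma realFourier_xiMl (hζ : 0 < ζ) (hζ' : ζ < 2 * π) (hw : w ≠ 0) :
    realFourier (xiMl ζ) w = stripSymbol (π / 2) (ζ / 2) w := by
  rw [xiMl_eq_stripKernel, realFourier_stripKernel (by linarith) (by linarith) hw]

lemma realFourier_rhoInf (hζ : 0 < ζ) (hw : w ≠ 0) :
    realFourier (rhoInf ζ) w = stripSymbol ζ (ζ / 2) w := by
  rw [rhoInf_eq_stripKernel hζ.ne', realFourier_stripKernel (by linarith) (by linarith) hw]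

lemma realFourier_rhoInf_mul (hζ : 0 < ζ) (hζ' : ζ < π) (hw : w ≠ 0) :
    realFourier (rhoInf ζ) w * (1 + realFourier (Kml ζ) w) = realFourier (xiMl ζ) w := by
  have hsymbol := stripSymbol_add_mul_stripSymbol (t := ζ / 2) hζ.ne'
    (show π / 2 ≠ 0 by positivity) hw
  rw [sub_half] at hsymbol
  rw [realFourier_rhoInf hζ hw, realFourier_Kml hζ hζ' hw, realFourier_xiMl hζ (by linarith) hw,
    ← hsymbol]
  push_cast
  ring

lemma one_add_realFourier_Kml_ne_zero (hζ : 0 < ζ) (hζ' : ζ < π) (hw : w ≠ 0) :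
    1 + realFourier (Kml ζ) w ≠ 0 := by
  refine right_ne_zero_of_mul (a := realFourier (rhoInf ζ) w) ?_
  rw [realFourier_rhoInf_mul hζ hζ' hw, realFourier_xiMl hζ (by linarith) hw,
    Complex.ofReal_ne_zero]
  exact div_ne_zero (sinh_two_pi_mul_ne_zero (by linarith) hw)
    (sinh_two_pi_mul_ne_zero (by positivity) hw)

lemma realFourier_resolventKernel_mul (hζ : 0 < ζ) (hζ' : ζ ≤ π / 2) (hw : w ≠ 0) :
    realFourier (resolventKernel ζ) w * (1 + realFourier (Kml ζ) w) = realFourier (Kml ζ) w := by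
  have hsymbol := stripSymbol_mul_stripSymbol (r := ζ / 2) (s := π / 2) (t := ζ) (by linarith) hw
  rw [sub_half, ← sub_div] at hsymbol
  rw [resolventKernel, realFourier_convolution (integrable_stripKernel (by linarith) (by linarith))
    (isPositiveKernel_rhoInf hζ).integrable, mul_assoc, realFourier_rhoInf_mul hζ (by linarith) hw,
    realFourier_stripKernel (by linarith) (by linarith) hw, realFourier_xiMl hζ (by linarith) hw,
    realFourier_Kml hζ (by linarith) hw, ← hsymbol]
  push_cast
  ring

end Transforms

/-- Solving `(1 + K) g = ξ + K (g 1_T)` for `g` turns the Bethe equation on `S` into a renewal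
equation on the complement `T`, whose kernel is positive. -/
lemma isRenewalSolution_of_add_convolution_eq {g : ℝ → ℝ} {S : Set ℝ} (hζ : 0 < ζ)
    (hζ' : ζ ≤ π / 2) (hS : MeasurableSet S) (hg : Integrable g)
    (h : g + (S.indicator g ⋆ Kml ζ) = xiMl ζ) :
    IsRenewalSolution (rhoInf ζ) (resolventKernel ζ) Sᶜ g := by
  have hρ := isPositiveKernel_rhoInf hζ
  have hR := isPositiveKernel_resolventKernel hζ hζ'
  have hK : IsPositiveKernel (Kml ζ) :=
    Kml_eq_stripKernel ζ ▸ isPositiveKernel_stripKernel hζ hζ'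
  have hξ : Continuous (xiMl ζ) :=
    xiMl_eq_stripKernel ζ ▸ continuous_stripKernel (by linarith) (by linarith)
  have hin := hg.indicator hS
  have hout := hg.indicator hS.compl
  have hconv := hR.integrable_convolution hout
  have hg_cont : Continuous g :=
    eq_sub_of_add_eq h ▸ hξ.sub (hK.continuous_convolution hin)
  refine ⟨hg, eq_of_realFourier_ae_eq hg (hρ.integrable.add hconv) hg_cont
    (hρ.continuous.add (hR.continuous_convolution hout)) ?_⟩
  filter_upwards [compl_mem_ae_iff.2 (measure_singleton (0 : ℝ))] with w hw
  have hbethe := congrArg (realFourier · w) h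
  have hsplit := congrArg (realFourier · w) (Set.indicator_self_add_compl S g)
  simp only [realFourier_add hg (hK.integrable_convolution hin),
    realFourier_convolution hin hK.integrable] at hbethe
  simp only [realFourier_add hin hout] at hsplit
  rw [realFourier_add hρ.integrable hconv, realFourier_convolution hout hR.integrable]
  refine mul_right_cancel₀ (one_add_realFourier_Kml_ne_zero hζ (by linarith) hw) ?_
  linear_combination hbethe - realFourier_rhoInf_mul hζ (by linarith) hw -
    realFourier (Sᶜ.indicator g) w * realFourier_resolventKernel_mul hζ hζ' hw -
    realFourier (Kml ζ) w * hsplit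

lemma IsBEml.isRenewalSolution {g : ℝ → ℝ} (h : IsBEml ζ q g) (hζ : 0 < ζ) (hζ' : ζ ≤ π / 2)
    (hq : 0 ≤ q) :
    IsRenewalSolution (rhoInf ζ) (resolventKernel ζ) (Set.Ioc (-q) q)ᶜ g := by
  refine isRenewalSolution_of_add_convolution_eq hζ hζ' measurableSet_Ioc h.1 (funext fun x => ?_)
  rw [Pi.add_apply, convolution_lsmul, ← h.2.2 x, intervalIntegral.integral_of_le (by linarith),
    ← integral_indicator measurableSet_Ioc]
  simp only [smul_eq_mul, mul_comm (Kml ζ _), Set.indicator_mul_left]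

end Bethe

/-! ### The density `ρ(·|∞)` -/

section RhoInf

variable {ζ q x : ℝ}

lemma rhoInf_pos (hζ : 0 < ζ) (x : ℝ) : 0 < rhoInf ζ x :=
  one_div_pos.2 (mul_pos (by positivity) (Real.cosh_pos _))

lemma rhoInf_neg (ζ x : ℝ) : rhoInf ζ (-x) = rhoInf ζ x := by
  rw [rhoInf, mul_neg, neg_div, Real.cosh_neg, rhoInf]

lemma rhoInf_le_rhoInf (hζ : 0 < ζ) (hqx : |q| ≤ |x|) : rhoInf ζ x ≤ rhoInf ζ q := by
  refine one_div_le_one_div_of_le (mul_pos (by positivity) (Real.cosh_pos _)) ?_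
  refine mul_le_mul_of_nonneg_left (Real.cosh_le_cosh.2 ?_) (by positivity)
  rw [abs_div, abs_div, abs_mul, abs_mul]
  gcongr

lemma hasLogDerivBound_rhoInf (hζ : 0 < ζ) : HasLogDerivBound (π / ζ) (rhoInf ζ) := by
  have hderiv : ∀ x, HasDerivAt (rhoInf ζ)
      (-(π / ζ * (Real.sinh (π * x / ζ) / Real.cosh (π * x / ζ)) * rhoInf ζ x)) x := fun x => by
    have hcosh := (Real.cosh_pos (π * x / ζ)).ne'
    have harg : HasDerivAt (fun x => π * x / ζ) (π * 1 / ζ) x :=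
      ((hasDerivAt_id' x).const_mul π).div_const ζ
    refine ((hasDerivAt_const x (1 : ℝ)).div (harg.cosh.const_mul (2 * ζ))
      (mul_ne_zero (by positivity) hcosh)).congr_deriv ?_
    rw [rhoInf]
    field_simp
    ring
  refine ⟨fun x => (hderiv x).differentiableAt, fun x => ?_⟩
  have htanh : |Real.sinh (π * x / ζ) / Real.cosh (π * x / ζ)| ≤ 1 := by
    rw [← Real.tanh_eq_sinh_div_cosh]
    exact (Real.abs_tanh_lt_one _).le
  rw [(hderiv x).deriv, abs_neg, abs_mul, abs_mul, abs_of_pos (rhoInf_pos hζ x),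
    abs_of_pos (show 0 < π / ζ by positivity)]
  exact mul_le_mul_of_nonneg_right (mul_le_of_le_one_right (by positivity) htanh)
    (rhoInf_pos hζ x).le

lemma cosh_add_le_mul_exp (a : ℝ) {b : ℝ} (hb : 0 ≤ b) :
    Real.cosh (a + b) ≤ Real.cosh a * Real.exp b := by
  have hsinh : Real.sinh b * Real.sinh a ≤ Real.sinh b * Real.cosh a :=
    mul_le_mul_of_nonneg_left (Real.sinh_lt_cosh a).le (Real.sinh_nonneg_iff.2 hb)
  rw [Real.cosh_add, ← Real.cosh_add_sinh]
  linarith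

lemma cosh_mul_exp_le {a : ℝ} (ha : 0 ≤ a) (b : ℝ) :
    Real.cosh a * Real.exp b ≤ 2 * Real.cosh (a + b) := by
  calc Real.cosh a * Real.exp b ≤ Real.exp a * Real.exp b := by
        gcongr
        linarith [Real.cosh_add_sinh a, Real.sinh_nonneg_iff.2 ha]
    _ ≤ 2 * Real.cosh (a + b) := by
        rw [← Real.exp_add, Real.cosh_eq]
        linarith [Real.exp_pos (-(a + b))]

lemma rhoInf_mul_exp_le (hζ : 0 < ζ) (hqx : q ≤ x) :
    rhoInf ζ q * Real.exp (-(π / ζ) * (x - q)) ≤ rhoInf ζ x := by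
  have hcosh := cosh_add_le_mul_exp (π * q / ζ) (b := π / ζ * (x - q))
    (mul_nonneg (by positivity) (sub_nonneg.2 hqx))
  rw [show π * q / ζ + π / ζ * (x - q) = π * x / ζ by ring] at hcosh
  rw [rhoInf, rhoInf, neg_mul, Real.exp_neg, ← one_div, one_div_mul_one_div, mul_assoc]
  exact one_div_le_one_div_of_le (mul_pos (by positivity) (Real.cosh_pos _)) (by gcongr)

lemma rhoInf_le_mul_exp (hζ : 0 < ζ) (hq : 0 ≤ q) (x : ℝ) :
    rhoInf ζ x ≤ 2 * rhoInf ζ q * Real.exp (-(π / ζ) * (x - q)) := by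
  have hcosh := cosh_mul_exp_le (a := π * q / ζ) (by positivity) (π / ζ * (x - q))
  rw [show π * q / ζ + π / ζ * (x - q) = π * x / ζ by ring] at hcosh
  rw [rhoInf, rhoInf, neg_mul, Real.exp_neg, ← one_div, mul_assoc 2 (1 / _), one_div_mul_one_div,
    mul_one_div, div_le_div_iff₀ (by positivity) (by positivity)]
  linarith [mul_le_mul_of_nonneg_left hcosh (show 0 ≤ 2 * ζ by positivity)]

lemma integrableOn_exp_neg_mul_sub_Ioi {c : ℝ} (hc : 0 < c) (q : ℝ) :
    IntegrableOn (fun x => Real.exp (-c * (x - q))) (Set.Ioi q) := by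
  simp only [mul_sub, Real.exp_sub]
  exact (integrableOn_exp_mul_Ioi (neg_neg_of_pos hc) q).div_const _

lemma integral_exp_neg_mul_sub_Ioi {c : ℝ} (hc : 0 < c) (q : ℝ) :
    ∫ x in Set.Ioi q, Real.exp (-c * (x - q)) = c⁻¹ := by
  simp only [mul_sub, Real.exp_sub]
  rw [integral_div, integral_exp_mul_Ioi (neg_neg_of_pos hc)]
  field_simp

lemma mul_rhoInf_le_setIntegral_Ioi (hζ : 0 < ζ) (q : ℝ) :
    ζ / π * rhoInf ζ q ≤ ∫ x in Set.Ioi q, rhoInf ζ x := by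
  have hc : 0 < π / ζ := by positivity
  calc ζ / π * rhoInf ζ q = ∫ x in Set.Ioi q, rhoInf ζ q * Real.exp (-(π / ζ) * (x - q)) := by
        rw [integral_const_mul, integral_exp_neg_mul_sub_Ioi hc, inv_div, mul_comm]
    _ ≤ ∫ x in Set.Ioi q, rhoInf ζ x :=
        setIntegral_mono_on ((integrableOn_exp_neg_mul_sub_Ioi hc q).const_mul _)
          (isPositiveKernel_rhoInf hζ).integrable.integrableOn measurableSet_Ioi
          fun x hx => rhoInf_mul_exp_le hζ hx.le

lemma setIntegral_Ioi_rhoInf_le (hζ : 0 < ζ) (hq : 0 ≤ q) :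
    ∫ x in Set.Ioi q, rhoInf ζ x ≤ 2 * (ζ / π) * rhoInf ζ q := by
  have hc : 0 < π / ζ := by positivity
  calc ∫ x in Set.Ioi q, rhoInf ζ x
      ≤ ∫ x in Set.Ioi q, 2 * rhoInf ζ q * Real.exp (-(π / ζ) * (x - q)) :=
        setIntegral_mono_on (isPositiveKernel_rhoInf hζ).integrable.integrableOn
          ((integrableOn_exp_neg_mul_sub_Ioi hc q).const_mul _) measurableSet_Ioi
          fun x _ => rhoInf_le_mul_exp hζ hq x
    _ = 2 * (ζ / π) * rhoInf ζ q := by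
        rw [integral_const_mul, integral_exp_neg_mul_sub_Ioi hc, inv_div, mul_right_comm]

lemma setIntegral_compl_Ioc_rhoInf (hζ : 0 < ζ) (hq : 0 ≤ q) :
    ∫ x in (Set.Ioc (-q) q)ᶜ, rhoInf ζ x = 2 * ∫ x in Set.Ioi q, rhoInf ζ x := by
  have hint := (isPositiveKernel_rhoInf hζ).integrable
  have hcompl : (Set.Ioc (-q) q)ᶜ = Set.Iic (-q) ∪ Set.Ioi q := by
    ext x
    simp only [Set.mem_compl_iff, Set.mem_Ioc, Set.mem_union, Set.mem_Iic, Set.mem_Ioi, not_and_or,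
      not_lt, not_le]
  have hdisj : Disjoint (Set.Iic (-q)) (Set.Ioi q) :=
    Set.Iic_disjoint_Ioi (by linarith)
  have hleft : ∫ x in Set.Iic (-q), rhoInf ζ x = ∫ x in Set.Ioi q, rhoInf ζ x := by
    rw [← integral_comp_neg_Ioi]
    simp only [rhoInf_neg]
  rw [hcompl, setIntegral_union hdisj measurableSet_Ioi hint.integrableOn hint.integrableOn, hleft,
    two_mul]

end RhoInf

/-! ### The density `ρ(·|q)` -/

section DensityProperties

variable {ζ q : ℝ} {g : ℝ → ℝ}

lemma hasLogDerivBound_resolventKernel (hζ : 0 < ζ) (hζ' : ζ ≤ π / 2) :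
    HasLogDerivBound (π / ζ) (resolventKernel ζ) :=
  have hexit := isPositiveKernel_stripKernel (s := (π - ζ) / 2) (half_pos hζ) (by linarith)
  (isPositiveKernel_rhoInf hζ).hasLogDerivBound_convolution hexit.integrable hexit.nonneg
    (hasLogDerivBound_rhoInf hζ)

lemma IsBEml.rhoInf_le (h : IsBEml ζ q g) (hζ : 0 < ζ) (hζ' : ζ ≤ π / 2) (hq : 0 ≤ q) (x : ℝ) :
    rhoInf ζ x ≤ g x :=
  (h.isRenewalSolution hζ hζ' hq).le_apply (isPositiveKernel_resolventKernel hζ hζ')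
    (integral_resolventKernel_lt_one hζ hζ') measurableSet_Ioc.compl
    (isPositiveKernel_rhoInf hζ).nonneg x

lemma IsBEml.le_rhoInf_add (h : IsBEml ζ q g) (hζ : 0 < ζ) (hζ' : ζ ≤ π / 2) (hq : 0 ≤ q)
    (x : ℝ) : g x ≤ rhoInf ζ x + rhoInf ζ q := by
  have hmass := integral_resolventKernel_le hζ hζ'
  have hout : ∀ y ∈ (Set.Ioc (-q) q)ᶜ, rhoInf ζ y ≤ rhoInf ζ q := fun y hy => by
    refine rhoInf_le_rhoInf hζ ?_
    rw [abs_of_nonneg hq]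
    exact not_lt.1 fun hlt => hy ⟨(abs_lt.1 hlt).1, (abs_lt.1 hlt).2.le⟩
  refine ((h.isRenewalSolution hζ hζ' hq).apply_le (isPositiveKernel_resolventKernel hζ hζ')
    (integral_resolventKernel_lt_one hζ hζ') measurableSet_Ioc.compl (rhoInf_pos hζ q).le
    hout x).trans ?_
  have hratio : (∫ t, resolventKernel ζ t) / (1 - ∫ t, resolventKernel ζ t) ≤ 1 :=
    (div_le_one₀ (by linarith)).2 (by linarith)
  exact add_le_add_right (mul_le_of_le_one_left (rhoInf_pos hζ q).le hratio) _

lemma IsBEml.hasLogDerivBound (h : IsBEml ζ q g) (hζ : 0 < ζ) (hζ' : ζ ≤ π / 2) (hq : 0 ≤ q) :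
    HasLogDerivBound (π / ζ) g :=
  (h.isRenewalSolution hζ hζ' hq).hasLogDerivBound (isPositiveKernel_resolventKernel hζ hζ')
    (integral_resolventKernel_lt_one hζ hζ') measurableSet_Ioc.compl
    (isPositiveKernel_rhoInf hζ).nonneg (hasLogDerivBound_rhoInf hζ)
    (hasLogDerivBound_resolventKernel hζ hζ')

lemma IsBEml.setIntegral_Ioi_rhoInf_le (h : IsBEml ζ q g) (hζ : 0 < ζ) (hζ' : ζ ≤ π / 2)
    (hq : 0 ≤ q) : ∫ x in Set.Ioi q, rhoInf ζ x ≤ 1 / 2 - ∫ t in (-q)..q, g t := by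
  have hρ := isPositiveKernel_rhoInf hζ
  have hmass := integral_resolventKernel_le hζ hζ'
  have htail := (h.isRenewalSolution hζ hζ' hq).mul_setIntegral_le_integral_sub
    (isPositiveKernel_resolventKernel hζ hζ') (integral_resolventKernel_lt_one hζ hζ')
    measurableSet_Ioc.compl hρ.integrable hρ.nonneg
  rw [compl_compl, integral_rhoInf hζ, setIntegral_compl_Ioc_rhoInf hζ hq,
    ← intervalIntegral.integral_of_le (by linarith)] at htail
  have hpos : 0 ≤ ∫ x in Set.Ioi q, rhoInf ζ x :=
    setIntegral_nonneg measurableSet_Ioi fun x _ => hρ.nonneg x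
  nlinarith

lemma IsBEml.half_sub_intervalIntegral_le (h : IsBEml ζ q g) (hζ : 0 < ζ) (hζ' : ζ ≤ π / 2)
    (hq : 0 ≤ q) : 1 / 2 - ∫ t in (-q)..q, g t ≤ 2 * ∫ x in Set.Ioi q, rhoInf ζ x := by
  have hρ := isPositiveKernel_rhoInf hζ
  have htail := (h.isRenewalSolution hζ hζ' hq).integral_sub_setIntegral_compl_le
    (isPositiveKernel_resolventKernel hζ hζ')
    (integral_resolventKernel_lt_one hζ hζ')
    measurableSet_Ioc.compl hρ.integrable hρ.nonneg
  rwa [compl_compl, integral_rhoInf hζ, setIntegral_compl_Ioc_rhoInf hζ hq,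
    ← intervalIntegral.integral_of_le (by linarith)] at htail

theorem density_properties_general (hζ : 0 < ζ) (hζ' : ζ ≤ π / 2) (hq : 0 ≤ q)
    (h : IsBEml ζ q g) :
    (∀ x, 0 < rhoInf ζ x ∧ rhoInf ζ x ≤ g x ∧ g x ≤ rhoInf ζ x + rhoInf ζ q) ∧
      (Differentiable ℝ g ∧ ∀ x, |deriv g x| ≤ π / ζ * g x) ∧
      (π / 4 / ζ * (1 / 2 - ∫ t in (-q)..q, g t) ≤ rhoInf ζ q ∧
        rhoInf ζ q ≤ π / ζ * (1 / 2 - ∫ t in (-q)..q, g t)) := by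
  have hderiv := h.hasLogDerivBound hζ hζ' hq
  refine ⟨fun x => ⟨rhoInf_pos hζ x, h.rhoInf_le hζ hζ' hq x, h.le_rhoInf_add hζ hζ' hq x⟩,
    ⟨hderiv.differentiable, hderiv.abs_deriv_le⟩, ?_, ?_⟩
  · calc π / 4 / ζ * (1 / 2 - ∫ t in (-q)..q, g t)
        ≤ π / 4 / ζ * (2 * (2 * (ζ / π) * rhoInf ζ q)) := by
          grw [h.half_sub_intervalIntegral_le hζ hζ' hq, setIntegral_Ioi_rhoInf_le hζ hq]
      _ = rhoInf ζ q := by field_simp; norm_num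
  · calc rhoInf ζ q = π / ζ * (ζ / π * rhoInf ζ q) := by field_simp
      _ ≤ π / ζ * (1 / 2 - ∫ t in (-q)..q, g t) := by
          grw [mul_rhoInf_le_setIntegral_Ioi hζ q, h.setIntegral_Ioi_rhoInf_le hζ hζ' hq]

end DensityProperties

/-- **Properties of the densities `ρ(·|q)` for `-1 < Δ ≤ 0`** (Proposition B.2):
for every `ε > 0` there are constants `c, C > 0` such that for every
`ζ ∈ (0,π/2]` and `q ≥ 0`, the solution `ρ(·|q)` satisfies
(i) `0 < ρ ≤ ρ(·|q) ≤ ρ + ρ(q)`;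
(ii) `ρ(·|q)` is differentiable with `|ρ'(x|q)| ≤ (C/ζ)e^{πε/ζ} ρ(x|q)` on
`[-q-ε, q+ε]`;
(iii) if `∫_{-q}^q ρ(λ|q)dλ = m` with `m ∈ [0,1/2)`, then
`(c/ζ)(1/2-m) ≤ ρ(q) ≤ (C/ζ)(1/2-m)`. -/
theorem density_properties (ε : ℝ) (hε : 0 < ε) :
    ∃ c C : ℝ, 0 < c ∧ 0 < C ∧
      ∀ ζ : ℝ, 0 < ζ → ζ ≤ π / 2 →
      ∀ q : ℝ, 0 ≤ q →
      ∀ g : ℝ → ℝ, IsBEml ζ q g →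
        (∀ x : ℝ, 0 < rhoInf ζ x ∧ rhoInf ζ x ≤ g x ∧ g x ≤ rhoInf ζ x + rhoInf ζ q) ∧
        (Differentiable ℝ g ∧
          ∀ x ∈ Set.Icc (-q - ε) (q + ε),
            |deriv g x| ≤ C / ζ * Real.exp (π * ε / ζ) * g x) ∧
        (∀ m : ℝ, 0 ≤ m → m < 1 / 2 → (∫ t in (-q)..q, g t) = m →
          c / ζ * (1 / 2 - m) ≤ rhoInf ζ q ∧ rhoInf ζ q ≤ C / ζ * (1 / 2 - m)) := by
  refine ⟨π / 4, π, by positivity, Real.pi_pos, fun ζ hζ hζ' q hq g h => ?_⟩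
  obtain ⟨hbounds, ⟨hdiff, hderiv⟩, hlower, hupper⟩ := density_properties_general hζ hζ' hq h
  refine ⟨hbounds, ⟨hdiff, fun x _ => (hderiv x).trans ?_⟩, ?_⟩
  · have hg : 0 ≤ g x := (hbounds x).1.le.trans (hbounds x).2.1
    have hexp : 1 ≤ Real.exp (π * ε / ζ) := Real.one_le_exp (by positivity)
    exact mul_le_mul_of_nonneg_right (le_mul_of_one_le_right (by positivity) hexp) hg
  · rintro m - - rfl
    exact ⟨hlower, hupper⟩

end BetheSix
end
end

section
/- Let K(x) := 1/(π(1+x²)) and ξ(x) := 2/(π(1+4x²)). For every q ∈ [0,∞), the linear integral equation g(λ) + ∫_{−q}^{q} K(λ−μ)g(μ)dμ = ξ(λ) for all λ ∈ ℝ has a unique solution g = ρ(·|q) in L¹(ℝ)∩L^∞(ℝ). Moreover, for every m ∈ [0,1/2) there exists q ∈ [0,∞) with ∫_{−q}^{q} ρ(λ|q)dλ = m. -/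
open MeasureTheory Filter
open scoped Real BigOperators

noncomputable section

namespace BetheSix

/-- the kernel `K(x) = 1/(π(1+x²))` at `Δ = -1`. -/
def Kxxx (x : ℝ) : ℝ := 1 / (π * (1 + x ^ 2))

/-- the kernel `ξ(x) = 2/(π(1+4x²))` at `Δ = -1`. -/
def xiXXX (x : ℝ) : ℝ := 2 / (π * (1 + 4 * x ^ 2))

/-- `g` is the solution `ρ(·|q)` of the continuum Bethe equation at `Δ = -1`:
`g ∈ L¹(ℝ) ∩ L^∞(ℝ)` and `g(λ) + ∫_{-q}^q K(λ-μ) g(μ) dμ = ξ(λ)`. -/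
def IsBExxx (q : ℝ) (g : ℝ → ℝ) : Prop :=
  Integrable g ∧ MemLp g ⊤ ∧
    ∀ l : ℝ, g l + ∫ m in (-q)..q, Kxxx (l - m) * g m = xiXXX l

/-!
The kernel `K` has mass less than `1` on every shift of `[-q, q]`, so the integral operator `T` of
the equation is a contraction of the bounded continuous functions and `1 + T` is invertible: this
gives existence and uniqueness.

The masses are controlled by duality. Since `K` is nonnegative and `‖T‖ < 1`, the solution `u` of
`u + T u = 1` satisfies `0 ≤ u ≤ 1`. Pairing with `u` the residual `f + K * f` of an integrable `f`
on the line bounds `|∫ f|` by the `L¹` norms of `f` off `[-q, q]` and of the residual on it, with a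
constant that does not depend on `q`. Comparing two cut-offs, one finds that the mass is a
continuous function of `q`.

As `q → ∞`, one compares with approximate solutions on the whole line. The Cauchy densities `P_t`
form a convolution semigroup with `K = P_1` and `ξ = P_{1/2}`, so iterating `f ↦ ξ - K * f` from
`ξ / 2` produces functions of mass `1 / 2` with residual errors `±(P_{n+1/2} - P_{n+3/2}) / 2`,
whose `L¹` norms tend to `0`. Hence the mass tends to `1 / 2`, and the intermediate value theorem
applies.
-/

open ProbabilityTheory
open scoped NNReal BoundedContinuousFunction FourierTransform Convolution Ring

section Cauchy

variable {s t : ℝ≥0}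

lemma continuous_cauchyPDFReal (x₀ : ℝ) (γ : ℝ≥0) : Continuous (cauchyPDFReal x₀ γ) := by
  rcases eq_or_ne γ 0 with rfl | hγ
  · simpa using continuous_zero
  · have (x : ℝ) : (x - x₀) ^ 2 + (γ : ℝ) ^ 2 ≠ 0 := by positivity
    unfold cauchyPDFReal
    fun_prop (disch := assumption)

lemma cauchyPDFReal_nonneg (x₀ : ℝ) (γ : ℝ≥0) (x : ℝ) : 0 ≤ cauchyPDFReal x₀ γ x := by
  rw [cauchyPDFReal_def]
  positivity

lemma cauchyPDFReal_le (x₀ : ℝ) (γ : ℝ≥0) (x : ℝ) : cauchyPDFReal x₀ γ x ≤ (π * γ)⁻¹ := by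
  rw [cauchyPDFReal_def', mul_inv]
  exact mul_le_of_le_one_right (by positivity)
    (inv_le_one_of_one_le₀ (le_add_of_nonneg_right (sq_nonneg _)))

lemma integrable_exp_neg_mul_abs {a : ℝ} (ha : 0 < a) :
    Integrable fun x : ℝ => Real.exp (-(a * |x|)) := by
  rw [← integrableOn_univ, ← Set.Iic_union_Ioi (a := (0 : ℝ)), integrableOn_union]
  refine ⟨(integrableOn_exp_mul_Iic ha 0).congr_fun (fun x hx => ?_) measurableSet_Iic,
    (integrableOn_exp_mul_Ioi (neg_lt_zero.mpr ha) 0).congr_fun (fun x hx => ?_)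
      measurableSet_Ioi⟩
  · simp [abs_of_nonpos (Set.mem_Iic.mp hx)]
  · simp [abs_of_pos (Set.mem_Ioi.mp hx)]

lemma ofReal_cauchyPDFReal_eq_inv_add_inv {γ : ℝ≥0} (hγ : γ ≠ 0) (x : ℝ) :
    (cauchyPDFReal 0 γ x : ℂ) =
      (2 * π * (γ - x * Complex.I))⁻¹ + (2 * π * (γ + x * Complex.I))⁻¹ := by
  have h₁ : (γ - x * Complex.I : ℂ) ≠ 0 := fun h => hγ (by simpa using congrArg Complex.re h)
  have h₂ : (γ + x * Complex.I : ℂ) ≠ 0 := fun h => hγ (by simpa using congrArg Complex.re h)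
  have h₃ : (x ^ 2 + γ ^ 2 : ℂ) = (γ - x * Complex.I) * (γ + x * Complex.I) := by
    linear_combination (x : ℂ) ^ 2 * Complex.I_sq
  rw [cauchyPDFReal_def, sub_zero]
  push_cast
  rw [h₃]
  field_simp
  ring

lemma fourier_exp_neg_abs {γ : ℝ≥0} (hγ : γ ≠ 0) :
    𝓕 (fun x : ℝ => (Real.exp (-(2 * π * γ * |x|)) : ℂ)) =
      fun ξ => (cauchyPDFReal 0 γ ξ : ℂ) := by
  have hγ' : 0 < 2 * π * γ := by positivity
  ext ξ
  have h : Integrable fun x : ℝ => Complex.exp (↑(-2 * π * x * ξ) * Complex.I) •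
      (Real.exp (-(2 * π * γ * |x|)) : ℂ) := by
    refine (integrable_exp_neg_mul_abs hγ').ofReal.bdd_mul (c := 1) (by fun_prop) ?_
    exact Eventually.of_forall fun x => (Complex.norm_exp_ofReal_mul_I _).le
  have hIic : ∀ x ∈ Set.Iic (0 : ℝ), Complex.exp (↑(-2 * π * x * ξ) * Complex.I) •
      (Real.exp (-(2 * π * γ * |x|)) : ℂ) = Complex.exp (2 * π * (γ - ξ * Complex.I) * x) := by
    intro x hx
    rw [abs_of_nonpos hx, smul_eq_mul, Complex.ofReal_exp, ← Complex.exp_add]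
    push_cast
    ring_nf
  have hIoi : ∀ x ∈ Set.Ioi (0 : ℝ), Complex.exp (↑(-2 * π * x * ξ) * Complex.I) •
      (Real.exp (-(2 * π * γ * |x|)) : ℂ) = Complex.exp (-(2 * π * (γ + ξ * Complex.I)) * x) := by
    intro x hx
    rw [abs_of_pos hx, smul_eq_mul, Complex.ofReal_exp, ← Complex.exp_add]
    push_cast
    ring_nf
  rw [Real.fourier_real_eq_integral_exp_smul, ← intervalIntegral.integral_Iic_add_Ioi
    h.integrableOn h.integrableOn, setIntegral_congr_fun measurableSet_Iic hIic,
    setIntegral_congr_fun measurableSet_Ioi hIoi,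
    integral_exp_mul_complex_Iic (by simpa using by positivity),
    integral_exp_mul_complex_Ioi (by simpa using by positivity),
    ofReal_cauchyPDFReal_eq_inv_add_inv hγ]
  simp [neg_div]

lemma fourier_cauchyPDFReal {γ : ℝ≥0} (hγ : γ ≠ 0) :
    𝓕 (fun x : ℝ => (cauchyPDFReal 0 γ x : ℂ)) =
      fun ξ => (Real.exp (-(2 * π * γ * |ξ|)) : ℂ) := by
  have hγ' : 0 < 2 * π * γ := by positivity
  have h := Continuous.fourier_fourierInv_eq (V := ℝ)
    (f := fun x : ℝ => (Real.exp (-(2 * π * γ * |x|)) : ℂ)) (by fun_prop)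
    (integrable_exp_neg_mul_abs hγ').ofReal
    (by rw [fourier_exp_neg_abs hγ]; exact (integrable_cauchyPDFReal 0).ofReal)
  rwa [Real.fourierInv_eq_fourier_comp_neg, show (fun x : ℝ => (Real.exp (-(2 * π * γ * |-x|)) : ℂ))
    = fun x : ℝ => (Real.exp (-(2 * π * γ * |x|)) : ℂ) by simp only [abs_neg],
    fourier_exp_neg_abs hγ] at h

lemma integral_cauchyPDFReal_mul_cauchyPDFReal (hs : s ≠ 0) (ht : t ≠ 0) (x : ℝ) :
    ∫ y, cauchyPDFReal 0 s (x - y) * cauchyPDFReal 0 t y = cauchyPDFReal 0 (s + t) x := by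
  let p (γ : ℝ≥0) (x : ℝ) : ℂ := cauchyPDFReal 0 γ x
  have p_cont (γ) : Continuous (p γ) :=
    Complex.continuous_ofReal.comp (continuous_cauchyPDFReal 0 γ)
  have p_int (γ) : Integrable (p γ) := (integrable_cauchyPDFReal 0).ofReal
  have fourier_p_int {γ} (hγ : γ ≠ 0) : Integrable (𝓕 (p γ)) := by
    rw [fourier_cauchyPDFReal hγ]
    exact (integrable_exp_neg_mul_abs (by positivity)).ofReal
  have conv_cont : Continuous (p t ⋆[.mul ℂ ℂ] p s) := by
    refine BddAbove.continuous_convolution_right_of_integrable _ ⟨(π * s)⁻¹, ?_⟩ (p_int t)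
      (p_cont s)
    rintro _ ⟨x, rfl⟩
    simpa [p, abs_of_nonneg (cauchyPDFReal_nonneg _ _ _)] using cauchyPDFReal_le 0 s x
  have fourier_conv : 𝓕 (p t ⋆[.mul ℂ ℂ] p s) = 𝓕 (p (s + t)) := by
    ext ξ
    rw [Real.fourier_mul_convolution_eq (p_int t) (p_int s), fourier_cauchyPDFReal hs,
      fourier_cauchyPDFReal ht, fourier_cauchyPDFReal (by positivity), ← Complex.ofReal_mul,
      ← Real.exp_add]
    push_cast
    ring_nf
  have conv_eq : p t ⋆[.mul ℂ ℂ] p s = p (s + t) := by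
    rw [← conv_cont.fourierInv_fourier_eq ((p_int t).integrable_convolution _ (p_int s))
        (fourier_conv ▸ fourier_p_int (by positivity)),
      fourier_conv, (p_cont _).fourierInv_fourier_eq (p_int _) (fourier_p_int (by positivity))]
  have h := congrFun conv_eq x
  simp only [convolution, ContinuousLinearMap.mul_apply', p, ← Complex.ofReal_mul,
    integral_complex_ofReal, Complex.ofReal_inj] at h
  simpa only [mul_comm] using h

lemma abs_cauchyPDFReal_sub_le (hs : s ≠ 0) (hst : s ≤ t) (x : ℝ) :
    |cauchyPDFReal 0 s x - cauchyPDFReal 0 t x| ≤ (t - s) / s * cauchyPDFReal 0 s x := by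
  have hs' : 0 < (s : ℝ) := by positivity
  have hst' : (s : ℝ) ≤ t := hst
  have ht' := hs'.trans_le hst'
  have h₁ : cauchyPDFReal 0 s x - cauchyPDFReal 0 t x =
      (t - s) * (s * t - x ^ 2) / (π * (x ^ 2 + s ^ 2) * (x ^ 2 + t ^ 2)) := by
    simp only [cauchyPDFReal_def, sub_zero]
    field_simp
    ring
  have h₂ : (t - s) / s * cauchyPDFReal 0 s x =
      (t - s) * (x ^ 2 + t ^ 2) / (π * (x ^ 2 + s ^ 2) * (x ^ 2 + t ^ 2)) := by
    simp only [cauchyPDFReal_def, sub_zero]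
    field_simp
  rw [h₁, h₂, abs_div, abs_mul, abs_of_nonneg (sub_nonneg.mpr hst'),
    abs_of_pos (by positivity : 0 < π * (x ^ 2 + (s : ℝ) ^ 2) * (x ^ 2 + (t : ℝ) ^ 2))]
  have h₃ : |s * t - x ^ 2| ≤ x ^ 2 + (t : ℝ) ^ 2 := by
    rw [abs_le]
    constructor <;> nlinarith [sq_nonneg x]
  gcongr

lemma integral_abs_cauchyPDFReal_sub_le (hs : s ≠ 0) (hst : s ≤ t) :
    ∫ x, |cauchyPDFReal 0 s x - cauchyPDFReal 0 t x| ≤ (t - s) / s := by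
  refine (integral_mono ((integrable_cauchyPDFReal 0).sub (integrable_cauchyPDFReal 0)).abs
    ((integrable_cauchyPDFReal 0).const_mul _) (abs_cauchyPDFReal_sub_le hs hst)).trans_eq ?_
  rw [integral_const_mul, integral_cauchyPDFReal_eq_one 0 hs, mul_one]

end Cauchy

section Resolvent

variable {E : Type*} [NormedAddCommGroup E] [NormedSpace ℝ E] {T : E →L[ℝ] E} {b g : E}

lemma add_apply_eq_iff_eq_inverse_one_add_apply [CompleteSpace E] (hT : ‖T‖ < 1) :
    g + T g = b ↔ g = (1 + T)⁻¹ʳ b := by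
  have h : IsUnit (1 + T) := by
    simpa only [sub_neg_eq_add] using isUnit_one_sub_of_norm_lt_one (T.opNorm_neg.trans_lt hT)
  constructor
  · rintro rfl
    exact (DFunLike.congr_fun (Ring.inverse_mul_cancel _ h) g).symm
  · rintro rfl
    exact DFunLike.congr_fun (Ring.mul_inverse_cancel _ h) b

lemma one_sub_norm_mul_norm_le_norm_add_apply (T : E →L[ℝ] E) (g : E) :
    (1 - ‖T‖) * ‖g‖ ≤ ‖g + T g‖ := by
  linarith [norm_sub_le_norm_add g (T g), T.le_opNorm g]

end Resolvent

section IntegralOperator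

variable {X : Type*} [TopologicalSpace X] [MeasurableSpace X] {κ : X × X →ᵇ ℝ} {μ ν : Measure X}

lemma norm_integral_kernel_mul_le (κ : X × X →ᵇ ℝ) {f : X → ℝ} (hf : Integrable f μ) (x : X) :
    ‖∫ y, κ (x, y) * f y ∂μ‖ ≤ ‖κ‖ * ∫ y, ‖f y‖ ∂μ := by
  rw [← integral_const_mul]
  refine norm_integral_le_of_norm_le (hf.norm.const_mul _) (Eventually.of_forall fun y => ?_)
  rw [norm_mul]
  gcongr
  exact κ.norm_coe_le_norm (x, y)

variable [BorelSpace X]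

lemma integrable_coe_mul (u : X →ᵇ ℝ) {f : X → ℝ} (hf : Integrable f μ) :
    Integrable (fun x => u x * f x) μ :=
  hf.bdd_mul (c := ‖u‖) u.continuous.aestronglyMeasurable
    (Eventually.of_forall u.norm_coe_le_norm)

lemma integrable_kernel_mul (κ : X × X →ᵇ ℝ) {f : X → ℝ} (hf : Integrable f μ) (x : X) :
    Integrable (fun y => κ (x, y) * f y) μ :=
  hf.bdd_mul (c := ‖κ‖) (by fun_prop : Continuous fun y => κ (x, y)).aestronglyMeasurable
    (Eventually.of_forall fun y => κ.norm_coe_le_norm (x, y))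

variable [SecondCountableTopology X]

lemma continuous_integral_kernel_mul (κ : X × X →ᵇ ℝ) {f : X → ℝ} (hf : Integrable f μ) :
    Continuous fun x => ∫ y, κ (x, y) * f y ∂μ := by
  refine continuous_of_dominated (bound := fun y => ‖κ‖ * ‖f y‖)
    (fun x => (integrable_kernel_mul κ hf x).aestronglyMeasurable)
    (fun x => Eventually.of_forall fun y => ?_) (hf.norm.const_mul _)
    (Eventually.of_forall fun y => by fun_prop)
  rw [norm_mul]
  gcongr
  exact κ.norm_coe_le_norm (x, y)

/-- The integral operator `f ↦ (x ↦ ∫ κ(x, y) f(y) dμ(y))` with bounded continuous kernel `κ`, as a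
bounded operator on bounded continuous functions. -/
def integralOperator (κ : X × X →ᵇ ℝ) (μ : Measure X) [IsFiniteMeasure μ] :
    (X →ᵇ ℝ) →L[ℝ] (X →ᵇ ℝ) :=
  LinearMap.mkContinuous
    { toFun f := .ofNormedAddCommGroup (fun x => ∫ y, κ (x, y) * f y ∂μ)
        (continuous_integral_kernel_mul κ (f.integrable μ)) (‖κ‖ * ∫ y, ‖f y‖ ∂μ)
        (norm_integral_kernel_mul_le κ (f.integrable μ))
      map_add' f g := by
        ext x
        simpa [mul_add] using integral_add (integrable_kernel_mul κ (f.integrable μ) x)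
          (integrable_kernel_mul κ (g.integrable μ) x)
      map_smul' c f := by
        ext x
        simp [mul_left_comm _ c, integral_const_mul] }
    (‖κ‖ * μ.real Set.univ) fun f => by
      refine (BoundedContinuousFunction.norm_ofNormedAddCommGroup_le _ (by positivity)
        (norm_integral_kernel_mul_le κ (f.integrable μ))).trans ?_
      rw [mul_assoc]
      gcongr
      refine (integral_mono (f.integrable μ).norm (integrable_const _)
        f.norm_coe_le_norm).trans_eq ?_
      simp

section FiniteMeasure

variable [IsFiniteMeasure μ]

@[simp]
lemma integralOperator_apply (f : X →ᵇ ℝ) (x : X) :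
    integralOperator κ μ f x = ∫ y, κ (x, y) * f y ∂μ := rfl

lemma norm_integralOperator_apply_le (hκ : ∀ z, 0 ≤ κ z) (f : X →ᵇ ℝ) (x : X) :
    ‖integralOperator κ μ f x‖ ≤ integralOperator κ μ 1 x * ‖f‖ := by
  rw [integralOperator_apply, integralOperator_apply, ← integral_mul_const]
  refine norm_integral_le_of_norm_le
    ((integrable_kernel_mul κ ((1 : X →ᵇ ℝ).integrable μ) x).mul_const _)
    (Eventually.of_forall fun y => ?_)
  rw [norm_mul, Real.norm_of_nonneg (hκ _), BoundedContinuousFunction.coe_one, Pi.one_apply,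
    mul_one]
  exact mul_le_mul_of_nonneg_left (f.norm_coe_le_norm y) (hκ _)

lemma norm_integralOperator_le (hκ : ∀ z, 0 ≤ κ z) {c : ℝ} (hc : 0 ≤ c)
    (h : ∀ x, ∫ y, κ (x, y) ∂μ ≤ c) : ‖integralOperator κ μ‖ ≤ c := by
  refine ContinuousLinearMap.opNorm_le_bound _ hc fun f =>
    (BoundedContinuousFunction.norm_le (by positivity)).mpr fun x =>
      (norm_integralOperator_apply_le hκ f x).trans ?_
  gcongr
  simpa using h x

lemma exists_add_integralOperator_eq_one (hκ : ∀ z, 0 ≤ κ z) (hT : ‖integralOperator κ μ‖ < 1) :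
    ∃ u : X →ᵇ ℝ, (∀ x, u x ∈ Set.Icc 0 1) ∧ u + integralOperator κ μ u = 1 := by
  set T := integralOperator κ μ
  set u := (1 + T)⁻¹ʳ 1
  have hu : u + T u = 1 := (add_apply_eq_iff_eq_inverse_one_add_apply hT).mpr rfl
  have T_one_le (x : X) : T 1 x ≤ ‖T‖ := by
    refine ((le_abs_self _).trans ((T 1).norm_coe_le_norm x)).trans ((T.le_opNorm 1).trans ?_)
    exact mul_le_of_le_one_right (norm_nonneg T)
      ((BoundedContinuousFunction.norm_le zero_le_one).mpr fun _ => by simp)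
  -- The triangle inequality loses too much for `u` itself, but gives `‖v‖ ≤ 1` for `v = 2u - 1`.
  set v := u + u - 1
  have hv : v + T v = 1 - T 1 := by
    simp only [v, map_sub, map_add]
    linear_combination hu + hu
  have v_le (x : X) : ‖v x‖ ≤ 1 + T 1 x * (‖v‖ - 1) := by
    rw [show v x = 1 - T 1 x - T v x from eq_sub_of_add_eq (DFunLike.congr_fun hv x)]
    refine (norm_sub_le _ _).trans ?_
    rw [Real.norm_of_nonneg (sub_nonneg.mpr ((T_one_le x).trans hT.le))]
    linarith [norm_integralOperator_apply_le (μ := μ) hκ v x]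
  have norm_v_le : ‖v‖ ≤ 1 := by
    by_contra! hlt
    have h : ‖v‖ ≤ 1 + ‖T‖ * (‖v‖ - 1) := by
      refine (BoundedContinuousFunction.norm_le ?_).mpr fun x => (v_le x).trans ?_
      · have := sub_pos.mpr hlt
        positivity
      · gcongr
        exact T_one_le x
    nlinarith
  refine ⟨u, fun x => ?_, hu⟩
  have h := abs_le.mp ((v.norm_coe_le_norm x).trans norm_v_le)
  simp only [v, BoundedContinuousFunction.coe_add, BoundedContinuousFunction.coe_sub,
    BoundedContinuousFunction.coe_one, Pi.add_apply, Pi.sub_apply, Pi.one_apply] at h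
  constructor <;> linarith

lemma integrable_integral_kernel_mul (κ : X × X →ᵇ ℝ) {f : X → ℝ} (hf : Integrable f ν) :
    Integrable (fun x => ∫ y, κ (x, y) * f y ∂ν) μ :=
  (integrable_const _).mono' (continuous_integral_kernel_mul κ hf).aestronglyMeasurable
    (Eventually.of_forall (norm_integral_kernel_mul_le κ hf))

lemma integral_mul_integral_kernel_mul_swap [SFinite ν] (hsymm : ∀ x y, κ (x, y) = κ (y, x))
    {f : X → ℝ} (hf : Integrable f ν) (u : X →ᵇ ℝ) :
    ∫ x, u x * ∫ y, κ (x, y) * f y ∂ν ∂μ = ∫ y, integralOperator κ μ u y * f y ∂ν := by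
  have hint : Integrable (fun z : X × X => u z.1 * (κ z * f z.2)) (μ.prod ν) :=
    integrable_coe_mul (u.compContinuous .fst) (integrable_coe_mul κ (hf.comp_snd μ))
  calc ∫ x, u x * ∫ y, κ (x, y) * f y ∂ν ∂μ
      = ∫ x, ∫ y, u x * (κ (x, y) * f y) ∂ν ∂μ := by simp only [integral_const_mul]
    _ = ∫ y, ∫ x, u x * (κ (x, y) * f y) ∂μ ∂ν := integral_integral_swap hint
    _ = ∫ y, integralOperator κ μ u y * f y ∂ν := by
      simp only [integralOperator_apply, ← integral_mul_const, hsymm _, mul_left_comm, mul_assoc]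

end FiniteMeasure

section Restrict

variable [SFinite ν] {S : Set X} [IsFiniteMeasure (ν.restrict S)] {f : X → ℝ}

lemma integral_eq_of_add_integralOperator_eq_one (hsymm : ∀ x y, κ (x, y) = κ (y, x))
    (hS : MeasurableSet S) {u : X →ᵇ ℝ} (hu : u + integralOperator κ (ν.restrict S) u = 1)
    (hf : Integrable f ν) :
    ∫ x, f x ∂ν =
      (∫ x in Sᶜ, u x * f x ∂ν) + ∫ x in S, u x * (f x + ∫ y, κ (x, y) * f y ∂ν) ∂ν := by
  have hTu (x : X) : integralOperator κ (ν.restrict S) u x = 1 - u x :=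
    eq_sub_of_add_eq' (DFunLike.congr_fun hu x)
  have huf := integrable_coe_mul u hf
  calc ∫ x, f x ∂ν
      = ∫ x, u x * f x ∂ν + ∫ x, integralOperator κ (ν.restrict S) u x * f x ∂ν := by
        simp only [hTu, sub_mul, one_mul]
        rw [integral_sub hf huf, add_sub_cancel]
    _ = (∫ x in Sᶜ, u x * f x ∂ν) + (∫ x in S, u x * f x ∂ν) +
          ∫ x in S, u x * ∫ y, κ (x, y) * f y ∂ν ∂ν := by
        rw [integral_mul_integral_kernel_mul_swap hsymm hf, add_comm (∫ x in Sᶜ, _ ∂ν),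
          integral_add_compl hS huf]
    _ = (∫ x in Sᶜ, u x * f x ∂ν) +
          ∫ x in S, u x * (f x + ∫ y, κ (x, y) * f y ∂ν) ∂ν := by
        simp only [mul_add]
        rw [integral_add huf.restrict (integrable_coe_mul u (integrable_integral_kernel_mul κ hf)),
          add_assoc]

lemma abs_integral_le_of_norm_integralOperator_lt_one (hκ : ∀ z, 0 ≤ κ z)
    (hsymm : ∀ x y, κ (x, y) = κ (y, x)) (hS : MeasurableSet S)
    (hT : ‖integralOperator κ (ν.restrict S)‖ < 1) (hf : Integrable f ν) :
    |∫ x, f x ∂ν| ≤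
      (∫ x in Sᶜ, |f x| ∂ν) + ∫ x in S, |f x + ∫ y, κ (x, y) * f y ∂ν| ∂ν := by
  obtain ⟨u, hu, hu_eq⟩ := exists_add_integralOperator_eq_one hκ hT
  have abs_integral_mul_le {g : X → ℝ} {μ : Measure X} (hg : Integrable g μ) :
      |∫ x, u x * g x ∂μ| ≤ ∫ x, |g x| ∂μ := by
    rw [← Real.norm_eq_abs]
    refine norm_integral_le_of_norm_le hg.abs (Eventually.of_forall fun x => ?_)
    rw [norm_mul, Real.norm_of_nonneg (hu x).1]
    exact mul_le_of_le_one_left (abs_nonneg _) (hu x).2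
  rw [integral_eq_of_add_integralOperator_eq_one hsymm hS hu_eq hf]
  exact (abs_add_le _ _).trans (add_le_add (abs_integral_mul_le hf.restrict)
    (abs_integral_mul_le (hf.restrict.add (integrable_integral_kernel_mul κ hf))))

end Restrict

end IntegralOperator

lemma tendsto_setIntegral_compl_Ioc {f : ℝ → ℝ} (hf : Integrable f) :
    Tendsto (fun q => ∫ x in (Set.Ioc (-q) q)ᶜ, f x) atTop (nhds 0) := by
  have hcover : AECover volume atTop fun q : ℝ => Set.Ioc (-q) q :=
    aecover_Ioc tendsto_neg_atTop_atBot tendsto_id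
  have h := (hcover.integral_tendsto_of_countably_generated hf).const_sub (∫ x, f x)
  rw [sub_self] at h
  refine h.congr fun q => ?_
  rw [sub_eq_iff_eq_add']
  exact (integral_add_compl measurableSet_Ioc hf).symm

section Bethe

variable {p q : ℝ}

/-- The density of the centred Cauchy distribution of scale `γ` as a bounded continuous function. -/
def cauchyBCF (γ : ℝ≥0) : ℝ →ᵇ ℝ :=
  .ofNormedAddCommGroup (cauchyPDFReal 0 γ) (continuous_cauchyPDFReal 0 γ) (π * γ)⁻¹ fun x =>
    (Real.norm_of_nonneg (cauchyPDFReal_nonneg 0 γ x)).trans_le (cauchyPDFReal_le 0 γ x)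

@[simp]
lemma cauchyBCF_apply (γ : ℝ≥0) (x : ℝ) : cauchyBCF γ x = cauchyPDFReal 0 γ x := rfl

lemma Kxxx_eq_cauchyPDFReal : Kxxx = cauchyPDFReal 0 1 := by
  ext x
  simp [Kxxx, cauchyPDFReal_def', add_comm, mul_comm]

lemma xiXXX_eq_cauchyPDFReal : xiXXX = cauchyPDFReal 0 2⁻¹ := by
  ext x
  simp only [xiXXX, cauchyPDFReal_def, sub_zero, NNReal.coe_inv, NNReal.coe_ofNat]
  field_simp
  ring

lemma integrable_Kxxx : Integrable Kxxx :=
  Kxxx_eq_cauchyPDFReal ▸ integrable_cauchyPDFReal 0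

lemma integrable_xiXXX : Integrable xiXXX :=
  xiXXX_eq_cauchyPDFReal ▸ integrable_cauchyPDFReal 0

lemma integrable_integral_Kxxx_mul {f : ℝ → ℝ} (hf : Integrable f) :
    Integrable fun x => ∫ y, Kxxx (x - y) * f y := by
  simp only [mul_comm (Kxxx _)]
  exact hf.integrable_convolution (.mul ℝ ℝ) integrable_Kxxx

/-- The difference kernel `(x, y) ↦ K(x - y)` of the Bethe equation. -/
def betheKernel : ℝ × ℝ →ᵇ ℝ :=
  (cauchyBCF 1).compContinuous ⟨fun z => z.1 - z.2, by fun_prop⟩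

@[simp]
lemma betheKernel_apply (z : ℝ × ℝ) : betheKernel z = Kxxx (z.1 - z.2) :=
  (congrFun Kxxx_eq_cauchyPDFReal _).symm

lemma betheKernel_nonneg (z : ℝ × ℝ) : 0 ≤ betheKernel z :=
  cauchyPDFReal_nonneg 0 1 _

lemma betheKernel_symm (x y : ℝ) : betheKernel (x, y) = betheKernel (y, x) := by
  simp only [betheKernel_apply, Kxxx, sub_sq_comm x y]

lemma integrable_Kxxx_mul {f : ℝ → ℝ} (hf : Integrable f) (x : ℝ) :
    Integrable fun y => Kxxx (x - y) * f y := by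
  simpa only [betheKernel_apply] using integrable_kernel_mul betheKernel hf x

lemma setIntegral_Kxxx_le (q x : ℝ) :
    ∫ y in Set.Ioc (-q) q, Kxxx (x - y) ≤ 1 / 2 + Real.arctan q / π := by
  have h₁ : -(π / 2) < Real.arctan q := Real.neg_pi_div_two_lt_arctan q
  have hc : (1 / 2 + Real.arctan q / π : ℝ) = π⁻¹ * (π / 2 + Real.arctan q) := by field_simp
  rw [hc]
  rcases lt_or_ge q 0 with hq | hq
  · rw [Set.Ioc_eq_empty (by linarith), setIntegral_empty]
    have : 0 ≤ π / 2 + Real.arctan q := by linarith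
    positivity
  · rw [← intervalIntegral.integral_of_le (by linarith),
      intervalIntegral.integral_comp_sub_left (fun y => Kxxx y)]
    simp only [Kxxx, one_div, mul_inv, intervalIntegral.integral_const_mul,
      integral_inv_one_add_sq, sub_neg_eq_add]
    gcongr
    rcases le_total 0 x with hx | hx
    · have := Real.arctan_lt_pi_div_two (x + q)
      have : -Real.arctan q ≤ Real.arctan (x - q) := by
        rw [← Real.arctan_neg]
        gcongr
        linarith
      linarith
    · have := Real.neg_pi_div_two_lt_arctan (x - q)
      have : Real.arctan (x + q) ≤ Real.arctan q := by gcongr; linarith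
      linarith

/-- The operator `f ↦ ∫_{-q}^q K(· - y) f(y) dy` of the Bethe equation. -/
def betheOperator (q : ℝ) : (ℝ →ᵇ ℝ) →L[ℝ] (ℝ →ᵇ ℝ) :=
  integralOperator betheKernel (volume.restrict (Set.Ioc (-q) q))

lemma norm_betheOperator_le (q : ℝ) : ‖betheOperator q‖ ≤ 1 / 2 + Real.arctan q / π := by
  refine norm_integralOperator_le betheKernel_nonneg ?_ fun x => ?_
  · exact (setIntegral_nonneg measurableSet_Ioc fun y _ => betheKernel_nonneg (0, y)).trans
      (by simpa using setIntegral_Kxxx_le q 0)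
  · simpa using setIntegral_Kxxx_le q x

lemma arctan_div_pi_lt_half (q : ℝ) : Real.arctan q / π < 1 / 2 := by
  rw [div_lt_iff₀ Real.pi_pos]
  linarith [Real.arctan_lt_pi_div_two q]

lemma norm_betheOperator_lt_one (q : ℝ) : ‖betheOperator q‖ < 1 := by
  linarith [norm_betheOperator_le q, arctan_div_pi_lt_half q]

/-- The solution `ρ(·|q)` of the Bethe equation on `[-q, q]`. -/
def betheDensity (q : ℝ) : ℝ →ᵇ ℝ :=
  (1 + betheOperator q)⁻¹ʳ (cauchyBCF 2⁻¹)

lemma betheDensity_add_betheOperator (q : ℝ) :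
    betheDensity q + betheOperator q (betheDensity q) = cauchyBCF 2⁻¹ :=
  (add_apply_eq_iff_eq_inverse_one_add_apply (norm_betheOperator_lt_one q)).mpr rfl

lemma betheDensity_add_setIntegral (q x : ℝ) :
    betheDensity q x + ∫ y in Set.Ioc (-q) q, Kxxx (x - y) * betheDensity q y = xiXXX x := by
  simpa [betheOperator, xiXXX_eq_cauchyPDFReal] using
    DFunLike.congr_fun (betheDensity_add_betheOperator q) x

lemma eq_betheDensity {g : ℝ → ℝ} (hg : IntegrableOn g (Set.Ioc (-q) q))
    (h : ∀ x, g x + ∫ y in Set.Ioc (-q) q, Kxxx (x - y) * g y = xiXXX x) :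
    g = betheDensity q := by
  let Tg : ℝ →ᵇ ℝ := .ofNormedAddCommGroup _ (continuous_integral_kernel_mul betheKernel hg) _
    (norm_integral_kernel_mul_le betheKernel hg)
  let G : ℝ →ᵇ ℝ := cauchyBCF 2⁻¹ - Tg
  have hG : ⇑G = g := by
    ext x
    simpa [G, Tg, xiXXX_eq_cauchyPDFReal] using (eq_sub_of_add_eq (h x)).symm
  have hG_eq : G + betheOperator q G = cauchyBCF 2⁻¹ := by
    ext x
    simpa [betheOperator, hG, xiXXX_eq_cauchyPDFReal] using h x
  rw [← hG]
  exact congrArg _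
    ((add_apply_eq_iff_eq_inverse_one_add_apply (norm_betheOperator_lt_one q)).mp hG_eq)

lemma setIntegral_Kxxx_mul (q x : ℝ) (f : ℝ → ℝ) :
    ∫ y in Set.Ioc (-q) q, Kxxx (x - y) * f y =
      ∫ y, Kxxx (x - y) * (Set.Ioc (-q) q).indicator f y := by
  rw [← integral_indicator measurableSet_Ioc]
  simp only [Set.indicator_mul_right]

lemma integrable_indicator_betheDensity (q : ℝ) :
    Integrable ((Set.Ioc (-q) q).indicator (betheDensity q)) :=
  IntegrableOn.integrable_indicator ((betheDensity q).integrable _) measurableSet_Ioc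

lemma integrable_betheDensity (q : ℝ) : Integrable (betheDensity q) := by
  have h : ⇑(betheDensity q) = fun x =>
      xiXXX x - ∫ y, Kxxx (x - y) * (Set.Ioc (-q) q).indicator (betheDensity q) y := by
    ext x
    rw [← setIntegral_Kxxx_mul, ← betheDensity_add_setIntegral, add_sub_cancel_right]
  rw [h]
  exact integrable_xiXXX.sub (integrable_integral_Kxxx_mul (integrable_indicator_betheDensity q))

lemma isBExxx_iff (hq : 0 ≤ q) {g : ℝ → ℝ} : IsBExxx q g ↔ g = betheDensity q := by
  simp only [IsBExxx, intervalIntegral.integral_of_le (neg_le_self hq)]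
  constructor
  · rintro ⟨hg, -, h⟩
    exact eq_betheDensity hg.integrableOn h
  · rintro rfl
    exact ⟨integrable_betheDensity q, (betheDensity q).memLp_top, betheDensity_add_setIntegral q⟩

lemma mul_norm_betheDensity_le (q : ℝ) :
    (1 / 2 - Real.arctan q / π) * ‖betheDensity q‖ ≤ ‖cauchyBCF 2⁻¹‖ := by
  rw [← betheDensity_add_betheOperator q]
  refine (mul_le_mul_of_nonneg_right ?_ (norm_nonneg _)).trans
    (one_sub_norm_mul_norm_le_norm_add_apply _ _)
  linarith [norm_betheOperator_le q]

/-- The total mass `∫_{-q}^q ρ(x|q) dx`. -/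
def betheMass (q : ℝ) : ℝ :=
  ∫ x in Set.Ioc (-q) q, betheDensity q x

lemma betheMass_zero : betheMass 0 = 0 := by
  simp [betheMass]

lemma abs_integral_sub_betheMass_le (q : ℝ) {f : ℝ → ℝ} (hf : Integrable f) :
    |(∫ x, f x) - betheMass q| ≤ (∫ x in (Set.Ioc (-q) q)ᶜ, |f x|) +
      ∫ x in Set.Ioc (-q) q, |f x + (∫ y, Kxxx (x - y) * f y) - xiXXX x| := by
  set S := Set.Ioc (-q) q
  set g := S.indicator (betheDensity q)
  have hg : Integrable g := integrable_indicator_betheDensity q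
  have hmass : ∫ x, (f x - g x) = (∫ x, f x) - betheMass q := by
    rw [integral_sub hf hg, integral_indicator measurableSet_Ioc, betheMass]
  have hcompl : ∫ x in Sᶜ, |f x - g x| = ∫ x in Sᶜ, |f x| :=
    setIntegral_congr_fun measurableSet_Ioc.compl fun x hx => by
      simp only [g, Set.indicator_of_notMem hx, sub_zero]
  have hres : ∫ x in S, |f x - g x + ∫ y, Kxxx (x - y) * (f y - g y)| =
      ∫ x in S, |f x + (∫ y, Kxxx (x - y) * f y) - xiXXX x| := by
    refine setIntegral_congr_fun measurableSet_Ioc fun x hx => ?_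
    have hgx : g x = betheDensity q x := Set.indicator_of_mem hx _
    simp only [mul_sub]
    rw [integral_sub (integrable_Kxxx_mul hf x) (integrable_Kxxx_mul hg x),
      ← setIntegral_Kxxx_mul, ← betheDensity_add_setIntegral q x, hgx]
    ring_nf
  have h := abs_integral_le_of_norm_integralOperator_lt_one betheKernel_nonneg betheKernel_symm
    (measurableSet_Ioc (a := -q)) (norm_betheOperator_lt_one q) (hf.sub hg)
  simp only [betheKernel_apply, Pi.sub_apply] at h
  rwa [hmass, hcompl, hres] at h

lemma abs_betheMass_sub_le (hp : 0 ≤ p) (hpq : p ≤ q) :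
    |betheMass q - betheMass p| ≤ 2 * ‖betheDensity q‖ * (q - p) := by
  have hsub : Set.Ioc (-p) p ⊆ Set.Ioc (-q) q := Set.Ioc_subset_Ioc (by linarith) hpq
  have h := abs_integral_sub_betheMass_le p (integrable_indicator_betheDensity q)
  have hres : ∫ x in Set.Ioc (-p) p, |(Set.Ioc (-q) q).indicator (betheDensity q) x +
      (∫ y, Kxxx (x - y) * (Set.Ioc (-q) q).indicator (betheDensity q) y) - xiXXX x| = 0 := by
    refine setIntegral_eq_zero_of_forall_eq_zero fun x hx => ?_
    rw [← setIntegral_Kxxx_mul, Set.indicator_of_mem (hsub hx), betheDensity_add_setIntegral,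
      sub_self, abs_zero]
  rw [integral_indicator measurableSet_Ioc, ← betheMass, hres, add_zero] at h
  calc |betheMass q - betheMass p|
      ≤ ∫ x in (Set.Ioc (-p) p)ᶜ, |(Set.Ioc (-q) q).indicator (betheDensity q) x| := h
    _ ≤ ∫ x in (Set.Ioc (-p) p)ᶜ, (Set.Ioc (-q) q).indicator (fun _ => ‖betheDensity q‖) x := by
      refine integral_mono (integrable_indicator_betheDensity q).abs.restrict
        ((integrableOn_const (by simp)).integrable_indicator measurableSet_Ioc).restrict fun x => ?_
      simp only [← Real.norm_eq_abs, norm_indicator_eq_indicator_norm]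
      exact Set.indicator_le_indicator ((betheDensity q).norm_coe_le_norm x)
    _ = 2 * ‖betheDensity q‖ * (q - p) := by
      rw [setIntegral_indicator measurableSet_Ioc, setIntegral_const, Set.inter_comm,
        ← Set.sdiff_eq, measureReal_sdiff hsub measurableSet_Ioc measure_Ioc_lt_top.ne,
        Real.volume_real_Ioc_of_le, Real.volume_real_Ioc_of_le, smul_eq_mul]
      · ring
      all_goals linarith

lemma continuousOn_betheMass (Q : ℝ) : ContinuousOn betheMass (Set.Icc 0 Q) := by
  have hc : 0 < 1 / 2 - Real.arctan Q / π := sub_pos.mpr (arctan_div_pi_lt_half Q)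
  let C := 2 * (‖cauchyBCF 2⁻¹‖ / (1 / 2 - Real.arctan Q / π))
  have hC {p q : ℝ} (hp : 0 ≤ p) (hpq : p ≤ q) (hq : q ≤ Q) :
      dist (betheMass q) (betheMass p) ≤ C * dist q p := by
    rw [Real.dist_eq, Real.dist_eq, abs_of_nonneg (sub_nonneg.mpr hpq)]
    refine (abs_betheMass_sub_le hp hpq).trans ?_
    have hnorm : ‖betheDensity q‖ ≤ ‖cauchyBCF 2⁻¹‖ / (1 / 2 - Real.arctan Q / π) := by
      rw [le_div_iff₀' hc]
      refine (mul_le_mul_of_nonneg_right ?_ (norm_nonneg _)).trans (mul_norm_betheDensity_le q)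
      gcongr
    exact mul_le_mul_of_nonneg_right (by simpa only [C, mul_le_mul_iff_right₀ two_pos] using hnorm)
      (sub_nonneg.mpr hpq)
  refine (LipschitzOnWith.of_dist_le_mul (K := ⟨C, by positivity⟩) fun x hx y hy => ?_).continuousOn
  rcases le_total x y with hxy | hxy
  · rw [dist_comm, dist_comm x]
    exact hC hx.1 hxy hy.2
  · exact hC hy.1 hxy hx.2

/-- `(-1)ⁿ (P_{n + 1/2} - P_{n + 3/2}) / 2` for the Cauchy densities `P`: the residual of the `n`-th
approximate solution of the Bethe equation on the whole line. -/
def cauchyResidual (n : ℕ) (x : ℝ) : ℝ :=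
  (-1) ^ n / 2 * (cauchyPDFReal 0 (n + 2⁻¹) x - cauchyPDFReal 0 (n + 1 + 2⁻¹) x)

lemma integrable_cauchyResidual (n : ℕ) : Integrable (cauchyResidual n) :=
  ((integrable_cauchyPDFReal 0).sub (integrable_cauchyPDFReal 0)).const_mul _

lemma integral_cauchyResidual (n : ℕ) : ∫ x, cauchyResidual n x = 0 := by
  simp only [cauchyResidual]
  rw [integral_const_mul, integral_sub (integrable_cauchyPDFReal 0) (integrable_cauchyPDFReal 0),
    integral_cauchyPDFReal_eq_one 0 (by positivity),
    integral_cauchyPDFReal_eq_one 0 (by positivity), sub_self, mul_zero]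

lemma integral_abs_cauchyResidual_le (n : ℕ) : ∫ x, |cauchyResidual n x| ≤ 1 / (n + 1) := by
  have h := integral_abs_cauchyPDFReal_sub_le (s := n + 2⁻¹) (t := n + 1 + 2⁻¹) (by positivity)
    (by gcongr; exact le_self_add)
  push_cast at h
  simp only [cauchyResidual, abs_mul, integral_const_mul, abs_div, abs_pow, abs_neg, abs_one,
    one_pow, abs_two]
  calc (1 / 2 : ℝ) * _ ≤ 1 / 2 * ((n + 1 + 2⁻¹ - (n + 2⁻¹)) / (n + 2⁻¹)) := by gcongr
    _ ≤ 1 / (n + 1) := by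
      field_simp
      linarith

lemma integral_Kxxx_mul_cauchyPDFReal {t : ℝ≥0} (ht : t ≠ 0) (x : ℝ) :
    ∫ y, Kxxx (x - y) * cauchyPDFReal 0 t y = cauchyPDFReal 0 (1 + t) x := by
  rw [Kxxx_eq_cauchyPDFReal, integral_cauchyPDFReal_mul_cauchyPDFReal one_ne_zero ht]

lemma integral_Kxxx_mul_cauchyResidual (n : ℕ) (x : ℝ) :
    ∫ y, Kxxx (x - y) * cauchyResidual n y = -cauchyResidual (n + 1) x := by
  simp only [cauchyResidual, mul_left_comm _ ((-1 : ℝ) ^ n / 2), mul_sub (Kxxx _)]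
  rw [integral_const_mul, integral_sub (integrable_Kxxx_mul (integrable_cauchyPDFReal 0) x)
    (integrable_Kxxx_mul (integrable_cauchyPDFReal 0) x),
    integral_Kxxx_mul_cauchyPDFReal (by positivity),
    integral_Kxxx_mul_cauchyPDFReal (by positivity)]
  push_cast
  ring_nf

lemma exists_add_integral_Kxxx_mul_eq_sub_cauchyResidual (n : ℕ) :
    ∃ f : ℝ → ℝ, Integrable f ∧ ∫ x, f x = 1 / 2 ∧
      ∀ x, f x + ∫ y, Kxxx (x - y) * f y = xiXXX x - cauchyResidual n x := by
  induction n with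
  | zero =>
    refine ⟨fun x => 2⁻¹ * xiXXX x, integrable_xiXXX.const_mul _, ?_, fun x => ?_⟩
    · rw [integral_const_mul, xiXXX_eq_cauchyPDFReal,
        integral_cauchyPDFReal_eq_one 0 (by positivity), mul_one, one_div]
    · simp only [xiXXX_eq_cauchyPDFReal, mul_left_comm _ (2⁻¹ : ℝ)]
      rw [integral_const_mul, integral_Kxxx_mul_cauchyPDFReal (by positivity), cauchyResidual]
      simp only [Nat.cast_zero, zero_add, pow_zero]
      ring
  | succ n ih =>
    obtain ⟨f, hf, hf_int, hf_eq⟩ := ih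
    have hr := integrable_cauchyResidual n
    refine ⟨fun x => f x + cauchyResidual n x, hf.add hr, ?_, fun x => ?_⟩
    · rw [integral_add hf hr, hf_int, integral_cauchyResidual, add_zero]
    · simp only [mul_add]
      rw [integral_add (integrable_Kxxx_mul hf x) (integrable_Kxxx_mul hr x),
        integral_Kxxx_mul_cauchyResidual]
      linarith [hf_eq x]

lemma tendsto_betheMass : Tendsto betheMass atTop (nhds (1 / 2)) := by
  refine Metric.tendsto_nhds.mpr fun ε hε => ?_
  obtain ⟨n, hn⟩ := exists_nat_one_div_lt (half_pos hε)
  obtain ⟨f, hf, hf_int, hf_eq⟩ := exists_add_integral_Kxxx_mul_eq_sub_cauchyResidual n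
  filter_upwards [(tendsto_setIntegral_compl_Ioc hf.abs).eventually_lt_const (half_pos hε)]
    with q hq
  have h := abs_integral_sub_betheMass_le q hf
  simp only [hf_int, hf_eq, sub_sub_cancel_left, abs_neg] at h
  rw [dist_comm, Real.dist_eq]
  calc |1 / 2 - betheMass q| ≤ _ := h
    _ ≤ (∫ x in (Set.Ioc (-q) q)ᶜ, |f x|) + ∫ x, |cauchyResidual n x| :=
      add_le_add le_rfl (setIntegral_le_integral (integrable_cauchyResidual n).abs
        (Eventually.of_forall fun x => abs_nonneg _))
    _ < ε := by linarith [integral_abs_cauchyResidual_le n]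

end Bethe

/-- **Existence and uniqueness for the continuum Bethe equation at `Δ = -1`**
(Proposition C.1): for every `q ∈ [0,∞)` the equation has a unique solution
`ρ(·|q) ∈ L¹(ℝ) ∩ L^∞(ℝ)`, and for every `m ∈ [0,1/2)` there exists `q ∈ [0,∞)`
with `∫_{-q}^{q} ρ(λ|q)dλ = m`. -/
theorem continuum_bethe_delta_minus_one :
    (∀ q : ℝ, 0 ≤ q → ∃! g : ℝ → ℝ, IsBExxx q g) ∧
    ∀ m : ℝ, 0 ≤ m → m < 1 / 2 →
      ∃ q : ℝ, 0 ≤ q ∧ ∀ g : ℝ → ℝ, IsBExxx q g → (∫ t in (-q)..q, g t) = m := by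
  refine ⟨fun q hq => ?_, fun m hm₀ hm => ?_⟩
  · simp only [isBExxx_iff hq, existsUnique_eq]
  · obtain ⟨Q, hmQ, hQ⟩ :=
      ((tendsto_betheMass.eventually_const_le hm).and (eventually_ge_atTop 0)).exists
    obtain ⟨q, ⟨hq, -⟩, rfl⟩ :=
      intermediate_value_Icc hQ (continuousOn_betheMass Q) ⟨betheMass_zero.trans_le hm₀, hmQ⟩
    refine ⟨q, hq, fun g hg => ?_⟩
    rw [(isBExxx_iff hq).mp hg, intervalIntegral.integral_of_le (neg_le_self hq), betheMass]

end BetheSix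
end
end

section
/- Let ζ > 0 (regime Δ < −1, Δ = −cosh ζ). If m ↦ Q(m) is any function on [0,1/2) with Q(m) ∈ [0,π/2] and ∫_{−Q(m)}^{Q(m)} ρ(λ|Q(m))dλ = m for all m, then lim_{m→1/2⁻} (1 − 2m)/(π − 2Q(m)) = ρ(π/2), where ρ(x) := (1/(2ζ))·Σ_{n∈ℤ} 1/cosh(π(πn−x)/ζ). -/
open MeasureTheory Filter
open scoped Real BigOperators

noncomputable section

namespace BetheSix

/-!
The solution on a full period is the explicit `ρ`, and on the circle `ℝ / πℤ` the operator `1 + K`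
(convolution) has the explicit inverse `1 - J`, where `J = ξ ⋆ ρ` is nonnegative of mass `1 / 2`;
both facts are identities between Fourier coefficients, the Poisson kernels `K` and `ξ` having
coefficients `e^{-2ζ|n|} / π` and `e^{-ζ|n|} / π`, while those of `ρ` come from Poisson summation
and the Fourier transform of `1 / cosh`, a Beta integral. Moving the missing arc `[q, π - q]` to the
right hand side and applying `1 - J` turns the Bethe equation into
`f(x) = ρ(x) + ∫_q^{π-q} J(x - y) f(y) dy`, a contraction with a nonnegative, uniformly bounded
fixed point, so `f = ρ + O(π - 2q)` uniformly. Integrating over the circle gives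
`1 - 2m = ∫_q^{π-q} f`, which lies within `O((π - 2q)²)` of `∫_q^{π-q} ρ`; and this last integral
divided by `π - 2q` is an average of `ρ` over an arc shrinking to `π / 2`.
-/

section FourierSeries

/-- `F : ℝ → ℂ` is the sum of the absolutely convergent Fourier series of period `T` with
coefficients `a`. The coefficients are data, so that identities between functions can be read off
from identities between sequences. -/
def HasFourierSeries (T : ℝ) (a : ℤ → ℂ) (F : ℝ → ℂ) : Prop :=
  Summable a ∧ ∀ x : ℝ, HasSum (fun k => a k * fourier k (x : AddCircle T)) (F x)

lemma integral_fourier {T : ℝ} (c : ℝ) (n : ℤ) :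
    ∫ x in c..c + T, fourier n (x : AddCircle T) = if n = 0 then (T : ℂ) else 0 := by
  split_ifs with hn
  · simp [hn]
  rcases eq_or_ne T 0 with rfl | hT
  · simp
  have hT' : (T : ℂ) ≠ 0 := by exact_mod_cast hT
  have hfreq : 2 * π * Complex.I * n / T ≠ 0 := by
    have := Complex.two_pi_I_ne_zero
    have : (n : ℂ) ≠ 0 := by exact_mod_cast hn
    positivity
  have hper : Complex.exp (2 * π * Complex.I * n / T * (c + T : ℝ)) =
      Complex.exp (2 * π * Complex.I * n / T * c) :=
    Complex.exp_eq_exp_iff_exists_int.2 ⟨n, by push_cast; field_simp⟩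
  simp_rw [fourier_coe_apply, mul_div_right_comm (2 * π * Complex.I * n : ℂ)]
  rw [integral_exp_mul_complex hfreq, hper, sub_self, zero_div]

namespace HasFourierSeries

variable {T : ℝ} {a b : ℤ → ℂ} {F G : ℝ → ℂ}

lemma unique (hF : HasFourierSeries T a F) (hG : HasFourierSeries T a G) : F = G :=
  funext fun x => (hF.2 x).unique (hG.2 x)

lemma sub (hF : HasFourierSeries T a F) (hG : HasFourierSeries T b G) :
    HasFourierSeries T (fun k => a k - b k) (fun x => F x - G x) :=
  ⟨hF.1.sub hG.1, fun x => by simpa only [sub_mul] using (hF.2 x).sub (hG.2 x)⟩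

lemma const_mul (hF : HasFourierSeries T a F) (c : ℂ) :
    HasFourierSeries T (fun k => c * a k) (fun x => c * F x) :=
  ⟨hF.1.mul_left c, fun x => by simpa only [mul_assoc] using (hF.2 x).mul_left c⟩

lemma comp_div (hF : HasFourierSeries 1 a F) (T : ℝ) :
    HasFourierSeries T a (fun x => F (x / T)) :=
  ⟨hF.1, fun x => (hF.2 (x / T)).congr_fun fun k => by
    simp_rw [fourier_coe_apply]
    push_cast
    ring_nf⟩

lemma continuous (hF : HasFourierSeries T a F) : Continuous F := by
  rw [funext fun x => (hF.2 x).tsum_eq.symm]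
  refine continuous_tsum (u := fun k => ‖a k‖) (fun k => ?_) hF.1.norm fun k x => ?_
  · exact continuous_const.mul ((map_continuous _).comp (AddCircle.continuous_mk' T))
  · rw [norm_mul, fourier_apply, Circle.norm_coe, mul_one]

lemma hasSum_integral_mul (hF : HasFourierSeries T a F) {φ : ℝ → ℂ} (hφ : Continuous φ)
    (c d : ℝ) :
    HasSum (fun k => a k * ∫ x in c..d, φ x * fourier k (x : AddCircle T))
      (∫ x in c..d, φ x * F x) := by
  have hfourier (k : ℤ) : Continuous fun x : ℝ => fourier k (x : AddCircle T) :=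
    (map_continuous _).comp (AddCircle.continuous_mk' T)
  simp_rw [← intervalIntegral.integral_const_mul]
  refine intervalIntegral.hasSum_integral_of_dominated_convergence (fun k x => ‖a k‖ * ‖φ x‖)
    (fun k => ?_) (fun k => ?_) ?_ ?_ ?_
  · exact (continuous_const.mul (hφ.mul (hfourier k))).aestronglyMeasurable
  · refine .of_forall fun x _ => ?_
    rw [norm_mul, norm_mul, fourier_apply, Circle.norm_coe, mul_one]
  · exact .of_forall fun x _ => hF.1.norm.mul_right _
  · simp_rw [tsum_mul_right]
    exact (continuous_const.mul hφ.norm).intervalIntegrable _ _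
  · exact .of_forall fun x _ =>
      ((hF.2 x).mul_left (φ x)).congr_fun fun k => by ring

lemma integral_fourier_neg_mul (hF : HasFourierSeries T a F) (c : ℝ) (k : ℤ) :
    ∫ x in c..c + T, fourier (-k) (x : AddCircle T) * F x = T * a k := by
  refine (hF.hasSum_integral_mul (by fun_prop) c (c + T)).unique ?_
  convert hasSum_ite_eq k (T * a k) using 2 with j
  simp_rw [← fourier_add, integral_fourier, neg_add_eq_zero]
  grind

lemma integral_eq {f : ℝ → ℝ} {v : ℝ} (hf : HasFourierSeries T a (fun x => f x))
    (hv : T * a 0 = v) (c : ℝ) : ∫ x in c..c + T, f x = v := by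
  have := hf.integral_fourier_neg_mul c 0
  simp_rw [neg_zero, fourier_zero, one_mul, intervalIntegral.integral_ofReal, hv] at this
  exact Complex.ofReal_injective this

lemma continuous_of_ofReal {f : ℝ → ℝ} (hf : HasFourierSeries T a (fun x => f x)) :
    Continuous f :=
  Complex.continuous_re.comp hf.continuous

lemma exists_forall_abs_le {f : ℝ → ℝ} (hf : HasFourierSeries T a (fun x => f x)) :
    ∃ M, ∀ x, |f x| ≤ M := by
  refine ⟨∑' k, ‖a k‖, fun x => ?_⟩
  rw [← Real.norm_eq_abs, ← Complex.norm_real]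
  refine (hf.2 x).norm_le_of_bounded hf.1.norm.hasSum fun k => ?_
  rw [norm_mul, fourier_apply, Circle.norm_coe, mul_one]

lemma convolution (hF : HasFourierSeries T a F) (hG : HasFourierSeries T b G) (c : ℝ) :
    HasFourierSeries T (fun k => T * a k * b k) (fun x => ∫ y in c..c + T, F (x - y) * G y) := by
  refine ⟨?_, fun x => ?_⟩
  · simpa only [mul_assoc, Function.comp_def] using
      ((summable_mul_of_summable_norm hF.1.norm hG.1.norm).comp_injective
        (i := fun k => (k, k)) fun _ _ h => congrArg Prod.fst h).mul_left (T : ℂ)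
  have hFcont := hF.continuous
  have hint (k : ℤ) : ∫ y in c..c + T, F (x - y) * fourier k (y : AddCircle T) =
      T * a k * fourier k (x : AddCircle T) := by
    have hshift (y : ℝ) : F (x - y) * fourier k (y : AddCircle T) =
        fourier k (x : AddCircle T) * (fourier (-k) ((x - y : ℝ) : AddCircle T) * F (x - y)) := by
      have : fourier k (y : AddCircle T) =
          fourier k (x : AddCircle T) * fourier (-k) ((x - y : ℝ) : AddCircle T) := by
        simp_rw [fourier_coe_apply, ← Complex.exp_add]
        congr 1
        push_cast
        ring
      rw [this]
      ring
    have hcoeff := hF.integral_fourier_neg_mul (x - (c + T)) k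
    rw [sub_add_eq_sub_sub, sub_add_cancel] at hcoeff
    simp_rw [hshift]
    rw [intervalIntegral.integral_const_mul, intervalIntegral.integral_comp_sub_left
      (fun u => fourier (-k) (u : AddCircle T) * F u), sub_add_eq_sub_sub, hcoeff]
    ring
  refine (hG.hasSum_integral_mul (φ := fun y => F (x - y)) (by fun_prop) c (c + T)).congr_fun
    fun k => ?_
  rw [hint]
  ring

lemma convolution_eq {f g h : ℝ → ℝ} (hf : HasFourierSeries T a (fun x => f x))
    (hg : HasFourierSeries T b (fun x => g x))
    (hh : HasFourierSeries T (fun k => T * a k * b k) (fun x => h x)) (c x : ℝ) :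
    ∫ y in c..c + T, f (x - y) * g y = h x := by
  have := congrFun ((hf.convolution hg c).unique hh) x
  simp_rw [← Complex.ofReal_mul, intervalIntegral.integral_ofReal] at this
  exact Complex.ofReal_injective this

end HasFourierSeries

end FourierSeries

section PoissonSummation

variable {b : ℝ}

open Asymptotics in
lemma summable_comp_add_int {E : Type*} [NormedAddCommGroup E] [CompleteSpace E] {f : ℝ → E}
    (hb : 1 < b) (hc : Continuous f) (hf : f =O[cocompact ℝ] fun x => |x| ^ (-b)) (x : ℝ) :
    Summable fun n : ℤ => f (x + n) := by
  have := summable_of_isBigO (Real.summable_abs_int_rpow hb)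
    ((isBigO_norm_restrict_cocompact ⟨f, hc⟩ (zero_lt_one.trans hb) hf
      ⟨{x}, isCompact_singleton⟩).comp_tendsto Int.tendsto_coe_cofinite)
  exact .of_norm_bounded this fun n => ContinuousMap.norm_coe_le_norm
    (((⟨f, hc⟩ : C(ℝ, E)).comp (ContinuousMap.addRight n)).restrict {x}) ⟨x, rfl⟩

open FourierTransform in
lemma hasFourierSeries_tsum_comp_add_int {f : ℝ → ℂ} (hb : 1 < b) (hc : Continuous f)
    (hf : f =O[cocompact ℝ] fun x => |x| ^ (-b)) (hFf : Summable fun n : ℤ => 𝓕 f n) :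
    HasFourierSeries 1 (fun n => 𝓕 f n) (fun x => ∑' n : ℤ, f (x + n)) := by
  refine ⟨hFf, fun x => ?_⟩
  beta_reduce
  rw [Real.tsum_eq_tsum_fourier_of_rpow_decay_of_summable hc hb hf hFf]
  refine (Summable.of_norm_bounded hFf.norm fun n => ?_).hasSum
  rw [norm_mul, fourier_apply, Circle.norm_coe, mul_one]

end PoissonSummation

section PoissonKernel

lemma hasSum_pow_natAbs_mul_zpow {𝕜 : Type*} [NormedField 𝕜] {r z : 𝕜} (hz : z ≠ 0)
    (h₁ : ‖r * z‖ < 1) (h₂ : ‖r * z⁻¹‖ < 1) :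
    HasSum (fun k : ℤ => r ^ k.natAbs * z ^ k)
      ((1 - r ^ 2) / ((1 - r * z) * (1 - r * z⁻¹))) := by
  have hne₁ : 1 - r * z ≠ 0 := sub_ne_zero.2 fun h => by simp [← h] at h₁
  have hne₂ : 1 - r * z⁻¹ ≠ 0 := sub_ne_zero.2 fun h => by simp [← h] at h₂
  have hvalue : (1 - r ^ 2) / ((1 - r * z) * (1 - r * z⁻¹)) =
      (1 - r * z)⁻¹ + r * z⁻¹ * (1 - r * z⁻¹)⁻¹ := by
    have hzz : z * z⁻¹ = 1 := mul_inv_cancel₀ hz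
    generalize z⁻¹ = w at hne₂ hzz ⊢
    field_simp
    linear_combination r ^ 2 * hzz
  rw [hvalue]
  refine HasSum.of_nat_of_neg_add_one ?_ ?_
  · exact (hasSum_geometric_of_norm_lt_one h₁).congr_fun fun n => by simp [mul_pow]
  · refine ((hasSum_geometric_of_norm_lt_one h₂).mul_left (r * z⁻¹)).congr_fun fun n => ?_
    rw [← pow_succ', mul_pow, zpow_neg, inv_pow]
    norm_cast

lemma summable_pow_natAbs {r : ℝ} (hr₀ : 0 ≤ r) (hr₁ : r < 1) :
    Summable fun k : ℤ => r ^ k.natAbs := by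
  have h : ‖r * 1‖ < 1 := by rwa [mul_one, Real.norm_of_nonneg hr₀]
  simpa using (hasSum_pow_natAbs_mul_zpow one_ne_zero h (by simpa using h)).summable

lemma sin_sq_add_sinh_half_sq (x t : ℝ) :
    Real.sin x ^ 2 + Real.sinh (t / 2) ^ 2 = (Real.cosh t - Real.cos (2 * x)) / 2 := by
  have hcosh := Real.cosh_two_mul (t / 2)
  rw [mul_div_cancel₀ t two_ne_zero] at hcosh
  rw [Real.sin_sq, Real.cos_two_mul]
  linarith [Real.cosh_sq (t / 2)]

lemma poisson_eq_of_exp (t x : ℝ) :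
    ((Real.sinh t / (2 * π * (Real.sin x ^ 2 + Real.sinh (t / 2) ^ 2)) : ℝ) : ℂ) =
      (1 - Complex.exp (-t) ^ 2) / ((1 - Complex.exp (-t) * Complex.exp (2 * x * Complex.I)) *
        (1 - Complex.exp (-t) * (Complex.exp (2 * x * Complex.I))⁻¹)) / π := by
  have hr := Complex.exp_ne_zero t
  have hz := Complex.exp_ne_zero (2 * x * Complex.I)
  have hsinh : Complex.sinh t = (1 - Complex.exp (-t) ^ 2) / (2 * Complex.exp (-t)) := by
    rw [Complex.sinh, Complex.exp_neg]
    field_simp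
  have hden : Complex.cosh t - Complex.cos (2 * x) =
      (1 - Complex.exp (-t) * Complex.exp (2 * x * Complex.I)) *
        (1 - Complex.exp (-t) * (Complex.exp (2 * x * Complex.I))⁻¹) / (2 * Complex.exp (-t)) := by
    rw [Complex.cosh, Complex.cos, neg_mul, Complex.exp_neg, Complex.exp_neg]
    field_simp
    ring
  rw [sin_sq_add_sinh_half_sq]
  push_cast
  rw [hsinh, hden]
  have := Complex.exp_ne_zero (-t)
  field_simp

lemma hasFourierSeries_poisson {t : ℝ} (ht : 0 < t) :
    HasFourierSeries π (fun k => Complex.exp (-t) ^ k.natAbs / π)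
      (fun x => (Real.sinh t / (2 * π * (Real.sin x ^ 2 + Real.sinh (t / 2) ^ 2)) : ℝ)) := by
  have hr : ‖Complex.exp (-t)‖ < 1 := by simpa [Complex.norm_exp] using ht
  have hsummable : Summable fun k : ℤ => Complex.exp (-t) ^ k.natAbs :=
    .of_norm (by simpa only [norm_pow] using summable_pow_natAbs (norm_nonneg _) hr)
  refine ⟨hsummable.div_const _, fun x => ?_⟩
  have hz : ‖Complex.exp (2 * x * Complex.I)‖ = 1 := by
    exact_mod_cast Complex.norm_exp_ofReal_mul_I (2 * x)
  have hfourier (k : ℤ) :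
      fourier k (x : AddCircle π) = Complex.exp (2 * x * Complex.I) ^ k := by
    rw [fourier_coe_apply, ← Complex.exp_int_mul]
    have := Complex.ofReal_ne_zero.2 Real.pi_ne_zero
    congr 1
    field_simp
  simp only [poisson_eq_of_exp, hfourier, div_mul_eq_mul_div]
  refine (hasSum_pow_natAbs_mul_zpow (Complex.exp_ne_zero _) ?_ ?_).div_const _
  · rwa [norm_mul, hz, mul_one]
  · rwa [norm_mul, norm_inv, hz, inv_one, mul_one]

end PoissonKernel

section HyperbolicSecant

lemma betaIntegral_eq_integral_sigmoid (u v : ℂ) :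
    Complex.betaIntegral u v =
      ∫ t : ℝ, (Real.sigmoid t : ℂ) ^ u * (Real.sigmoid (-t) : ℂ) ^ v := by
  rw [Complex.betaIntegral, intervalIntegral.integral_of_le zero_le_one,
    integral_Ioc_eq_integral_Ioo, ← Real.range_sigmoid, ← Set.image_univ,
    integral_image_eq_integral_abs_deriv_smul MeasurableSet.univ
      (fun t _ => (Real.hasDerivAt_sigmoid t).hasDerivWithinAt) Real.sigmoid_injective.injOn,
    setIntegral_univ]
  congr 1 with t
  have hpos := Real.sigmoid_pos t
  have hpos' := Real.sigmoid_pos (-t)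
  have hne : (Real.sigmoid t : ℂ) ≠ 0 := Complex.ofReal_ne_zero.2 hpos.ne'
  have hne' : (Real.sigmoid (-t) : ℂ) ≠ 0 := Complex.ofReal_ne_zero.2 hpos'.ne'
  rw [← Complex.ofReal_one, ← Complex.ofReal_sub, ← Real.sigmoid_neg, abs_of_pos (by positivity),
    Complex.real_smul, Complex.ofReal_one, Complex.cpow_sub _ _ hne, Complex.cpow_sub _ _ hne',
    Complex.cpow_one, Complex.cpow_one, Complex.ofReal_mul]
  field_simp

lemma sigmoid_cpow_mul_sigmoid_neg_cpow {u v : ℂ} (huv : u + v = 1) (t : ℝ) :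
    (Real.sigmoid t : ℂ) ^ u * (Real.sigmoid (-t) : ℂ) ^ v =
      Complex.exp (t * u) * Real.sigmoid (-t) := by
  have hne : (Real.sigmoid (-t) : ℂ) ≠ 0 := Complex.ofReal_ne_zero.2 (Real.sigmoid_pos _).ne'
  have hexp : ((Real.exp t : ℝ) : ℂ) ^ u = Complex.exp (t * u) := by
    rw [Complex.cpow_def_of_ne_zero (Complex.ofReal_ne_zero.2 (Real.exp_pos t).ne'),
      ← Complex.ofReal_log (Real.exp_pos t).le, Real.log_exp]
  have hsigmoid : Real.sigmoid t = Real.exp t * Real.sigmoid (-t) := by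
    rw [← Real.sigmoid_mul_rexp_neg, mul_left_comm, ← Real.exp_add]
    simp
  rw [hsigmoid, Complex.ofReal_mul, Complex.mul_cpow_ofReal_nonneg (Real.exp_pos t).le
    (Real.sigmoid_nonneg _), hexp, mul_assoc, ← Complex.cpow_add _ _ hne, huv, Complex.cpow_one]

lemma betaIntegral_half_add_half_sub {s : ℂ} (hs : |s.re| < 1 / 2) :
    Complex.betaIntegral (1 / 2 + s) (1 / 2 - s) = π / Complex.cos (π * s) := by
  have hsum : (1 / 2 + s) + (1 / 2 - s) = 1 := by ring
  have hadd : 0 < (1 / 2 + s).re := by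
    simpa [neg_lt_iff_pos_add'] using (abs_lt.1 hs).1
  have hsub : 0 < (1 / 2 - s).re := by simpa using (abs_lt.1 hs).2
  have hreflect := Complex.Gamma_mul_Gamma_one_sub (1 / 2 + s)
  have hprod := Complex.Gamma_mul_Gamma_eq_betaIntegral hadd hsub
  rw [hsum, Complex.Gamma_one, one_mul] at hprod
  rw [← hprod, eq_sub_of_add_eq' hsum, hreflect, mul_add, add_comm, mul_one_div,
    Complex.sin_add_pi_div_two]

lemma integral_exp_div_cosh (s : ℝ) :
    ∫ t : ℝ, Complex.exp (s * t * Complex.I) / (2 * Real.cosh (t / 2) : ℝ) =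
      (π / Real.cosh (π * s) : ℝ) := by
  have hbeta : Complex.betaIntegral (1 / 2 + s * Complex.I) (1 / 2 - s * Complex.I) =
      (π / Real.cosh (π * s) : ℝ) := by
    rw [betaIntegral_half_add_half_sub (by simp), ← mul_assoc, Complex.cos_mul_I]
    push_cast
    rfl
  rw [← hbeta, betaIntegral_eq_integral_sigmoid]
  congr 1 with t
  rw [sigmoid_cpow_mul_sigmoid_neg_cpow (by ring)]
  have hcosh : Real.sigmoid (-t) = Real.exp (-(t / 2)) / (2 * Real.cosh (t / 2)) := by
    have hexp : Real.exp t = Real.exp (t / 2) * Real.exp (t / 2) := by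
      rw [← Real.exp_add, add_halves]
    rw [Real.sigmoid_def, Real.cosh_eq, neg_neg, hexp, Real.exp_neg]
    field_simp
    ring
  rw [hcosh, Complex.ofReal_div, Complex.ofReal_exp, mul_div_assoc', ← Complex.exp_add]
  push_cast
  ring_nf

open FourierTransform in
lemma fourier_one_div_cosh {a : ℝ} (ha : 0 < a) (w : ℝ) :
    𝓕 (fun t : ℝ => ((1 / Real.cosh (a * t) : ℝ) : ℂ)) w =
      (π / a / Real.cosh (π ^ 2 * w / a) : ℝ) := by
  have hscale := Measure.integral_comp_mul_left
    (fun t : ℝ => Complex.exp ((-(π * w / a) : ℝ) * t * Complex.I) /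
      (2 * Real.cosh (t / 2) : ℝ)) (2 * a)
  rw [integral_exp_div_cosh, abs_of_pos (by positivity), Complex.real_smul] at hscale
  calc 𝓕 (fun t : ℝ => ((1 / Real.cosh (a * t) : ℝ) : ℂ)) w
    _ = ∫ t : ℝ, 2 * (Complex.exp ((-(π * w / a) : ℝ) * (2 * a * t : ℝ) * Complex.I) /
          (2 * Real.cosh (2 * a * t / 2) : ℝ)) := by
      rw [Real.fourier_real_eq_integral_exp_smul]
      congr 1 with t
      have : (a : ℂ) ≠ 0 := Complex.ofReal_ne_zero.2 ha.ne'
      have hexp : ((-2 * π * t * w : ℝ) : ℂ) * Complex.I =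
          (-(π * w / a) : ℝ) * (2 * a * t : ℝ) * Complex.I := by
        push_cast
        field_simp
      rw [hexp, smul_eq_mul, mul_assoc 2 a t, mul_div_cancel_left₀ _ two_ne_zero]
      push_cast
      field_simp
    _ = (π / a / Real.cosh (π ^ 2 * w / a) : ℝ) := by
      rw [integral_const_mul, hscale, mul_neg, Real.cosh_neg, ← Complex.ofReal_mul,
        ← Complex.ofReal_ofNat, ← Complex.ofReal_mul]
      congr 1
      field_simp

lemma one_add_sq_half_le_cosh (y : ℝ) : 1 + y ^ 2 / 2 ≤ Real.cosh y := by
  have hsinh : |y / 2| ≤ |Real.sinh (y / 2)| := by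
    rw [Real.abs_sinh]
    exact Real.self_le_sinh_iff.2 (abs_nonneg _)
  have hcosh := Real.cosh_two_mul (y / 2)
  rw [mul_div_cancel₀ y two_ne_zero, Real.cosh_sq] at hcosh
  nlinarith [sq_le_sq.2 hsinh]

lemma one_div_cosh_isBigO {c : ℝ} (hc : c ≠ 0) :
    (fun x : ℝ => 1 / Real.cosh (c * x)) =O[cocompact ℝ] fun x : ℝ => |x| ^ (-2 : ℝ) := by
  refine .of_bound (2 / c ^ 2) ?_
  filter_upwards [(isCompact_singleton (x := (0 : ℝ))).compl_mem_cocompact] with x hx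
  have hx : x ≠ 0 := hx
  have hpow : |x| ^ (-2 : ℝ) = (x ^ 2)⁻¹ := by
    rw [Real.rpow_neg (abs_nonneg x), Real.rpow_two, sq_abs]
  rw [hpow, Real.norm_of_nonneg (by positivity), Real.norm_of_nonneg (by positivity)]
  calc 1 / Real.cosh (c * x)
    _ ≤ 1 / ((c * x) ^ 2 / 2) := by
      gcongr
      linarith [one_add_sq_half_le_cosh (c * x)]
    _ = 2 / c ^ 2 * (x ^ 2)⁻¹ := by field_simp

lemma continuous_one_div_cosh (c : ℝ) : Continuous fun x : ℝ => 1 / Real.cosh (c * x) :=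
  continuous_const.div (by fun_prop) fun _ => (Real.cosh_pos _).ne'

end HyperbolicSecant

section FredholmEquation

open scoped NNReal BoundedContinuousFunction

variable {k : ℝ → ℝ → ℝ} {f g h : ℝ → ℝ} {a b c d : ℝ}

lemma continuous_integral_mul (hk : Continuous (Function.uncurry k)) (hf : Continuous f) :
    Continuous fun x => ∫ y in a..b, k x y * f y :=
  intervalIntegral.continuous_parametric_intervalIntegral_of_continuous'
    (f := fun x y => k x y * f y) (by fun_prop) a b

lemma abs_integral_mul_le {C : ℝ} (hab : a ≤ b) (hh : Continuous h) (hh0 : ∀ y, 0 ≤ h y)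
    (hf : ∀ y, |f y| ≤ C) : |∫ y in a..b, h y * f y| ≤ (∫ y in a..b, h y) * C := by
  rw [← intervalIntegral.integral_mul_const, ← Real.norm_eq_abs]
  have hint : IntervalIntegrable (fun y => h y * C) volume a b :=
    Continuous.intervalIntegrable (by fun_prop) a b
  refine intervalIntegral.norm_integral_le_of_norm_le hab (.of_forall fun y _ => ?_) hint
  rw [norm_mul, Real.norm_of_nonneg (hh0 y)]
  exact mul_le_mul_of_nonneg_left (hf y) (hh0 y)

lemma integral_mul_integral_mul (hk : Continuous (Function.uncurry k)) (hh : Continuous h)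
    (hf : Continuous f) :
    ∫ x in c..d, h x * ∫ y in a..b, k x y * f y =
      ∫ y in a..b, (∫ x in c..d, h x * k x y) * f y := by
  have hcont : Continuous (Function.uncurry fun x y => h x * (k x y * f y)) := by fun_prop
  have hint : IntegrableOn (Function.uncurry fun x y => h x * (k x y * f y))
      (Set.uIoc c d ×ˢ Set.uIoc a b) (volume.prod volume) :=
    (hcont.continuousOn.integrableOn_compact (isCompact_uIcc.prod isCompact_uIcc)).mono_set
      (Set.prod_mono Set.uIoc_subset_uIcc Set.uIoc_subset_uIcc)
  simp_rw [← intervalIntegral.integral_const_mul, ← intervalIntegral.integral_mul_const]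
  rw [intervalIntegral_intervalIntegral_swap hint]
  simp only [mul_assoc]

lemma integral_mul_eq_of_eq_add_integral (hk : Continuous (Function.uncurry k))
    (hg : Continuous g) (hh : Continuous h) (hf : Continuous f)
    (hfix : ∀ x, f x = g x + ∫ y in a..b, k x y * f y) :
    ∫ x in c..d, h x * f x =
      (∫ x in c..d, h x * g x) + ∫ y in a..b, (∫ x in c..d, h x * k x y) * f y := by
  have := continuous_integral_mul (a := a) (b := b) hk hf
  rw [← integral_mul_integral_mul hk hh hf, ← intervalIntegral.integral_add
    (Continuous.intervalIntegrable (by fun_prop) c d)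
    (Continuous.intervalIntegrable (by fun_prop) c d)]
  exact intervalIntegral.integral_congr fun x _ => by rw [← mul_add, ← hfix]

lemma exists_contractingWith_eq_add_integral (hk : Continuous (Function.uncurry k))
    (hk0 : ∀ x y, 0 ≤ k x y) (hab : a ≤ b) {w : ℝ≥0} (hw : w < 1)
    (hkw : ∀ x, ∫ y in a..b, k x y ≤ w) (g : ℝ →ᵇ ℝ) :
    ∃ T : (ℝ →ᵇ ℝ) → ℝ →ᵇ ℝ,
      ContractingWith w T ∧ ∀ φ x, T φ x = g x + ∫ y in a..b, k x y * φ y := by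
  have hkx (x : ℝ) : Continuous (k x) := by fun_prop
  have hbound (φ : ℝ →ᵇ ℝ) (x : ℝ) : |∫ y in a..b, k x y * φ y| ≤ w * ‖φ‖ :=
    (abs_integral_mul_le hab (hkx x) (hk0 x) φ.norm_coe_le_norm).trans
      (mul_le_mul_of_nonneg_right (hkw x) (norm_nonneg φ))
  let L (φ : ℝ →ᵇ ℝ) : ℝ →ᵇ ℝ := .ofNormedAddCommGroup (fun x => ∫ y in a..b, k x y * φ y)
    (continuous_integral_mul hk φ.continuous) (w * ‖φ‖) (hbound φ)
  have hL (φ ψ : ℝ →ᵇ ℝ) (x : ℝ) :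
      (g + L φ) x - (g + L ψ) x = ∫ y in a..b, k x y * (φ - ψ) y := by
    have hint (φ : ℝ →ᵇ ℝ) : IntervalIntegrable (fun y => k x y * φ y) volume a b :=
      ((hkx x).mul φ.continuous).intervalIntegrable a b
    simp only [BoundedContinuousFunction.sub_apply, mul_sub]
    rw [intervalIntegral.integral_sub (hint φ) (hint ψ)]
    exact add_sub_add_left_eq_sub _ _ _
  refine ⟨fun φ => g + L φ, ⟨hw, LipschitzWith.of_dist_le_mul fun φ ψ => ?_⟩, fun _ _ => rfl⟩
  refine (BoundedContinuousFunction.dist_le (by positivity)).2 fun x => ?_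
  rw [Real.dist_eq, hL, dist_eq_norm]
  exact hbound (φ - ψ) x

lemma exists_continuous_eq_add_integral (hk : Continuous (Function.uncurry k))
    (hk0 : ∀ x y, 0 ≤ k x y) (hab : a ≤ b) {w : ℝ≥0} (hw : w < 1)
    (hkw : ∀ x, ∫ y in a..b, k x y ≤ w) {M : ℝ} (hg : Continuous g) (hg0 : ∀ x, 0 ≤ g x)
    (hgM : ∀ x, g x ≤ M) :
    ∃ f : ℝ → ℝ, Continuous f ∧ (∀ x, f x = g x + ∫ y in a..b, k x y * f y) ∧
      ∀ x, f x ∈ Set.Icc 0 (M / (1 - w)) := by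
  obtain ⟨T, hT, hTapply⟩ := exists_contractingWith_eq_add_integral hk hk0 hab hw hkw
    (.ofNormedAddCommGroup g hg M fun x => by rw [Real.norm_of_nonneg (hg0 x)]; exact hgM x)
  let S : Set (ℝ →ᵇ ℝ) := {φ | ∀ x, φ x ∈ Set.Icc 0 (M / (1 - w))}
  have hS : IsClosed S := by
    simp only [S, Set.ofPred_forall]
    exact isClosed_iInter fun x => isClosed_Icc.preimage
      (continuous_eval_const (F := ℝ →ᵇ ℝ) x)
  have hM : 0 ≤ M := (hg0 0).trans (hgM 0)
  have hw' : 0 < 1 - (w : ℝ) := sub_pos.2 hw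
  have hmaps : Set.MapsTo T S S := fun φ hφ x => by
    have hnonneg : 0 ≤ ∫ y in a..b, k x y * φ y :=
      intervalIntegral.integral_nonneg hab fun y _ => mul_nonneg (hk0 x y) (hφ y).1
    have hle : ∫ y in a..b, k x y * φ y ≤ w * (M / (1 - w)) :=
      (le_abs_self _).trans <| (abs_integral_mul_le hab (by fun_prop) (hk0 x) fun y => by
        rw [abs_of_nonneg (hφ y).1]; exact (hφ y).2).trans
        (mul_le_mul_of_nonneg_right (hkw x) (by positivity))
    have hfixed : M + w * (M / (1 - w)) = M / (1 - w) := by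
      field_simp
      ring
    rw [hTapply]
    exact ⟨add_nonneg (hg0 x) hnonneg, hfixed ▸ add_le_add (hgM x) hle⟩
  have hS0 : (0 : ℝ →ᵇ ℝ) ∈ S := fun x => ⟨le_rfl, div_nonneg hM hw'.le⟩
  obtain ⟨f, hfS, hf, -⟩ := ContractingWith.exists_fixedPoint' hS.isComplete hmaps
    (hT.restrict hmaps) hS0 (edist_ne_top _ _)
  exact ⟨f, f.continuous, fun x => (congrArg (· x) hf.eq.symm).trans (hTapply f x), hfS⟩

end FredholmEquation

section Average

open scoped Topology

lemma tendsto_integral_div_sub {ι : Type*} {l : Filter ι} {f : ℝ → ℝ} {a : ℝ} {u v : ι → ℝ}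
    (hmeas : StronglyMeasurableAtFilter f (𝓝 a)) (hf : ContinuousAt f a)
    (hu : Tendsto u l (𝓝 a)) (hv : Tendsto v l (𝓝 a)) (huv : ∀ᶠ i in l, u i ≠ v i) :
    Tendsto (fun i => (∫ x in u i..v i, f x) / (v i - u i)) l (𝓝 (f a)) := by
  have h := (intervalIntegral.integral_sub_linear_isLittleO_of_tendsto_ae
    hmeas (hf.mono_left inf_le_left) hu hv).tendsto_div_nhds_zero.add_const (f a)
  rw [zero_add] at h
  refine h.congr' (huv.mono fun i hi => ?_)
  have : v i - u i ≠ 0 := sub_ne_zero.2 hi.symm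
  rw [smul_eq_mul, Pi.sub_apply]
  field_simp
  ring

end Average

section MassiveKernels

variable {ζ : ℝ}

lemma hasFourierSeries_xiMs (hζ : 0 < ζ) :
    HasFourierSeries π (fun k => Complex.exp (-ζ) ^ k.natAbs / π) (fun x => xiMs ζ x) :=
  hasFourierSeries_poisson hζ

lemma hasFourierSeries_Kms (hζ : 0 < ζ) :
    HasFourierSeries π (fun k => (Complex.exp (-ζ) ^ k.natAbs) ^ 2 / π) (fun x => Kms ζ x) := by
  have h := hasFourierSeries_poisson (mul_pos two_pos hζ)
  have hexp : Complex.exp (-(2 * ζ : ℝ)) = Complex.exp (-ζ) ^ 2 := by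
    rw [← Complex.exp_nat_mul]
    push_cast
    ring_nf
  simpa only [Kms, mul_div_cancel_left₀ ζ two_ne_zero, hexp, pow_right_comm _ 2] using h

lemma rhoMs_eq_tsum (ζ x : ℝ) :
    rhoMs ζ x = 1 / (2 * ζ) * ∑' n : ℤ, 1 / Real.cosh (π ^ 2 / ζ * (x / π + n)) := by
  rw [rhoMs, ← (Equiv.neg ℤ).tsum_eq]
  congr! 4 with n
  rw [← Real.cosh_neg, Equiv.neg_apply]
  congr 1
  push_cast
  field_simp
  ring

lemma rhoMs_pos (hζ : 0 < ζ) (x : ℝ) : 0 < rhoMs ζ x := by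
  have hterm (n : ℤ) : 0 < 1 / Real.cosh (π ^ 2 / ζ * (x / π + n)) := by positivity
  have hsum := summable_comp_add_int one_lt_two (continuous_one_div_cosh (π ^ 2 / ζ))
    (one_div_cosh_isBigO (by positivity)) (x / π)
  rw [rhoMs_eq_tsum]
  exact mul_pos (by positivity) (hsum.tsum_pos (fun n => (hterm n).le) 0 (hterm 0))

lemma xiMs_pos (hζ : 0 < ζ) (x : ℝ) : 0 < xiMs ζ x := by
  have := Real.sinh_pos_iff.2 hζ
  have := Real.sinh_pos_iff.2 (half_pos hζ)
  rw [xiMs]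
  positivity

lemma cosh_mul_int (ζ : ℝ) (k : ℤ) :
    Complex.cosh (ζ * k) =
      (1 + (Complex.exp (-ζ) ^ k.natAbs) ^ 2) / (2 * Complex.exp (-ζ) ^ k.natAbs) := by
  have heven : Complex.cosh (ζ * k) = Complex.cosh (k.natAbs * ζ) := by
    rcases Int.natAbs_eq k with hk | hk <;> rw [hk] <;> simp [mul_comm]
  rw [heven, Complex.cosh, ← mul_neg, Complex.exp_nat_mul, Complex.exp_nat_mul, Complex.exp_neg,
    inv_pow]
  have := Complex.exp_ne_zero ζ
  field_simp

open FourierTransform in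
lemma hasFourierSeries_rhoMs (hζ : 0 < ζ) :
    HasFourierSeries π
      (fun k => Complex.exp (-ζ) ^ k.natAbs / (π * (1 + (Complex.exp (-ζ) ^ k.natAbs) ^ 2)))
      (fun x => rhoMs ζ x) := by
  have hcoeff (k : ℤ) : 𝓕 (fun t : ℝ => ((1 / Real.cosh (π ^ 2 / ζ * t) : ℝ) : ℂ)) k =
      (ζ / π * (1 / Real.cosh (ζ * k)) : ℝ) := by
    rw [fourier_one_div_cosh (by positivity)]
    congr 1
    field_simp
  have hsummable : Summable fun n : ℤ => 1 / Real.cosh (ζ * n) := by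
    simpa using summable_comp_add_int one_lt_two (continuous_one_div_cosh ζ)
      (one_div_cosh_isBigO hζ.ne') 0
  have hFf : Summable fun n : ℤ =>
      𝓕 (fun t : ℝ => ((1 / Real.cosh (π ^ 2 / ζ * t) : ℝ) : ℂ)) n := by
    simp_rw [hcoeff]
    exact_mod_cast hsummable.mul_left (ζ / π)
  have hcont : Continuous fun t : ℝ => ((1 / Real.cosh (π ^ 2 / ζ * t) : ℝ) : ℂ) :=
    Complex.continuous_ofReal.comp (continuous_one_div_cosh _)
  have hpoisson := hasFourierSeries_tsum_comp_add_int one_lt_two hcont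
    (Complex.isBigO_ofReal_left.2 (one_div_cosh_isBigO (by positivity))) hFf
  convert (hpoisson.comp_div π).const_mul (1 / (2 * ζ)) using 2 with k x
  · rw [hcoeff]
    push_cast
    rw [cosh_mul_int]
    have := Complex.ofReal_ne_zero.2 hζ.ne'
    field_simp
  · rw [rhoMs_eq_tsum]
    push_cast
    rfl

/-- The resolvent kernel `J = ξ ⋆ ρ` of `K` on the circle `ℝ / πℤ`: convolution by `J` inverts the
equation on a full period, in the sense that `(1 + K) ⋆ (1 - J) = 1`. It is encoded as the
convolution, rather than through its Fourier coefficients, to make its positivity visible. -/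
def resolventMs (ζ x : ℝ) : ℝ := ∫ y in (0 : ℝ)..π, xiMs ζ (x - y) * rhoMs ζ y

lemma hasFourierSeries_resolventMs (hζ : 0 < ζ) :
    HasFourierSeries π
      (fun k => (Complex.exp (-ζ) ^ k.natAbs) ^ 2 / (π * (1 + (Complex.exp (-ζ) ^ k.natAbs) ^ 2)))
      (fun x => resolventMs ζ x) := by
  have hconv := (hasFourierSeries_xiMs hζ).convolution (hasFourierSeries_rhoMs hζ) 0
  have hπ := Complex.ofReal_ne_zero.2 Real.pi_ne_zero
  convert hconv using 2 with k x
  · rw [mul_div_cancel₀ _ hπ]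
    ring
  · rw [resolventMs, zero_add, ← intervalIntegral.integral_ofReal]
    simp only [Complex.ofReal_mul]

lemma one_add_exp_sq_ne_zero (ζ : ℝ) (n : ℕ) : 1 + (Complex.exp (-ζ) ^ n) ^ 2 ≠ 0 := by
  have : (0 : ℝ) < 1 + (Real.exp (-ζ) ^ n) ^ 2 := by positivity
  exact_mod_cast this.ne'

lemma integral_Kms_mul_rhoMs (hζ : 0 < ζ) (c x : ℝ) :
    ∫ y in c..c + π, Kms ζ (x - y) * rhoMs ζ y = xiMs ζ x - rhoMs ζ x := by
  refine (hasFourierSeries_Kms hζ).convolution_eq (hasFourierSeries_rhoMs hζ)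
    (h := fun x => xiMs ζ x - rhoMs ζ x) ?_ c x
  convert (hasFourierSeries_xiMs hζ).sub (hasFourierSeries_rhoMs hζ) using 2 with k x
  · have := one_add_exp_sq_ne_zero ζ k.natAbs
    field_simp
    ring
  · exact Complex.ofReal_sub _ _

lemma integral_Kms_mul_resolventMs (hζ : 0 < ζ) (c x y : ℝ) :
    ∫ z in c..c + π, Kms ζ (x - z) * resolventMs ζ (z - y) =
      Kms ζ (x - y) - resolventMs ζ (x - y) := by
  have hdiff : HasFourierSeries π
      (fun k => π * ((Complex.exp (-ζ) ^ k.natAbs) ^ 2 / π) *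
        ((Complex.exp (-ζ) ^ k.natAbs) ^ 2 / (π * (1 + (Complex.exp (-ζ) ^ k.natAbs) ^ 2))))
      (fun x => (Kms ζ x - resolventMs ζ x : ℝ)) := by
    convert (hasFourierSeries_Kms hζ).sub (hasFourierSeries_resolventMs hζ) using 2 with k x
    · have := one_add_exp_sq_ne_zero ζ k.natAbs
      field_simp
      ring
    · exact Complex.ofReal_sub _ _
  have hconv := (hasFourierSeries_Kms hζ).convolution_eq (hasFourierSeries_resolventMs hζ) hdiff
    (c - y) (x - y)
  rw [← hconv, sub_add_eq_add_sub, ← intervalIntegral.integral_comp_sub_right]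
  simp only [sub_sub_sub_cancel_right]

lemma integral_rhoMs (hζ : 0 < ζ) (c : ℝ) : ∫ x in c..c + π, rhoMs ζ x = 1 / 2 := by
  refine (hasFourierSeries_rhoMs hζ).integral_eq ?_ c
  have hπ := Complex.ofReal_ne_zero.2 Real.pi_ne_zero
  simp only [Int.natAbs_zero, pow_zero]
  push_cast
  field_simp
  norm_num

lemma integral_resolventMs (hζ : 0 < ζ) (c : ℝ) : ∫ x in c..c + π, resolventMs ζ x = 1 / 2 := by
  refine (hasFourierSeries_resolventMs hζ).integral_eq ?_ c
  have hπ := Complex.ofReal_ne_zero.2 Real.pi_ne_zero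
  simp only [Int.natAbs_zero, pow_zero]
  push_cast
  field_simp
  norm_num

lemma resolventMs_nonneg (hζ : 0 < ζ) (x : ℝ) : 0 ≤ resolventMs ζ x :=
  intervalIntegral.integral_nonneg Real.pi_pos.le fun _ _ =>
    (mul_pos (xiMs_pos hζ _) (rhoMs_pos hζ _)).le

end MassiveKernels

section QuantileAsymptotics

variable {ζ q : ℝ} {f : ℝ → ℝ}

lemma continuous_rhoMs (hζ : 0 < ζ) : Continuous (rhoMs ζ) :=
  (hasFourierSeries_rhoMs hζ).continuous_of_ofReal

lemma continuous_resolventMs (hζ : 0 < ζ) : Continuous (resolventMs ζ) :=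
  (hasFourierSeries_resolventMs hζ).continuous_of_ofReal

lemma isBEms_of_eq_add_integral (hζ : 0 < ζ) (hf : Continuous f)
    (hfix : ∀ x, f x = rhoMs ζ x + ∫ y in q..π - q, resolventMs ζ (x - y) * f y) :
    IsBEms ζ q f := by
  refine ⟨hf, fun x => ?_⟩
  have hρ := continuous_rhoMs hζ
  have hJ := continuous_resolventMs hζ
  have hK : Continuous fun z => Kms ζ (x - z) :=
    (hasFourierSeries_Kms hζ).continuous_of_ofReal.comp (by fun_prop)
  have hKf (c d : ℝ) : IntervalIntegrable (fun y => Kms ζ (x - y) * f y) volume c d :=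
    (hK.mul hf).intervalIntegrable c d
  have hJf : IntervalIntegrable (fun y => resolventMs ζ (x - y) * f y) volume q (π - q) :=
    Continuous.intervalIntegrable (by fun_prop) q (π - q)
  have hperiod : ∫ z in (-q)..π - q, Kms ζ (x - z) * f z =
      xiMs ζ x - rhoMs ζ x + ((∫ y in q..π - q, Kms ζ (x - y) * f y) -
        ∫ y in q..π - q, resolventMs ζ (x - y) * f y) := by
    rw [integral_mul_eq_of_eq_add_integral (by fun_prop) hρ hK hf hfix, ← neg_add_eq_sub q π]
    simp_rw [integral_Kms_mul_rhoMs hζ, integral_Kms_mul_resolventMs hζ, sub_mul]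
    rw [neg_add_eq_sub, intervalIntegral.integral_sub (hKf _ _) hJf]
  rw [← intervalIntegral.integral_add_adjacent_intervals (hKf _ q) (hKf _ _)] at hperiod
  linarith [hfix x]

lemma one_sub_two_mul_integral_of_eq_add_integral (hζ : 0 < ζ) (hf : Continuous f)
    (hfix : ∀ x, f x = rhoMs ζ x + ∫ y in q..π - q, resolventMs ζ (x - y) * f y) :
    1 - 2 * ∫ x in (-q)..q, f x = ∫ x in q..π - q, f x := by
  have hJ := continuous_resolventMs hζ
  have hmass (y : ℝ) : ∫ x in (-q)..(-q + π), resolventMs ζ (x - y) = 1 / 2 := by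
    rw [intervalIntegral.integral_comp_sub_right, add_sub_right_comm, integral_resolventMs hζ]
  have hperiod := integral_mul_eq_of_eq_add_integral (c := -q) (d := -q + π) (h := fun _ => 1)
    (k := fun x y => resolventMs ζ (x - y)) (by fun_prop) (continuous_rhoMs hζ)
    continuous_const hf hfix
  simp_rw [one_mul, hmass, integral_rhoMs hζ, intervalIntegral.integral_const_mul,
    neg_add_eq_sub] at hperiod
  rw [← intervalIntegral.integral_add_adjacent_intervals (hf.intervalIntegrable _ q)
    (hf.intervalIntegrable _ _)] at hperiod
  linarith

lemma integral_resolventMs_sub_le (hζ : 0 < ζ) (hq : q ∈ Set.Icc 0 (π / 2)) (x : ℝ) :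
    ∫ y in q..π - q, resolventMs ζ (x - y) ≤ 1 / 2 := by
  have hJ := continuous_resolventMs hζ
  have hperiod : ∫ y in q..q + π, resolventMs ζ (x - y) = 1 / 2 := by
    rw [intervalIntegral.integral_comp_sub_left, ← integral_resolventMs hζ (x - (q + π))]
    congr 1
    ring
  rw [← hperiod]
  exact intervalIntegral.integral_mono_interval le_rfl (by linarith [hq.2]) (by linarith [hq.1])
    (.of_forall fun y => resolventMs_nonneg hζ _)
    (Continuous.intervalIntegrable (by fun_prop) q (q + π))

lemma exists_isBEms_mem_Icc_rhoMs (hζ : 0 < ζ) :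
    ∃ D, ∀ q ∈ Set.Icc 0 (π / 2), ∃ f, IsBEms ζ q f ∧
      1 - 2 * ∫ x in (-q)..q, f x = ∫ x in q..π - q, f x ∧
      ∀ x, f x ∈ Set.Icc (rhoMs ζ x) (rhoMs ζ x + D * (π - 2 * q)) := by
  obtain ⟨M, hM⟩ := (hasFourierSeries_rhoMs hζ).exists_forall_abs_le
  obtain ⟨B, hB⟩ := (hasFourierSeries_resolventMs hζ).exists_forall_abs_le
  refine ⟨B * (M / (1 - 1 / 2)), fun q hq => ?_⟩
  have hle : q ≤ π - q := by linarith [hq.2]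
  have hJ := continuous_resolventMs hζ
  obtain ⟨f, hf, hfix, hfM⟩ := exists_continuous_eq_add_integral (w := 1 / 2)
    (k := fun x y => resolventMs ζ (x - y)) (by fun_prop)
    (fun x y => resolventMs_nonneg hζ (x - y)) hle (NNReal.half_lt_self one_ne_zero)
    (fun x => by exact_mod_cast integral_resolventMs_sub_le hζ hq x) (continuous_rhoMs hζ)
    (fun x => (rhoMs_pos hζ x).le) (fun x => (le_abs_self _).trans (hM x))
  refine ⟨f, isBEms_of_eq_add_integral hζ hf hfix,
    one_sub_two_mul_integral_of_eq_add_integral hζ hf hfix, fun x => ?_⟩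
  have hnonneg : 0 ≤ ∫ y in q..π - q, resolventMs ζ (x - y) * f y :=
    intervalIntegral.integral_nonneg hle fun y _ =>
      mul_nonneg (resolventMs_nonneg hζ _) (hfM y).1
  have hbound : ∫ y in q..π - q, resolventMs ζ (x - y) * f y ≤
      B * (M / (1 - 1 / 2)) * |π - q - q| :=
    (Real.le_norm_self _).trans <| intervalIntegral.norm_integral_le_of_norm_le_const fun y _ => by
      rw [norm_mul]
      refine mul_le_mul (hB _) ?_ (norm_nonneg _) ((abs_nonneg _).trans (hB 0))
      rw [Real.norm_of_nonneg (hfM y).1]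
      exact_mod_cast (hfM y).2
  rw [abs_of_nonneg (sub_nonneg.2 hle), sub_sub, ← two_mul] at hbound
  rw [hfix x]
  exact ⟨le_add_of_nonneg_right hnonneg, by gcongr⟩

lemma exists_isBEms_one_sub_two_mul_integral_mem_Icc (hζ : 0 < ζ) :
    ∃ D, ∀ q ∈ Set.Icc 0 (π / 2), ∃ f, IsBEms ζ q f ∧
      1 - 2 * ∫ x in (-q)..q, f x ∈ Set.Icc (∫ x in q..π - q, rhoMs ζ x)
        ((∫ x in q..π - q, rhoMs ζ x) + D * (π - 2 * q) ^ 2) := by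
  obtain ⟨D, hD⟩ := exists_isBEms_mem_Icc_rhoMs hζ
  refine ⟨D, fun q hq => ?_⟩
  obtain ⟨f, hf, hmass, hfρ⟩ := hD q hq
  have hle : q ≤ π - q := by linarith [hq.2]
  have hρ := (continuous_rhoMs hζ).intervalIntegrable q (π - q) (μ := volume)
  have hfint := hf.1.intervalIntegrable q (π - q) (μ := volume)
  have hupper : (∫ x in q..π - q, rhoMs ζ x) + D * (π - 2 * q) ^ 2 =
      ∫ x in q..π - q, (rhoMs ζ x + D * (π - 2 * q)) := by
    rw [intervalIntegral.integral_add hρ intervalIntegrable_const,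
      intervalIntegral.integral_const, smul_eq_mul]
    ring
  refine ⟨f, hf, ?_⟩
  rw [hmass, hupper]
  exact ⟨intervalIntegral.integral_mono hle hρ hfint fun x => (hfρ x).1,
    intervalIntegral.integral_mono hle hfint (hρ.add intervalIntegrable_const)
      fun x => (hfρ x).2⟩

lemma exists_pos_mul_le_integral_rhoMs (hζ : 0 < ζ) :
    ∃ c > 0, ∀ q ∈ Set.Icc 0 (π / 2), c * (π - 2 * q) ≤ ∫ x in q..π - q, rhoMs ζ x := by
  have hρ := continuous_rhoMs hζ
  obtain ⟨x₀, -, hmin⟩ := (isCompact_Icc (a := 0) (b := π)).exists_isMinOn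
    (Set.nonempty_Icc.2 Real.pi_pos.le) hρ.continuousOn
  refine ⟨rhoMs ζ x₀, rhoMs_pos hζ x₀, fun q hq => ?_⟩
  have hmono := intervalIntegral.integral_mono_on (μ := volume) (by linarith [hq.2] : q ≤ π - q)
    (intervalIntegrable_const (c := rhoMs ζ x₀)) (hρ.intervalIntegrable _ _)
    fun x hx => hmin ⟨hq.1.trans hx.1, hx.2.trans (sub_le_self π hq.1)⟩
  rw [intervalIntegral.integral_const, smul_eq_mul] at hmono
  linarith

open scoped Topology in
lemma tendsto_div_pi_sub_two_mul (hζ : 0 < ζ) {ι : Type*} {l : Filter ι} {s q : ι → ℝ} {D : ℝ}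
    (hs : Tendsto s l (𝓝 0)) (hs0 : ∀ᶠ i in l, 0 < s i)
    (hq : ∀ᶠ i in l, q i ∈ Set.Icc 0 (π / 2))
    (hsq : ∀ᶠ i in l, s i ∈ Set.Icc (∫ x in q i..π - q i, rhoMs ζ x)
      ((∫ x in q i..π - q i, rhoMs ζ x) + D * (π - 2 * q i) ^ 2)) :
    Tendsto (fun i => s i / (π - 2 * q i)) l (𝓝 (rhoMs ζ (π / 2))) := by
  obtain ⟨c, hc, hlower⟩ := exists_pos_mul_le_integral_rhoMs hζ
  have hgap : Tendsto (fun i => π - 2 * q i) l (𝓝 0) := by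
    refine squeeze_zero' (hq.mono fun i hi => by linarith [hi.2]) ?_
      (by simpa only [zero_div] using hs.div_const c)
    filter_upwards [hq, hsq] with i hqi hsi
    rw [le_div_iff₀' hc]
    exact (hlower _ hqi).trans hsi.1
  have hgap_pos : ∀ᶠ i in l, 0 < π - 2 * q i := by
    filter_upwards [hq, hs0, hsq] with i hqi hsi hsqi
    refine (sub_nonneg.2 (by linarith [hqi.2])).lt_of_ne fun h => ?_
    rw [show π - q i = q i by linarith, intervalIntegral.integral_same, ← h] at hsqi
    linarith [hsqi.2]
  have hq_lim : Tendsto q l (𝓝 (π / 2)) := by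
    simpa using (hgap.const_sub π).div_const 2
  have hπq_lim : Tendsto (fun i => π - q i) l (𝓝 (π / 2)) := by
    simpa only [sub_half] using hq_lim.const_sub π
  have havg : Tendsto (fun i => (∫ x in q i..π - q i, rhoMs ζ x) / (π - 2 * q i)) l
      (𝓝 (rhoMs ζ (π / 2))) := by
    have hρ := continuous_rhoMs hζ
    simpa only [sub_sub, ← two_mul] using tendsto_integral_div_sub
      (hρ.stronglyMeasurableAtFilter volume _) hρ.continuousAt hq_lim hπq_lim
      (hgap_pos.mono fun i hi => by linarith)
  refine tendsto_of_tendsto_of_tendsto_of_le_of_le' havg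
    (by simpa only [mul_zero, add_zero] using havg.add (hgap.const_mul D)) ?_ ?_
  · filter_upwards [hgap_pos, hsq] with i hi hsi
    exact div_le_div_of_nonneg_right hsi.1 hi.le
  · filter_upwards [hgap_pos, hsq] with i hi hsi
    rw [div_le_iff₀ hi, add_mul, div_mul_cancel₀ _ hi.ne', mul_assoc, ← sq]
    exact hsi.2

end QuantileAsymptotics

/-- **Asymptotics of the quantile `Q(m)` as `m → 1/2⁻` in the regime `Δ < -1`**
(Lemma D.3): if `Q : [0,1/2) → [0,π/2]` satisfies
`∫_{-Q(m)}^{Q(m)} ρ(λ|Q(m))dλ = m` for all `m`, then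
`(1-2m)/(π-2Q(m)) → ρ(π/2)` as `m → 1/2⁻`. -/
theorem quantile_asymptotics_massive (ζ : ℝ) (hζ : 0 < ζ) (Q : ℝ → ℝ)
    (hQ : ∀ m : ℝ, 0 ≤ m → m < 1 / 2 →
      Q m ∈ Set.Icc 0 (π / 2) ∧
      ∀ g : ℝ → ℝ, IsBEms ζ (Q m) g → (∫ t in (-(Q m))..(Q m), g t) = m) :
    Tendsto (fun m : ℝ => (1 - 2 * m) / (π - 2 * Q m))
      (nhdsWithin (1 / 2) (Set.Iio (1 / 2))) (nhds (rhoMs ζ (π / 2))) := by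
  obtain ⟨D, hD⟩ := exists_isBEms_one_sub_two_mul_integral_mem_Icc hζ
  have hm : ∀ᶠ m : ℝ in nhdsWithin (1 / 2) (Set.Iio (1 / 2)), m ∈ Set.Ico 0 (1 / 2) :=
    Ico_mem_nhdsLT (by norm_num)
  have hlim : Tendsto (fun m : ℝ => 1 - 2 * m) (nhdsWithin (1 / 2) (Set.Iio (1 / 2)))
      (nhds 0) :=
    tendsto_nhdsWithin_of_tendsto_nhds (Continuous.tendsto' (by fun_prop) _ _ (by norm_num))
  refine tendsto_div_pi_sub_two_mul hζ (D := D) hlim ?_ ?_ ?_ <;>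
    filter_upwards [hm] with m ⟨hm0, hm1⟩
  · linarith
  · exact (hQ m hm0 hm1).1
  · obtain ⟨f, hf, hmass⟩ := hD (Q m) (hQ m hm0 hm1).1
    rwa [(hQ m hm0 hm1).2 f hf] at hmass

end BetheSix
end
end
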